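/- Let n ≥ 2 and d ≥ 3. The maximum real Waring rank of a real homogeneous form of degree d in n variables satisfies r_max(n,d) ≤ 2·⌈(1/n)·C(n+d−1, n−1)⌉, except in the cases (n,d) = (3,4), (4,4), (5,4), (5,3), where respectively r_max(3,4) ≤ 11, r_max(4,4) ≤ 19, r_max(5,4) ≤ 29, and r_max(5,3) ≤ 15. The same upper bounds hold for the complex Waring rank of complex forms. -/

import Mathlib

/-!
Write `N = C(n+d-1, n-1)` for the dimension of the space of forms of degree `d` in `n` variables.

**From double points to Waring rank.** Suppose that the forms of degree `d` singular at some points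
`p₁, …, p_k` make up a space of dimension `m`, and let `q₁, …, q_m` be points separating these
forms. Consider the map `(l, l', c) ↦ ∑ᵢ lᵢ^d - ∑ᵢ l'ᵢ^d + ∑ⱼ cⱼ qⱼ^d` from `k + k` linear forms and
`m` scalars to forms (`powerMap`). At `l = l' = p`, `c = 0` its value is `0`, and its derivative is
onto, because a functional vanishing on the image of the derivative is, by apolarity, a form
singular at the `pᵢ` and vanishing at the `qⱼ` (`range_fderiv_powerMap_eq_top`). By the inverse
function theorem the image contains a neighbourhood of `0`, and scaling shows that every form is a
combination of `2k + m` powers (`DoublePointBound.waringRank_le`). This works over every complete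
valued field of characteristic zero.

**The Alexander–Hirschowitz theorem.** It remains to see that `k = ⌈N/n⌉` suitable points leave no
singular form, and that in the four exceptional cases `5, 9, 14, 7` points leave a space of
dimension at most one, which gives `11, 19, 29, 15`. The first is a part of the
Alexander–Hirschowitz theorem, valid over every field of characteristic zero: `k` suitable double
points impose `min(N, nk)` conditions, except for `(n, d, k) = (3,4,5), (4,4,9), (5,4,14), (5,3,7)`
(`hasExpectedDimension`). The proof is an induction on the degree and on the number of variables.

* In degree at least four, the differential Horace method (`horace`) specialises `u` points to a
  hyperplane and lets `ε` points tend to it. The statement for degree `d` in `n + 1` variables then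
  follows from the one for degree `d` in `n` variables with `u` points, the one for degree `d - 1`
  in `n + 1` variables with `w + ε` points and the vanishing of the forms of degree `d - 2` singular
  at `w` points, where `u + ε + w = k` (`exists_horace_parameters`).
* For cubics the last system consists of linear forms and this fails. Instead, the points are
  specialised to coordinate subspaces of codimension three, in the manner of Brambilla and
  Ottaviani: the statement for `V + 3` variables is reduced to the one for `V` variables and to
  cubics vanishing on one such subspace (`OneBlockBound`), these to cubics vanishing on two such
  subspaces (`TwoBlockBound`), and these to a single system in nine variables.
* The initial cases are linear systems with integral coefficients, of full rank already modulo
  `101` at explicit points (`certify`).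

General points are handled without the Zariski topology. The property that a system has dimension at
most `m` is stable under passing to all but finitely many points of any line of the parameter space
(`LineOpen`), so over an infinite field finitely many such properties, each satisfied by some choice
of points, can be satisfied simultaneously.
-/

open MvPolynomial

/-- The Waring rank of a (homogeneous degree-`d`) polynomial `f` in `n` variables:
the least `r` such that `f` is a linear combination of `r` d-th powers of linear forms
(`⊤` if no such expression exists). -/
noncomputable def waringRank (F : Type*) [CommSemiring F] {n : ℕ} (d : ℕ)
    (f : MvPolynomial (Fin n) F) : ℕ∞ :=
  sInf {r : ℕ∞ | ∃ s : ℕ, r = s ∧ ∃ (c : Fin s → F) (l : Fin s → Fin n → F),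
    f = ∑ i, C (c i) * (∑ j, C (l i j) * X j) ^ d}

/-- The upper bound for the maximum Waring rank of degree-`d` forms in `n` variables:
twice the generic rank `⌈C(n+d-1, n-1)/n⌉`, adjusted in the exceptional cases of the
Alexander–Hirschowitz theorem. -/
def waringBound (n d : ℕ) : ℕ :=
  if (n, d) = (3, 4) then 11
  else if (n, d) = (4, 4) then 19
  else if (n, d) = (5, 4) then 29
  else if (n, d) = (5, 3) then 15
  else 2 * ((Nat.choose (n + d - 1) (n - 1) + n - 1) / n)

/-! ### Dimension bounds for linear systems and their semicontinuity -/

section LinearSystems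
variable {K M : Type*} [Field K] [AddCommGroup M] [Module K M]

/-- The linear system `D` has dimension at most `m`. -/
def DimLE (D : Submodule K M) (m : ℕ) : Prop := Module.rank K D ≤ m

theorem DimLE.mono {D D' : Submodule K M} {m m' : ℕ} (h : DimLE D m) (hD : D' ≤ D)
    (hm : m ≤ m') : DimLE D' m' :=
  (Submodule.rank_mono hD).trans (h.trans (by exact_mod_cast hm))

theorem dimLE_zero_iff {D : Submodule K M} : DimLE D 0 ↔ D = ⊥ := by
  simp [DimLE]

theorem dimLE_iff_finrank_le {D : Submodule K M} {m : ℕ} :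
    DimLE D m ↔ Module.Finite K D ∧ Module.finrank K D ≤ m := by
  refine ⟨fun h => ?_, fun ⟨_, h⟩ => ?_⟩
  · have hlt := h.trans_lt Cardinal.natCast_lt_aleph0
    exact ⟨Module.rank_lt_aleph0_iff.1 hlt, Module.finrank_le_of_rank_le h⟩
  · rw [DimLE, ← Module.finrank_eq_rank]
    exact_mod_cast h

theorem DimLE.of_forall_eq_zero {D : Submodule K M} {ι : Type*} [Fintype ι] (μ : ι → M →ₗ[K] K)
    (h : ∀ g ∈ D, (∀ i, μ i g = 0) → g = 0) : DimLE D (Fintype.card ι) := by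
  have hinj : Function.Injective ((LinearMap.pi μ).comp D.subtype) := by
    rw [← LinearMap.ker_eq_bot, LinearMap.ker_eq_bot']
    exact fun g hg => Subtype.ext (h g g.2 fun i => congrFun hg i)
  refine dimLE_iff_finrank_le.2 ⟨Module.Finite.of_injective _ hinj, ?_⟩
  simpa using LinearMap.finrank_le_finrank_of_injective hinj

theorem dimLE_iff_exists_functionals {D : Submodule K M} {m : ℕ} :
    DimLE D m ↔ ∃ μ : Fin m → M →ₗ[K] K, ∀ g ∈ D, (∀ i, μ i g = 0) → g = 0 := by
  refine ⟨fun h => ?_, fun ⟨μ, hμ⟩ => by simpa using DimLE.of_forall_eq_zero μ hμ⟩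
  obtain ⟨_, hle⟩ := dimLE_iff_finrank_le.1 h
  let b := Module.finBasis K D
  choose ν hν using fun i => LinearMap.exists_extend (b.coord i)
  have hcoord (i) (g : D) : ν i g = b.coord i g := LinearMap.congr_fun (hν i) g
  refine ⟨fun i => if hi : i.1 < Module.finrank K D then ν ⟨i, hi⟩ else 0, fun g hg hi => ?_⟩
  suffices (⟨g, hg⟩ : D) = 0 from congrArg Subtype.val this
  refine b.ext_elem fun i => ?_
  have hgi : ν i g = 0 := by simpa using hi ⟨i, i.2.trans_le hle⟩
  simpa [hgi] using (hcoord i ⟨g, hg⟩).symm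

theorem DimLE.of_injOn {M' : Type*} [AddCommGroup M'] [Module K M'] {D : Submodule K M}
    {D' : Submodule K M'} {m : ℕ} (h : DimLE D' m) (f : M →ₗ[K] M')
    (hf : ∀ g ∈ D, f g ∈ D') (hinj : ∀ g ∈ D, f g = 0 → g = 0) : DimLE D m := by
  obtain ⟨μ, hμ⟩ := dimLE_iff_exists_functionals.1 h
  exact dimLE_iff_exists_functionals.2
    ⟨fun i => (μ i).comp f, fun g hg h0 => hinj g hg (hμ _ (hf g hg) h0)⟩

theorem DimLE.add_ker {M' : Type*} [AddCommGroup M'] [Module K M'] {D : Submodule K M}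
    {D' : Submodule K M'} {a b : ℕ} (f : M →ₗ[K] M') (hf : ∀ g ∈ D, f g ∈ D') (h : DimLE D' a)
    (hker : DimLE (D ⊓ LinearMap.ker f) b) : DimLE D (a + b) := by
  obtain ⟨μ, hμ⟩ := dimLE_iff_exists_functionals.1 h
  obtain ⟨ν, hν⟩ := dimLE_iff_exists_functionals.1 hker
  simpa using DimLE.of_forall_eq_zero (Sum.elim (fun i => (μ i).comp f) ν) fun g hg h0 =>
    hν g ⟨hg, hμ _ (hf g hg) fun i => h0 (Sum.inl i)⟩ fun i => h0 (Sum.inr i)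

theorem DimLE.add_card {D D' : Submodule K M} {m : ℕ} {ι : Type*} [Fintype ι]
    (ν : ι → M →ₗ[K] K) (hD : ∀ g ∈ D, (∀ i, ν i g = 0) → g ∈ D') (h : DimLE D' m) :
    DimLE D (m + Fintype.card ι) := by
  obtain ⟨μ, hμ⟩ := dimLE_iff_exists_functionals.1 h
  simpa using DimLE.of_forall_eq_zero (Sum.elim μ ν) fun g hg h0 =>
    hμ g (hD g hg fun i => h0 (Sum.inr i)) fun i => h0 (Sum.inl i)

theorem DimLE.of_lt {D D' : Submodule K M} {m : ℕ} (h : DimLE D m) (hlt : D' < D) :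
    DimLE D' (m - 1) := by
  obtain ⟨_, hle⟩ := dimLE_iff_finrank_le.1 h
  have := Submodule.finrank_lt_finrank_of_lt hlt
  exact dimLE_iff_finrank_le.2 ⟨Submodule.finiteDimensional_of_le hlt.le, by omega⟩

/-- As long as `D` is not inside `N`, some condition `ev x` drops its dimension by one. -/
theorem DimLE.exists_cut {D N : Submodule K M} {P : Type*} [Nonempty P] (ev : P → M →ₗ[K] K)
    (hev : ∀ g ∈ D, g ∉ N → ∃ x, ev x g ≠ 0) {m m' : ℕ} (hN : DimLE (D ⊓ N) m') (u : ℕ)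
    (h : DimLE D m) :
    ∃ s : Fin u → P, DimLE (D ⊓ ⨅ j, LinearMap.ker (ev (s j))) (max (m - u) m') := by
  induction u generalizing D m with
  | zero => exact ⟨Fin.elim0, h.mono inf_le_left (by simp)⟩
  | succ u ih =>
    by_cases hD : D ≤ N
    · exact ⟨fun _ => Classical.arbitrary P,
        hN.mono (le_inf inf_le_left (inf_le_left.trans hD)) (le_max_right _ _)⟩
    obtain ⟨g, hg, hgN⟩ := SetLike.not_le_iff_exists.1 hD
    obtain ⟨x, hx⟩ := hev g hg hgN
    have hlt : D ⊓ LinearMap.ker (ev x) < D :=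
      inf_lt_left.2 fun hle => hx (hle hg)
    obtain ⟨s, hs⟩ := ih (D := D ⊓ LinearMap.ker (ev x)) (fun g hg => hev g hg.1)
      (hN.mono (inf_le_inf_right _ inf_le_left) le_rfl) (h.of_lt hlt)
    refine ⟨Fin.cons x s, hs.mono (fun g hg => ?_) (by omega)⟩
    simpa [Submodule.mem_iInf, Fin.forall_fin_succ, and_assoc] using hg

theorem exists_fin_separating [Module.Finite K M] {J : Type*} (φ : J → M →ₗ[K] K)
    (h : ∀ g, (∀ j, φ j g = 0) → g = 0) :
    ∃ a : Fin (Module.finrank K M) → J, ∀ g, (∀ k, φ (a k) g = 0) → g = 0 := by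
  have hspan : Submodule.span K (Set.range φ) = ⊤ := by
    refine Submodule.span_eq_top_of_ne_zero fun g hg => ?_
    contrapose! hg
    exact h g fun j => hg _ ⟨j, rfl⟩
  obtain ⟨f, hf, hf_span, -⟩ := Submodule.exists_fun_fin_finrank_span_eq K (Set.range φ)
  choose a ha using hf
  have hcard : Module.finrank K M = Module.finrank K (Submodule.span K (Set.range φ)) := by
    rw [hspan, finrank_top, Subspace.dual_finrank_eq]
  refine ⟨fun k => a (Fin.cast hcard k), fun g hg => ?_⟩
  refine (Module.forall_dual_apply_eq_zero_iff K g).1 fun ψ => ?_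
  have hle : Submodule.span K (Set.range f) ≤ LinearMap.ker (Module.Dual.eval K M g) := by
    rw [Submodule.span_le]
    rintro _ ⟨k, rfl⟩
    simpa [ha] using hg (Fin.cast hcard.symm k)
  exact hle (hf_span.trans hspan ▸ Submodule.mem_top)

open Polynomial in
theorem finite_setOf_exists_ne_zero [Module.Finite K M] {J : Type*} (Φ : J → M →ₗ[K] K[X])
    (h0 : ∀ g, (∀ j, (Φ j g).eval 0 = 0) → g = 0) :
    {t : K | ¬ ∀ g, (∀ j, (Φ j g).eval t = 0) → g = 0}.Finite := by
  let b := Module.finBasis K M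
  obtain ⟨a, ha⟩ := exists_fin_separating (fun j => (leval 0).comp (Φ j)) h0
  let A : Matrix (Fin (Module.finrank K M)) (Fin (Module.finrank K M)) K[X] :=
    Matrix.of fun k i => Φ (a k) (b i)
  have hmulVec (t : K) (g : M) (k) :
      (A.map (evalRingHom t)).mulVec (b.repr g) k = (Φ (a k) g).eval t := by
    conv_rhs => rw [← b.sum_repr g, map_sum, eval_finsetSum]
    simp [A, Matrix.mulVec, dotProduct, mul_comm]
  have hdet (t : K) : (A.map (evalRingHom t)).det = A.det.eval t := by
    rw [← RingHom.mapMatrix_apply, ← RingHom.map_det, coe_evalRingHom]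
  have hdet0 : A.det.eval 0 ≠ 0 := by
    rw [← hdet, Ne, ← Matrix.exists_mulVec_eq_zero_iff]
    rintro ⟨w, hw, hw0⟩
    refine hw (DFunLike.coe_fn_eq.2 (?_ : Finsupp.equivFunOnFinite.symm w = 0))
    rw [← map_eq_zero_iff _ b.repr.symm.injective]
    refine ha _ fun k => ?_
    rw [LinearMap.comp_apply, leval_apply, ← hmulVec]
    simpa using congrFun hw0 k
  have hA : A.det ≠ 0 := fun h => hdet0 (by simp [h])
  refine (finite_setOfPred_isRoot hA).subset fun t ht => ?_
  by_contra hroot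
  refine ht fun g hg => ?_
  have hrepr : ⇑(b.repr g) = 0 :=
    Matrix.eq_zero_of_mulVec_eq_zero (by rwa [hdet]) (funext fun k => (hmulVec t g k).trans (hg _))
  exact b.ext_elem fun i => by simpa using congrFun hrepr i

open Polynomial in
theorem exists_forall_eq_zero_of_first_order [Infinite K] [Module.Finite K M] {J : Type*}
    (Φ : J → M →ₗ[K] K[X])
    (h : ∀ g, (∀ j, (Φ j g).coeff 0 = 0) →
      ∀ g', (∀ j, (Φ j g').coeff 0 + (Φ j g).coeff 1 = 0) → g = 0) :
    ∃ t : K, ∀ g, (∀ j, (Φ j g).eval t = 0) → g = 0 := by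
  let N : Submodule K M := ⨅ j, LinearMap.ker ((Polynomial.lcoeff K 0).comp (Φ j))
  have hN (g) : g ∈ N ↔ ∀ j, (Φ j g).coeff 0 = 0 := by simp [N, Submodule.mem_iInf]
  obtain ⟨C, hNC⟩ := N.exists_isCompl
  let divX' : K[X] →ₗ[K] K[X] :=
    { divX_hom with map_smul' := fun c p => by ext; simp [coeff_divX] }
  have divX'_apply (p : K[X]) : divX' p = p.divX := rfl
  -- On `N` the conditions are divisible by `t`; dividing by `t` there gives a system on `N × C`
  -- whose value at `t = 0` is the system of first-order solutions.
  let Ψ (j : J) : N × C →ₗ[K] K[X] :=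
    (divX'.comp ((Φ j).comp N.subtype)).coprod ((Φ j).comp C.subtype)
  have hΨ (j : J) (a : N) (c : C) (t : K) :
      (Ψ j (a, c)).eval t = (Φ j a).divX.eval t + (Φ j c).eval t := by
    simp [Ψ, divX'_apply]
  have hΨ0 (x) (hx : ∀ j, (Ψ j x).eval 0 = 0) : x = 0 := by
    obtain ⟨⟨a, ha⟩, ⟨c, hc⟩⟩ := x
    have hac (j) : (Φ j c).coeff 0 + (Φ j a).coeff 1 = 0 := by
      have := hx j
      rwa [hΨ, ← coeff_zero_eq_eval_zero, ← coeff_zero_eq_eval_zero, coeff_divX, add_comm] at this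
    obtain rfl := h a ((hN a).1 ha) c hac
    obtain rfl := Submodule.disjoint_def.1 hNC.disjoint c ((hN c).2 (by simpa using hac)) hc
    rfl
  obtain ⟨t, ht⟩ := ((finite_setOf_exists_ne_zero Ψ hΨ0).union
    (Set.finite_singleton 0)).infinite_compl.nonempty
  simp only [Set.mem_compl_iff, Set.mem_union, Set.mem_ofPred_eq, not_or, not_not,
    Set.mem_singleton_iff] at ht
  obtain ⟨ht, ht0⟩ := ht
  refine ⟨t, fun g hg => ?_⟩
  obtain ⟨a, ha, c, hc, rfl⟩ := Submodule.mem_sup.1 (hNC.sup_eq_top ▸ Submodule.mem_top : g ∈ N ⊔ C)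
  have hX (j) : (Φ j a).eval t = t * (Φ j a).divX.eval t := by
    conv_lhs => rw [← divX_mul_X_add (Φ j a), (hN a).1 ha j]
    simp [mul_comm]
  have hac := ht (t • (⟨a, ha⟩ : N), ⟨c, hc⟩) fun j => by
    simpa [Ψ, -map_smul, map_smul divX', map_smul (Φ j), divX'_apply, hX] using hg j
  obtain ⟨rfl, rfl⟩ : a = 0 ∧ c = 0 := by simpa [ht0] using hac
  exact add_zero 0

end LinearSystems

/-! ### Properties stable along lines -/

section LineOpen

/-- A property of points of a vector space is line-open if, once it holds at a point `x`, it holds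
at all but finitely many points of every line through `x`. This replaces Zariski openness. -/
def LineOpen (K : Type*) [Field K] {V : Type*} [AddCommGroup V] [Module K V] (P : V → Prop) :
    Prop :=
  ∀ x v, P x → {t : K | ¬ P (x + t • v)}.Finite

variable {K : Type*} [Field K] {V V' M : Type*} [AddCommGroup V] [Module K V]
  [AddCommGroup V'] [Module K V'] [AddCommGroup M] [Module K M]

theorem LineOpen.and {P Q : V → Prop} (hP : LineOpen K P) (hQ : LineOpen K Q) :
    LineOpen K fun x => P x ∧ Q x := by
  intro x v h
  refine ((hP x v h.1).union (hQ x v h.2)).subset fun t ht => ?_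
  simpa only [Set.mem_union, Set.mem_ofPred_eq, not_and_or] using ht

theorem LineOpen.all {ι : Type*} [Finite ι] {P : ι → V → Prop} (hP : ∀ i, LineOpen K (P i)) :
    LineOpen K fun x => ∀ i, P i x := by
  intro x v h
  refine (Set.finite_iUnion fun i => hP i x v (h i)).subset fun t ht => ?_
  simpa using ht

theorem LineOpen.comp_linearMap {P : V → Prop} (hP : LineOpen K P) (f : V' →ₗ[K] V) :
    LineOpen K fun x => P (f x) := by
  intro x v h
  simpa only [map_add, map_smul] using hP (f x) (f v) h

theorem LineOpen.prodMk {P : V × V' → Prop} (hP : LineOpen K P) (x : V) :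
    LineOpen K fun y => P (x, y) := by
  intro y v h
  simpa using hP (x, y) (0, v) h

/-- Both properties persist at all but finitely many points of the line joining the two
witnesses. -/
theorem LineOpen.exists_and [Infinite K] {P Q : V → Prop} (hP : LineOpen K P) (hQ : LineOpen K Q)
    (h1 : ∃ x, P x) (h2 : ∃ x, Q x) : ∃ x, P x ∧ Q x := by
  obtain ⟨x, hx⟩ := h1
  obtain ⟨y, hy⟩ := h2
  have hfin := (hP x (y - x) hx).union ((hQ y (x - y) hy).image (1 - ·))
  obtain ⟨t, ht⟩ := hfin.infinite_compl.nonempty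
  simp only [Set.mem_compl_iff, Set.mem_union, not_or, Set.mem_ofPred_eq, not_not, Set.mem_image,
    not_exists, not_and] at ht
  refine ⟨x + t • (y - x), ht.1, ?_⟩
  by_contra hq
  refine ht.2 (1 - t) ?_ (by ring)
  convert hq using 2
  module

/-- A family of functionals is polynomial along the lines of the parameter space. -/
def PolynomialOnLines (ψ : V → M →ₗ[K] K) : Prop :=
  ∀ x v, ∃ Φ : M →ₗ[K] Polynomial K, ∀ t g, (Φ g).eval t = ψ (x + t • v) g

theorem LineOpen.dimLE {J : Type*} {ψ : J → V → M →ₗ[K] K} (hψ : ∀ j, PolynomialOnLines (ψ j))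
    (W : Submodule K M) [Module.Finite K W] (D : V → Submodule K M)
    (hD : ∀ x g, g ∈ D x ↔ g ∈ W ∧ ∀ j, ψ j x g = 0) (m : ℕ) :
    LineOpen K fun x => DimLE (D x) m := by
  intro x v h
  obtain ⟨μ, hμ⟩ := dimLE_iff_exists_functionals.1 h
  choose Φ hΦ using fun j => hψ j x v
  let Ψ : J ⊕ Fin m → W →ₗ[K] Polynomial K :=
    Sum.elim (fun j => (Φ j).comp W.subtype)
      fun i => (Polynomial.monomial 0).comp ((μ i).comp W.subtype)
  have hΨ0 (g : W) (hg : ∀ j, (Ψ j g).eval 0 = 0) : g = 0 := by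
    refine Subtype.ext (hμ g ((hD x g).2 ⟨g.2, fun j => ?_⟩) fun i => ?_)
    · simpa [Ψ, hΦ] using hg (Sum.inl j)
    · simpa [Ψ] using hg (Sum.inr i)
  refine (finite_setOf_exists_ne_zero Ψ hΨ0).subset fun t ht ht' => ht ?_
  refine dimLE_iff_exists_functionals.2 ⟨μ, fun g hg hi => ?_⟩
  have hgW := (hD _ g).1 hg
  refine congrArg Subtype.val (ht' ⟨g, hgW.1⟩ ?_)
  rintro (j | i)
  · simpa [Ψ, hΦ] using hgW.2 j
  · simpa [Ψ] using hi i

end LineOpen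

/-! ### Forms singular at given points -/

section Forms
variable {K : Type*} [Field K] {σ : Type*}

/-- The exponents of the monomials of degree `d` in the variables `S`, so that
`restrictSupport K (formExponents S d)` is the space of forms of degree `d` in these variables. -/
def formExponents (S : Finset σ) (d : ℕ) : Set (σ →₀ ℕ) :=
  {α | (∀ i, α i ≠ 0 → i ∈ S) ∧ α.degree = d}

theorem finite_formExponents [Finite σ] (S : Finset σ) (d : ℕ) : (formExponents S d).Finite :=
  (Finsupp.finite_of_degree_le d).subset fun _ h => h.2.le

theorem mem_restrictSupport_iff_coeff {E : Set (σ →₀ ℕ)} {G : MvPolynomial σ K} :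
    G ∈ restrictSupport K E ↔ ∀ α, coeff α G ≠ 0 → α ∈ E := by
  simp [mem_restrictSupport_iff, Set.subset_def]

theorem mem_restrictSupport_formExponents {S : Finset σ} {d : ℕ} {G : MvPolynomial σ K} :
    G ∈ restrictSupport K (formExponents S d) ↔ G.IsHomogeneous d ∧ G.vars ⊆ S := by
  have hdeg (α : σ →₀ ℕ) : Finsupp.weight 1 α = α.degree := by
    rw [Finsupp.degree_eq_weight_one]; rfl
  rw [mem_restrictSupport_iff_coeff]
  constructor
  · intro h
    refine ⟨fun α hα => (hdeg α).trans (h α hα).2, fun i hi => ?_⟩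
    obtain ⟨α, hα, hi⟩ := (mem_vars_iff_mem_support i).1 hi
    exact (h α (by simpa using hα)).1 i (by simpa using hi)
  · rintro ⟨hG, hvars⟩ α hα
    refine ⟨fun i hi => hvars ?_, (hdeg α).symm.trans (hG hα)⟩
    exact (mem_vars_iff_mem_support i).2 ⟨α, by simpa using hα, by simpa using hi⟩

theorem finite_restrictSupport {E : Set (σ →₀ ℕ)} (hE : E.Finite) :
    Module.Finite K (restrictSupport K E) := by
  have := hE.to_subtype
  exact Module.Finite.of_basis (basisRestrictSupport K E)

/-- The functional `G ↦ (∂G/∂xᵢ)(p)`. -/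
noncomputable def pderivAt (p : σ → K) (i : σ) : MvPolynomial σ K →ₗ[K] K :=
  (aeval p : MvPolynomial σ K →ₐ[K] K).toLinearMap.comp (pderiv i).toLinearMap

theorem pderivAt_apply (p : σ → K) (i : σ) (G : MvPolynomial σ K) :
    pderivAt p i G = eval p (pderiv i G) := by
  simp [pderivAt, aeval_eq_eval]

/-- The linear system of polynomials with exponents in `E` singular at all the points `p j`. -/
noncomputable def singularForms {ι : Type*} (E : Set (σ →₀ ℕ)) (p : ι → σ → K) :
    Submodule K (MvPolynomial σ K) :=
  restrictSupport K E ⊓ ⨅ ji : ι × σ, LinearMap.ker (pderivAt (p ji.1) ji.2)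

theorem mem_singularForms {ι : Type*} {E : Set (σ →₀ ℕ)} {p : ι → σ → K} {G : MvPolynomial σ K} :
    G ∈ singularForms E p ↔ G ∈ restrictSupport K E ∧ ∀ j i, eval (p j) (pderiv i G) = 0 := by
  simp [singularForms, Submodule.mem_inf, Submodule.mem_iInf, pderivAt_apply]

theorem pderiv_mem_restrictSupport {S : Finset σ} {d : ℕ} {G : MvPolynomial σ K}
    (hG : G ∈ restrictSupport K (formExponents S (d + 1))) (i : σ) :
    pderiv i G ∈ restrictSupport K (formExponents S d) := by
  rw [mem_restrictSupport_iff_coeff] at hG ⊢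
  intro α hα
  rw [coeff_pderiv] at hα
  obtain ⟨hS, hdeg⟩ := hG _ (left_ne_zero_of_mul hα)
  refine ⟨fun k hk => hS k ?_, by simpa using hdeg⟩
  simp only [Finsupp.add_apply, ne_eq]
  omega

theorem pderiv_eq_zero_of_notMem {S : Finset σ} {d : ℕ} {G : MvPolynomial σ K}
    (hG : G ∈ restrictSupport K (formExponents S d)) {i : σ} (hi : i ∉ S) : pderiv i G = 0 :=
  pderiv_eq_zero_of_notMem_vars fun h => hi ((mem_restrictSupport_formExponents.1 hG).2 h)

theorem eval_congr_of_mem_restrictSupport {S : Finset σ} {d : ℕ} {G : MvPolynomial σ K}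
    (hG : G ∈ restrictSupport K (formExponents S d)) {x y : σ → K} (h : ∀ i ∈ S, x i = y i) :
    eval x G = eval y G :=
  eval₂Hom_congr' rfl (fun i hi _ => h i ((mem_restrictSupport_formExponents.1 hG).2 hi)) rfl

theorem sum_mul_eval_pderiv [Fintype σ] {S : Finset σ} {d : ℕ} {G : MvPolynomial σ K}
    (hG : G ∈ restrictSupport K (formExponents S d)) (x : σ → K) :
    ∑ i, x i * eval x (pderiv i G) = d * eval x G := by
  simpa using congrArg (eval x) ((mem_restrictSupport_formExponents.1 hG).1.sum_X_mul_pderiv)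

theorem eval_eq_zero_of_pderiv_eq_zero [CharZero K] [Finite σ] {S : Finset σ} {d : ℕ}
    {G : MvPolynomial σ K} (hG : G ∈ restrictSupport K (formExponents S d)) (hd : d ≠ 0) {x : σ → K}
    (h : ∀ i, eval x (pderiv i G) = 0) : eval x G = 0 := by
  cases nonempty_fintype σ
  simpa [h, hd] using (sum_mul_eval_pderiv hG x).symm

end Forms

/-! ### Restriction to lines -/

section RestrictLine
variable {K : Type*} [Field K] {σ : Type*}

/-- The restriction of a polynomial to the line `x + t v`, as a polynomial in `t`. -/
noncomputable def restrictLine (x v : σ → K) : MvPolynomial σ K →ₐ[K] Polynomial K :=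
  aeval fun i => Polynomial.C (x i) + Polynomial.X * Polynomial.C (v i)

theorem eval_restrictLine (x v : σ → K) (t : K) (G : MvPolynomial σ K) :
    (restrictLine x v G).eval t = eval (x + t • v) G := by
  have hcomp : (Polynomial.aeval t).comp (restrictLine x v) = aeval (x + t • v) := by
    ext i
    simp [restrictLine, mul_comm (v i)]
  simpa [aeval_eq_eval, Polynomial.coe_aeval_eq_eval] using AlgHom.congr_fun hcomp G

theorem coeff_zero_restrictLine (x v : σ → K) (G : MvPolynomial σ K) :
    (restrictLine x v G).coeff 0 = eval x G := by
  rw [Polynomial.coeff_zero_eq_eval_zero, eval_restrictLine, zero_smul, add_zero]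

theorem coeff_one_restrictLine [Fintype σ] (x v : σ → K) (G : MvPolynomial σ K) :
    (restrictLine x v G).coeff 1 = ∑ i, v i * eval x (pderiv i G) := by
  classical
  induction G using MvPolynomial.induction_on with
  | C a => simp [restrictLine]
  | add p q hp hq => simp [hp, hq, mul_add, Finset.sum_add_distrib]
  | mul_X p j hp =>
    have hX : restrictLine x v (X j) = Polynomial.C (x j) + Polynomial.X * Polynomial.C (v j) := by
      simp [restrictLine]
    have hsum : ∑ i, v i * (eval x p * eval x (pderiv i (X j))) = eval x p * v j := by
      rw [Finset.sum_eq_single j (fun i _ hi => by simp [pderiv_X, hi.symm])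
        (by simp)]
      simp [mul_comm]
    rw [map_mul, hX, mul_add, Polynomial.coeff_add, Polynomial.coeff_mul_C, ← mul_assoc,
      Polynomial.coeff_mul_C, Polynomial.coeff_mul_X (n := 0), hp, coeff_zero_restrictLine]
    simp only [Derivation.leibniz, smul_eq_mul, map_add, map_mul, eval_X, mul_add,
      Finset.sum_add_distrib, hsum, Finset.sum_mul]
    rw [add_comm]
    exact congrArg _ (Finset.sum_congr rfl fun i _ => by ring)

theorem coeff_one_restrictLine_single [Finite σ] [DecidableEq σ] (x : σ → K) (h : σ)
    (G : MvPolynomial σ K) :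
    (restrictLine x (Pi.single h 1) G).coeff 1 = eval x (pderiv h G) := by
  cases nonempty_fintype σ
  simp [coeff_one_restrictLine, Pi.single_apply]

variable {V : Type*} [AddCommGroup V] [Module K V]

theorem polynomialOnLines_aeval (f : V →ₗ[K] (σ → K)) :
    PolynomialOnLines fun x => (aeval (f x) : MvPolynomial σ K →ₐ[K] K).toLinearMap := fun x v =>
  ⟨(restrictLine (f x) (f v)).toLinearMap, fun t g => by simp [eval_restrictLine, aeval_eq_eval]⟩

theorem polynomialOnLines_pderivAt (f : V →ₗ[K] (σ → K)) (i : σ) :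
    PolynomialOnLines fun x => pderivAt (f x) i := fun x v =>
  ⟨(restrictLine (f x) (f v)).toLinearMap.comp (pderiv i).toLinearMap, fun t g => by
    simp [eval_restrictLine, pderivAt_apply]⟩

theorem lineOpen_dimLE_singularForms {ι : Type*} {E : Set (σ →₀ ℕ)} (hE : E.Finite)
    (f : ι → V →ₗ[K] (σ → K)) (m : ℕ) :
    LineOpen K fun x => DimLE (singularForms E fun j => f j x) m := by
  have := finite_restrictSupport (K := K) hE
  refine LineOpen.dimLE (J := ι × σ) (ψ := fun ji x => pderivAt (f ji.1 x) ji.2)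
    (fun ji => polynomialOnLines_pderivAt _ _) (restrictSupport K E) _ (fun x g => ?_) m
  simp [mem_singularForms, pderivAt_apply]

end RestrictLine

/-! ### Restriction to coordinate subspaces -/

section RestrictCoord
variable {K : Type*} [Field K] {σ : Type*} [DecidableEq σ]

/-- The restriction to the coordinate subspace where the variables in `Z` vanish. -/
noncomputable def restrictCoord (Z : Finset σ) : MvPolynomial σ K →ₐ[K] MvPolynomial σ K :=
  aeval fun i => if i ∈ Z then 0 else X i

theorem restrictCoord_monomial (Z : Finset σ) (β : σ →₀ ℕ) (c : K) :
    restrictCoord Z (monomial β c) = if ∀ i ∈ Z, β i = 0 then monomial β c else 0 := by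
  rw [restrictCoord, aeval_monomial]
  split_ifs with h
  · rw [monomial_eq]
    refine congrArg _ (Finset.prod_congr rfl fun i hi => ?_)
    have hiZ : i ∉ Z := fun hz => by simp [h i hz] at hi
    simp [hiZ]
  · push Not at h
    obtain ⟨i, hi, hi0⟩ := h
    rw [Finsupp.prod, Finset.prod_eq_zero (i := i) (by simpa using hi0), mul_zero]
    simp [hi, hi0]

theorem coeff_restrictCoord (Z : Finset σ) (G : MvPolynomial σ K) (α : σ →₀ ℕ) :
    coeff α (restrictCoord Z G) = if ∀ i ∈ Z, α i = 0 then coeff α G else 0 := by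
  induction G using MvPolynomial.induction_on' with
  | monomial β c =>
    rw [restrictCoord_monomial]
    by_cases h : β = α
    · subst h; split_ifs <;> simp
    · split_ifs <;> simp [coeff_monomial, h]
  | add p q hp hq =>
    rw [map_add, coeff_add, hp, hq, coeff_add]
    split_ifs <;> simp

theorem pderiv_restrictCoord {Z : Finset σ} {i : σ} (hi : i ∉ Z) (G : MvPolynomial σ K) :
    pderiv i (restrictCoord Z G) = restrictCoord Z (pderiv i G) := by
  ext α
  have hα : (∀ k ∈ Z, (α + Finsupp.single i 1 : σ →₀ ℕ) k = 0) ↔ ∀ k ∈ Z, α k = 0 := by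
    refine forall₂_congr fun k hk => ?_
    simp [(ne_of_mem_of_not_mem hk hi).symm]
  simp only [coeff_pderiv, coeff_restrictCoord, hα]
  split_ifs <;> simp

theorem pderiv_restrictCoord_of_mem {Z : Finset σ} {i : σ} (hi : i ∈ Z) (G : MvPolynomial σ K) :
    pderiv i (restrictCoord Z G) = 0 := by
  ext α
  rw [coeff_pderiv, coeff_restrictCoord, if_neg, zero_mul, coeff_zero]
  push Not
  exact ⟨i, hi, by simp⟩

theorem eval_restrictCoord {Z : Finset σ} {x : σ → K} (hx : ∀ i ∈ Z, x i = 0)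
    (G : MvPolynomial σ K) : eval x (restrictCoord Z G) = eval x G := by
  have hcomp : (aeval x : MvPolynomial σ K →ₐ[K] K).comp (restrictCoord Z) = aeval x := by
    ext i
    by_cases h : i ∈ Z <;> simp [restrictCoord, h, hx]
  simpa [aeval_eq_eval] using AlgHom.congr_fun hcomp G

theorem restrictCoord_mem_restrictSupport {S Z : Finset σ} {d : ℕ} {G : MvPolynomial σ K}
    (hG : G ∈ restrictSupport K (formExponents S d)) :
    restrictCoord Z G ∈ restrictSupport K (formExponents (S \ Z) d) := by
  rw [mem_restrictSupport_iff_coeff] at hG ⊢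
  intro α hα
  rw [coeff_restrictCoord] at hα
  obtain ⟨hZ, hα⟩ := ite_ne_right_iff.1 hα
  exact ⟨fun i hi => Finset.mem_sdiff.2 ⟨(hG α hα).1 i hi, fun hz => hi (hZ i hz)⟩, (hG α hα).2⟩

theorem X_dvd_of_restrictCoord_eq_zero {h : σ} {G : MvPolynomial σ K}
    (h0 : restrictCoord {h} G = 0) : X h ∣ G := by
  rw [X_dvd_iff_modMonomial_eq_zero]
  ext α
  have hα := congrArg (coeff α) h0
  simp only [coeff_restrictCoord, Finset.mem_singleton, forall_eq, coeff_zero] at hα ⊢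
  by_cases hh : α h = 0
  · rw [coeff_modMonomial_of_not_le, ← if_pos hh (t := coeff α G), hα]
    intro hle
    simpa [hh] using hle h
  · refine coeff_modMonomial_of_le _ fun k => ?_
    rcases eq_or_ne h k with rfl | hk
    · simpa using Nat.one_le_iff_ne_zero.2 hh
    · simp [hk]

theorem exists_eq_X_mul_of_restrictCoord_eq_zero {S : Finset σ} {h : σ} {d : ℕ}
    {G : MvPolynomial σ K} (hG : G ∈ restrictSupport K (formExponents S (d + 1)))
    (h0 : restrictCoord {h} G = 0) :
    ∃ G' ∈ restrictSupport K (formExponents S d), G = X h * G' := by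
  obtain ⟨G', rfl⟩ := X_dvd_of_restrictCoord_eq_zero h0
  refine ⟨G', ?_, rfl⟩
  rw [mem_restrictSupport_iff_coeff] at hG ⊢
  intro α hα
  obtain ⟨hS, hdeg⟩ := hG (α + Finsupp.single h 1) (by rwa [add_comm, coeff_X_mul])
  refine ⟨fun k hk => hS k ?_, by simpa using hdeg⟩
  simp only [Finsupp.add_apply, ne_eq]
  omega

end RestrictCoord

/-! ### Shears -/

section Shear
variable {K : Type*} [Field K] {σ : Type*} [DecidableEq σ]

/-- The substitution `x_h ↦ x_h + ∑_{k ∈ T} c_k x_k` on polynomials. -/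
noncomputable def shear (h : σ) (T : Finset σ) (c : σ → K) :
    MvPolynomial σ K →ₐ[K] MvPolynomial σ K :=
  aeval fun i => if i = h then X h + ∑ k ∈ T, C (c k) * X k else X i

/-- The linear map on points dual to `shear`. -/
def shearPoint (h : σ) (T : Finset σ) (c p : σ → K) : σ → K :=
  fun i => if i = h then p h + ∑ k ∈ T, c k * p k else p i

theorem shearPoint_add_smul (h : σ) (T : Finset σ) (c x v : σ → K) (t : K) :
    shearPoint h T c (x + t • v) = shearPoint h T c x + t • shearPoint h T c v := by
  ext i
  simp only [shearPoint, Pi.add_apply, Pi.smul_apply, smul_eq_mul]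
  split_ifs
  · simp only [mul_add, Finset.sum_add_distrib, Finset.mul_sum, mul_left_comm (c _) t]
    ring
  · rfl

theorem shearPoint_of_ne {h i : σ} (hi : i ≠ h) (T : Finset σ) (c p : σ → K) :
    shearPoint h T c p i = p i := if_neg hi

theorem shearPoint_self (h : σ) (T : Finset σ) (c p : σ → K) :
    shearPoint h T c p h = p h + ∑ k ∈ T, c k * p k := if_pos rfl

theorem restrictLine_shear (h : σ) (T : Finset σ) (c x v : σ → K) (G : MvPolynomial σ K) :
    restrictLine x v (shear h T c G) =
      restrictLine (shearPoint h T c x) (shearPoint h T c v) G := by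
  suffices hcomp : (restrictLine x v).comp (shear h T c) =
      restrictLine (shearPoint h T c x) (shearPoint h T c v) from AlgHom.congr_fun hcomp G
  ext i : 1
  by_cases hi : i = h
  · subst hi
    simp only [shear, restrictLine, shearPoint_self, AlgHom.comp_apply, aeval_X, if_true, map_add,
      map_sum, map_mul, algHom_C, Polynomial.algebraMap_eq, mul_add, Finset.mul_sum,
      Finset.sum_add_distrib, mul_left_comm (Polynomial.C (c _)) Polynomial.X]
    ring
  · simp [shear, restrictLine, shearPoint_of_ne, hi]

theorem shear_mem_restrictSupport {S : Finset σ} {h : σ} (hh : h ∈ S) {T : Finset σ} (hT : T ⊆ S)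
    (c : σ → K) {d : ℕ} {G : MvPolynomial σ K} (hG : G ∈ restrictSupport K (formExponents S d)) :
    shear h T c G ∈ restrictSupport K (formExponents S d) := by
  let L : σ → MvPolynomial σ K := fun i => if i = h then X h + ∑ k ∈ T, C (c k) * X k else X i
  have hLh : X h + ∑ k ∈ T, C (c k) * X k ∈ restrictSupport K (formExponents S 1) := by
    refine add_mem ?_ (sum_mem fun k hk => ?_)
    · rw [mem_restrictSupport_formExponents]
      exact ⟨isHomogeneous_X _ _, by simpa using hh⟩
    · rw [mem_restrictSupport_formExponents]
      refine ⟨by simpa using (isHomogeneous_C σ (c k)).mul (isHomogeneous_X K k), ?_⟩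
      refine (vars_mul _ _).trans ?_
      simpa using hT hk
  rw [mem_restrictSupport_formExponents] at hG hLh ⊢
  have hL (i) : (L i).IsHomogeneous 1 := by
    by_cases hi : i = h
    · simpa only [L, if_pos hi] using hLh.1
    · simpa only [L, if_neg hi] using isHomogeneous_X _ _
  refine ⟨by simpa [shear] using hG.1.aeval L hL, fun j hj => ?_⟩
  obtain ⟨i, hi, hij⟩ := Finset.mem_biUnion.1 (vars_bind₁ L G hj)
  by_cases hih : i = h
  · exact hLh.2 (by simpa only [L, if_pos hih] using hij)
  · have hji : j = i := by simpa [L, hih] using hij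
    exact hji ▸ hG.2 hi

theorem shear_neg_shear {h : σ} {T : Finset σ} (hT : h ∉ T) (c : σ → K) (G : MvPolynomial σ K) :
    shear h T (-c) (shear h T c G) = G := by
  suffices hcomp : (shear h T (-c)).comp (shear h T c) = AlgHom.id K _ from AlgHom.congr_fun hcomp G
  ext i : 1
  by_cases hi : i = h
  · subst hi
    have hX (k) (hk : k ∈ T) : shear i T (-c) (X k) = X k := by
      have : k ≠ i := ne_of_mem_of_not_mem hk hT
      simp [shear, this]
    have hXi (c : σ → K) : shear i T c (X i) = X i + ∑ k ∈ T, C (c k) * X k := by simp [shear]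
    have hsum : ∑ k ∈ T, shear i T (-c) (C (c k) * X k) = ∑ k ∈ T, C (c k) * X k :=
      Finset.sum_congr rfl fun k hk => by rw [map_mul, hX k hk, algHom_C, algebraMap_eq]
    rw [AlgHom.comp_apply, hXi, map_add, map_sum, hXi, hsum]
    simp
  · simp [shear, hi]

theorem DimLE.shear [Finite σ] {ι : Type*} {S : Finset σ} {h : σ} (hh : h ∈ S) {T : Finset σ}
    (hT : T ⊆ S) (hhT : h ∉ T) (c : σ → K) {d m : ℕ} {p : ι → σ → K}
    (hp : DimLE (singularForms (formExponents S d) p) m) :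
    DimLE (singularForms (formExponents S d) fun j => shearPoint h T c (p j)) m := by
  cases nonempty_fintype σ
  refine hp.of_injOn (_root_.shear h T c).toLinearMap (fun G hG => ?_) (fun G _ h0 => ?_)
  · rw [mem_singularForms] at hG ⊢
    refine ⟨shear_mem_restrictSupport hh hT c hG.1, fun j i => ?_⟩
    rw [AlgHom.toLinearMap_apply, ← coeff_one_restrictLine_single, restrictLine_shear,
      coeff_one_restrictLine]
    exact Finset.sum_eq_zero fun k _ => by rw [hG.2 j k, mul_zero]
  · rw [← shear_neg_shear hhT c G]
    rw [AlgHom.toLinearMap_apply] at h0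
    rw [h0, map_zero]

end Shear

/-! ### Points with independent projections -/

section LinearIndependent
variable {K : Type*} [Field K] {σ κ : Type*}

theorem lineOpen_linearIndependent_restrict [Finite κ] (T : Finset σ) :
    LineOpen K fun q : κ → σ → K => LinearIndependent K fun j => T.restrict (q j) := by
  cases nonempty_fintype κ
  intro q v hq
  let Φ (i : T) : (κ → K) →ₗ[K] Polynomial K :=
    ∑ j, (LinearMap.toSpanSingleton K (Polynomial K)
      (Polynomial.C (q j i) + Polynomial.X * Polynomial.C (v j i))).comp (LinearMap.proj j)
  have hΦ (i : T) (a : κ → K) (t : K) :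
      (Φ i a).eval t = (∑ j, a j • T.restrict ((q + t • v) j)) i := by
    simp [Φ, Polynomial.eval_finsetSum, mul_add, mul_comm t]
  have hΦ0 (a : κ → K) (ha : ∀ i, (Φ i a).eval 0 = 0) : a = 0 := by
    refine funext (Fintype.linearIndependent_iff.1 hq a (funext fun i => ?_))
    simpa [hΦ] using ha i
  refine (finite_setOf_exists_ne_zero Φ hΦ0).subset fun t ht ht' => ht ?_
  refine Fintype.linearIndependent_iff.2 fun a ha => congrFun (ht' a fun i => ?_)
  rw [hΦ, ha, Pi.zero_apply]

theorem exists_linearIndependent_restrict {ε : ℕ} {T : Finset σ} (hε : ε ≤ T.card) :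
    ∃ q : Fin ε → σ → K, LinearIndependent K fun j => T.restrict (q j) := by
  classical
  have f : Fin ε ↪ T := (Fin.castLEEmb hε).trans T.equivFin.symm.toEmbedding
  refine ⟨fun j => Pi.single (f j).1 1, ?_⟩
  convert (Pi.basisFun K T).linearIndependent.comp f f.injective using 2 with j
  ext i
  simp only [Finset.restrict, Function.comp_apply, Pi.basisFun_apply, Pi.single_apply,
    Subtype.ext_iff]

theorem exists_sum_mul_eq_of_linearIndependent {T : Finset σ} {q : κ → σ → K}
    (hq : LinearIndependent K fun j => T.restrict (q j)) (y : κ → K) :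
    ∃ c : σ → K, ∀ j, ∑ k ∈ T, c k * q j k = y j := by
  classical
  obtain ⟨φ, hφ⟩ := LinearMap.exists_extend ((Module.Basis.span hq).constr K y)
  have hφy (j) : φ (T.restrict (q j)) = y j := by
    have := LinearMap.congr_fun hφ (Module.Basis.span hq j)
    rwa [Module.Basis.constr_basis, LinearMap.comp_apply, Submodule.subtype_apply,
      Module.Basis.span_apply] at this
  refine ⟨fun k => φ fun i => if k = i then 1 else 0, fun j => ?_⟩
  rw [← hφy, LinearMap.pi_apply_eq_sum_univ, ← Finset.sum_coe_sort T]
  exact Finset.sum_congr rfl fun k _ => by simp [Finset.restrict, mul_comm]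

end LinearIndependent

section PartialDerivatives
variable {K : Type*} [Field K] {σ : Type*}

theorem pderiv_comm (i j : σ) (G : MvPolynomial σ K) :
    pderiv i (pderiv j G) = pderiv j (pderiv i G) := by
  classical
  let D : Derivation K (MvPolynomial σ K) (MvPolynomial σ K) :=
    ⁅(pderiv i : Derivation K (MvPolynomial σ K) (MvPolynomial σ K)), pderiv j⁆
  have hD : D = 0 := derivation_ext fun k => by
    simp [D, Derivation.commutator_apply, pderiv_X, Pi.single_apply, apply_ite]
  simpa [D, Derivation.commutator_apply, sub_eq_zero] using DFunLike.congr_fun hD G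

theorem eval_pderiv_X_mul_self (x : σ → K) (h : σ) (G : MvPolynomial σ K) :
    eval x (pderiv h (X h * G)) = x h * eval x (pderiv h G) + eval x G := by
  simp [Derivation.leibniz]

theorem eval_pderiv_X_mul_of_ne {h i : σ} (hi : i ≠ h) (x : σ → K) (G : MvPolynomial σ K) :
    eval x (pderiv i (X h * G)) = x h * eval x (pderiv i G) := by
  simp [Derivation.leibniz, pderiv_X_of_ne hi.symm]

theorem exists_eval_ne_zero [Infinite K] {G : MvPolynomial σ K} (hG : G ≠ 0) :
    ∃ x, eval x G ≠ 0 := by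
  contrapose! hG
  exact MvPolynomial.funext (by simpa using hG)

theorem exists_leftInverse_X_mul (h : σ) :
    ∃ D : MvPolynomial σ K →ₗ[K] MvPolynomial σ K, ∀ G, D (X h * G) = G := by
  have hker : LinearMap.ker (LinearMap.mulLeft K (X h : MvPolynomial σ K)) = ⊥ := by
    rw [LinearMap.ker_eq_bot']
    exact fun G hG => (mul_eq_zero.1 hG).resolve_left (X_ne_zero h)
  obtain ⟨D, hD⟩ := LinearMap.exists_leftInverse_of_injective _ hker
  exact ⟨D, LinearMap.congr_fun hD⟩

theorem pderiv_eq_zero_of_X_mul [CharZero K] [Finite σ] {S : Finset σ} {h : σ} {d : ℕ}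
    {G : MvPolynomial σ K} (hG : G ∈ restrictSupport K (formExponents S d)) {r : σ → K}
    (hr : r h ≠ 0) (hs : ∀ i, eval r (pderiv i (X h * G)) = 0) (i : σ) :
    eval r (pderiv i G) = 0 := by
  cases nonempty_fintype σ
  have hne (k) (hk : k ≠ h) : eval r (pderiv k G) = 0 := by
    have := hs k
    rw [eval_pderiv_X_mul_of_ne hk] at this
    exact (mul_eq_zero.1 this).resolve_left hr
  have hself : r h * eval r (pderiv h G) + eval r G = 0 := by
    rw [← eval_pderiv_X_mul_self, hs h]
  have heuler := sum_mul_eval_pderiv hG r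
  rw [Finset.sum_eq_single h (fun k _ hk => by rw [hne k hk, mul_zero]) (by simp)] at heuler
  have heval : eval r G = 0 := by
    have hd : (d : K) + 1 ≠ 0 := by exact_mod_cast d.succ_ne_zero
    refine (mul_eq_zero.1 (?_ : ((d : K) + 1) * eval r G = 0)).resolve_left hd
    rw [add_mul, ← heuler, one_mul, hself]
  by_cases hi : i = h
  · subst hi
    simpa [heval, hr] using hself
  · exact hne i hi

/-- Compare Euler's relations for `G'` and for `∂G/∂x_h`. -/
theorem eval_eq_zero_of_first_order [CharZero K] [Finite σ] {S : Finset σ} {d : ℕ} {q : σ → K}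
    {G G' : MvPolynomial σ K} (hG : G ∈ restrictSupport K (formExponents S (d + 1)))
    (hG' : G' ∈ restrictSupport K (formExponents S (d + 1)))
    (hGq : ∀ i, eval q (pderiv i G) = 0) (h : σ)
    (hfirst : ∀ i, eval q (pderiv i G') + eval q (pderiv h (pderiv i G)) = 0) :
    eval q G' = 0 := by
  cases nonempty_fintype σ
  have hd : ((d + 1 : ℕ) : K) ≠ 0 := by exact_mod_cast d.succ_ne_zero
  refine (mul_eq_zero.1 (?_ : ((d + 1 : ℕ) : K) * eval q G' = 0)).resolve_left hd
  calc ((d + 1 : ℕ) : K) * eval q G' = ∑ i, q i * eval q (pderiv i G') :=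
        (sum_mul_eval_pderiv hG' q).symm
    _ = -∑ i, q i * eval q (pderiv i (pderiv h G)) := by
        simp only [eq_neg_of_add_eq_zero_left (hfirst _), mul_neg, Finset.sum_neg_distrib,
          pderiv_comm h]
    _ = 0 := by
        rw [sum_mul_eval_pderiv (pderiv_mem_restrictSupport hG h), hGq, mul_zero, neg_zero]

end PartialDerivatives

/-! ### The differential Horace method -/

section SingularVanishing
variable {K : Type*} [Field K] {σ ι κ : Type*}

/-- The polynomials with exponents in `E` singular at the points `s` and vanishing at the
points `q`. -/
noncomputable def singularVanishingForms (E : Set (σ →₀ ℕ)) (s : ι → σ → K) (q : κ → σ → K) :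
    Submodule K (MvPolynomial σ K) :=
  singularForms E s ⊓ ⨅ j, LinearMap.ker (aeval (q j) : MvPolynomial σ K →ₐ[K] K).toLinearMap

theorem mem_singularVanishingForms {E : Set (σ →₀ ℕ)} {s : ι → σ → K} {q : κ → σ → K}
    {G : MvPolynomial σ K} :
    G ∈ singularVanishingForms E s q ↔ G ∈ singularForms E s ∧ ∀ j, eval (q j) G = 0 := by
  simp [singularVanishingForms, Submodule.mem_inf, Submodule.mem_iInf, aeval_eq_eval]

theorem lineOpen_dimLE_singularVanishingForms {V : Type*} [AddCommGroup V] [Module K V]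
    {E : Set (σ →₀ ℕ)} (hE : E.Finite) (f : ι → V →ₗ[K] (σ → K)) (g : κ → V →ₗ[K] (σ → K))
    (m : ℕ) :
    LineOpen K fun x => DimLE (singularVanishingForms E (fun j => f j x) fun j => g j x) m := by
  have := finite_restrictSupport (K := K) hE
  refine LineOpen.dimLE (J := ι × σ ⊕ κ)
    (ψ := Sum.elim (fun ji x => pderivAt (f ji.1 x) ji.2)
      (fun j x => (aeval (g j x) : MvPolynomial σ K →ₐ[K] K).toLinearMap))
    ?_ (restrictSupport K E) _ (fun x G => ?_) m
  · rintro (ji | j)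
    · exact polynomialOnLines_pderivAt _ _
    · exact polynomialOnLines_aeval _
  · simp [mem_singularVanishingForms, mem_singularForms, pderivAt_apply, and_assoc, aeval_eq_eval]

theorem lineOpen_dimLE_singularVanishingForms_left {E : Set (σ →₀ ℕ)} (hE : E.Finite)
    (q : κ → σ → K) (m : ℕ) :
    LineOpen K fun s : ι → σ → K => DimLE (singularVanishingForms E s q) m := by
  let V := (κ → σ → K) × (ι → σ → K)
  let Q : V →ₗ[K] (κ → σ → K) := LinearMap.fst _ _ _
  let U : V →ₗ[K] (ι → σ → K) := LinearMap.snd _ _ _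
  have hopen : LineOpen K fun x : V => DimLE (singularVanishingForms E (U x) (Q x)) m :=
    lineOpen_dimLE_singularVanishingForms hE
      (fun j => (LinearMap.proj j).comp U) (fun j => (LinearMap.proj j).comp Q) m
  exact hopen.prodMk q

theorem lineOpen_dimLE_singularForms_sumElim {V : Type*} [AddCommGroup V] [Module K V]
    {E : Set (σ →₀ ℕ)} (hE : E.Finite) (f : ι → V →ₗ[K] (σ → K)) (g : κ → V →ₗ[K] (σ → K))
    (m : ℕ) :
    LineOpen K fun x =>
      DimLE (singularForms E (Sum.elim (fun j => f j x) fun j => g j x)) m := by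
  convert lineOpen_dimLE_singularForms hE (Sum.elim f g) m using 4 with x
  ext (j | j) <;> rfl

theorem lineOpen_dimLE_singularForms_sumElim_right {E : Set (σ →₀ ℕ)} (hE : E.Finite)
    (q : ι → σ → K) (m : ℕ) :
    LineOpen K fun r : κ → σ → K => DimLE (singularForms E (Sum.elim q r)) m := by
  let V := (ι → σ → K) × (κ → σ → K)
  let Q : V →ₗ[K] (ι → σ → K) := LinearMap.fst _ _ _
  let R : V →ₗ[K] (κ → σ → K) := LinearMap.snd _ _ _
  have hopen : LineOpen K fun x : V => DimLE (singularForms E (Sum.elim (Q x) (R x))) m :=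
    lineOpen_dimLE_singularForms_sumElim hE
      (fun j => (LinearMap.proj j).comp Q) (fun j => (LinearMap.proj j).comp R) m
  exact hopen.prodMk q

theorem DimLE.exists_singularVanishingForms [Infinite K] {E : Set (σ →₀ ℕ)} {s : ι → σ → K}
    {m : ℕ} (hs : DimLE (singularForms E s) m) (ε : ℕ) :
    ∃ q : Fin ε → σ → K, DimLE (singularVanishingForms E s q) (m - ε) := by
  obtain ⟨q, hq⟩ := DimLE.exists_cut (N := ⊥) (m' := 0)
    (fun x : σ → K => (aeval x : MvPolynomial σ K →ₐ[K] K).toLinearMap)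
    (fun G _ hG => by simpa [aeval_eq_eval] using exists_eval_ne_zero (K := K) (G := G) hG)
    (dimLE_zero_iff.2 (inf_bot_eq _)) ε hs
  exact ⟨q, by simpa [singularVanishingForms] using hq⟩

variable [DecidableEq σ]

theorem restrictCoord_mem_singularVanishingForms {S : Finset σ} {h : σ} {d : ℕ} {s : ι → σ → K}
    {q : κ → σ → K} (hs : ∀ j, s j h = 0) (hq : ∀ j, q j h = 0) {G : MvPolynomial σ K}
    (hG : G ∈ singularForms (formExponents S d) s) (hGq : ∀ j, eval (q j) G = 0) :
    restrictCoord {h} G ∈ singularVanishingForms (formExponents (S.erase h) d) s q := by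
  rw [mem_singularForms] at hG
  rw [mem_singularVanishingForms, mem_singularForms]
  refine ⟨⟨?_, fun j i => ?_⟩, fun j => by rw [eval_restrictCoord (by simpa using hq j), hGq]⟩
  · rw [← Finset.sdiff_singleton_eq_erase]
    exact restrictCoord_mem_restrictSupport hG.1
  · by_cases hi : i ∈ ({h} : Finset σ)
    · rw [pderiv_restrictCoord_of_mem hi, map_zero]
    · rw [pderiv_restrictCoord hi, eval_restrictCoord (by simpa using hs j), hG.2]

end SingularVanishing

theorem lineOpen_shearPoint_ne_zero {K : Type*} [Field K] {σ : Type*} [DecidableEq σ] (h : σ)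
    (T : Finset σ) (c : σ → K) : LineOpen K fun x => shearPoint h T c x h ≠ 0 := by
  intro x v hx
  let f := Polynomial.C (shearPoint h T c x h) + Polynomial.X * Polynomial.C (shearPoint h T c v h)
  have hf (t : K) : f.eval t = shearPoint h T c (x + t • v) h := by
    simp [f, shearPoint_add_smul, mul_comm t]
  have hf0 : f ≠ 0 := fun h0 => hx (by simpa [h0] using (hf 0).symm)
  refine (Polynomial.finite_setOfPred_isRoot hf0).subset fun t ht => ?_
  simpa [Polynomial.IsRoot.def, hf] using ht

section HoracePosition
variable {K : Type*} [Field K] {σ : Type*} [Finite σ]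

theorem exists_horace_independent [Infinite K] {S : Finset σ} (T : Finset σ)
    {d d' ε u w m m' n : ℕ} (hε : ε ≤ T.card)
    (hT : ∃ s : Fin u → σ → K, DimLE (singularForms (formExponents T d') s) n)
    (hR : ∃ (q : Fin ε → σ → K) (r : Fin w → σ → K),
      DimLE (singularForms (formExponents S (d + 1)) (Sum.elim q r)) m)
    (hR' : ∃ r : Fin w → σ → K, DimLE (singularForms (formExponents S d) r) m') :
    ∃ (q : Fin ε → σ → K) (r : Fin w → σ → K) (s : Fin u → σ → K),
      LinearIndependent K (fun j => T.restrict (q j)) ∧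
      DimLE (singularForms (formExponents S (d + 1)) (Sum.elim q r)) m ∧
      DimLE (singularForms (formExponents S d) r) m' ∧
      DimLE (singularVanishingForms (formExponents T d') s q) (n - ε) := by
  let V := (Fin ε → σ → K) × (Fin w → σ → K) × (Fin u → σ → K)
  let Q : V →ₗ[K] (Fin ε → σ → K) := LinearMap.fst _ _ _
  let R : V →ₗ[K] (Fin w → σ → K) := (LinearMap.fst _ _ _).comp (LinearMap.snd _ _ _)
  let U : V →ₗ[K] (Fin u → σ → K) := (LinearMap.snd _ _ _).comp (LinearMap.snd _ _ _)
  have openR : LineOpen K fun x : V =>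
      DimLE (singularForms (formExponents S (d + 1)) (Sum.elim (Q x) (R x))) m :=
    lineOpen_dimLE_singularForms_sumElim (finite_formExponents S (d + 1))
      (fun j => (LinearMap.proj j).comp Q) (fun j => (LinearMap.proj j).comp R) m
  have openR' : LineOpen K fun x : V => DimLE (singularForms (formExponents S d) (R x)) m' :=
    lineOpen_dimLE_singularForms (finite_formExponents S d) (fun j => (LinearMap.proj j).comp R) m'
  have openQ : LineOpen K fun x : V => LinearIndependent K fun j => T.restrict (Q x j) :=
    (lineOpen_linearIndependent_restrict T).comp_linearMap Q
  have openT : LineOpen K fun x : V =>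
      DimLE (singularVanishingForms (formExponents T d') (U x) (Q x)) (n - ε) :=
    lineOpen_dimLE_singularVanishingForms (finite_formExponents _ _)
      (fun j => (LinearMap.proj j).comp U) (fun j => (LinearMap.proj j).comp Q) _
  obtain ⟨q₁, r₁, h₁⟩ := hR
  obtain ⟨r₂, h₂⟩ := hR'
  obtain ⟨q₃, h₃⟩ := exists_linearIndependent_restrict (K := K) hε
  obtain ⟨s₄, h₄⟩ := hT
  obtain ⟨q₄, h₄⟩ := h₄.exists_singularVanishingForms ε
  obtain ⟨⟨q, r, s⟩, ⟨⟨hR, hR'⟩, hQ⟩, hT⟩ := ((openR.and openR').and openQ).exists_and openT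
    ((openR.and openR').exists_and openQ
      (openR.exists_and openR' ⟨(q₁, r₁, 0), h₁⟩ ⟨(0, r₂, 0), h₂⟩) ⟨(q₃, 0, 0), h₃⟩)
    ⟨(q₄, 0, s₄), h₄⟩
  exact ⟨q, r, s, hQ, hR, hR', hT⟩

variable [DecidableEq σ]

theorem exists_shearPoint_ne_zero [Infinite K] {S : Finset σ} (h : σ) (c : σ → K)
    {d ε w m m' : ℕ} {q : Fin ε → σ → K} {r : Fin w → σ → K}
    (hR : DimLE (singularForms (formExponents S (d + 1)) (Sum.elim q r)) m)
    (hR' : DimLE (singularForms (formExponents S d) r) m') :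
    ∃ r : Fin w → σ → K, (∀ j, shearPoint h (S.erase h) c (r j) h ≠ 0) ∧
      DimLE (singularForms (formExponents S (d + 1)) (Sum.elim q r)) m ∧
      DimLE (singularForms (formExponents S d) r) m' := by
  have openR : LineOpen K fun r : Fin w → σ → K =>
      DimLE (singularForms (formExponents S (d + 1)) (Sum.elim q r)) m :=
    lineOpen_dimLE_singularForms_sumElim_right (finite_formExponents S (d + 1)) q m
  have openR' : LineOpen K fun r : Fin w → σ → K =>
      DimLE (singularForms (formExponents S d) r) m' :=
    lineOpen_dimLE_singularForms (finite_formExponents S d)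
      (fun j => (LinearMap.proj j : (Fin w → σ → K) →ₗ[K] (σ → K))) m'
  have open_ne : LineOpen K fun r : Fin w → σ → K =>
      ∀ j, shearPoint h (S.erase h) c (r j) h ≠ 0 :=
    LineOpen.all fun j => (lineOpen_shearPoint_ne_zero h (S.erase h) c).comp_linearMap
      (LinearMap.proj j : (Fin w → σ → K) →ₗ[K] (σ → K))
  have hsum : ∑ k ∈ S.erase h, c k * (Pi.single h 1 : σ → K) k = 0 :=
    Finset.sum_eq_zero fun k hk => by simp [Finset.ne_of_mem_erase hk]
  have hne : ∃ r : Fin w → σ → K, ∀ j, shearPoint h (S.erase h) c (r j) h ≠ 0 :=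
    ⟨fun _ => Pi.single h 1, fun j => by rw [shearPoint_self, hsum]; simp⟩
  obtain ⟨r', ⟨hr, hr'⟩, hne'⟩ := (openR.and openR').exists_and open_ne ⟨r, hR, hR'⟩ hne
  exact ⟨r', hne', hr, hr'⟩

/-- Independent points can be moved to the hyperplane `x_h = 0` by a shear along `x_h`. -/
theorem exists_horace_position [Infinite K] {S : Finset σ} {h : σ} (hh : h ∈ S)
    {d d' ε u w m m' n : ℕ} (hε : ε ≤ (S.erase h).card)
    (hT : ∃ s : Fin u → σ → K, DimLE (singularForms (formExponents (S.erase h) d') s) n)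
    (hR : ∃ (q : Fin ε → σ → K) (r : Fin w → σ → K),
      DimLE (singularForms (formExponents S (d + 1)) (Sum.elim q r)) m)
    (hR' : ∃ r : Fin w → σ → K, DimLE (singularForms (formExponents S d) r) m') :
    ∃ (q : Fin ε → σ → K) (r : Fin w → σ → K) (s : Fin u → σ → K),
      (∀ j, q j h = 0) ∧ (∀ j, r j h ≠ 0) ∧
      DimLE (singularForms (formExponents S (d + 1)) (Sum.elim q r)) m ∧
      DimLE (singularForms (formExponents S d) r) m' ∧
      DimLE (singularVanishingForms (formExponents (S.erase h) d') s q) (n - ε) := by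
  obtain ⟨q, r, s, hQ, hR, hR', hT⟩ := exists_horace_independent (S.erase h) hε hT hR hR'
  obtain ⟨c, hc⟩ := exists_sum_mul_eq_of_linearIndependent hQ fun j => - q j h
  obtain ⟨r, hne, hR, hR'⟩ := exists_shearPoint_ne_zero h c hR hR'
  refine ⟨fun j => shearPoint h (S.erase h) c (q j), fun j => shearPoint h (S.erase h) c (r j), s,
    fun j => (shearPoint_self _ _ _ _).trans (by rw [hc, add_neg_cancel]), hne, ?_,
    hR'.shear hh (Finset.erase_subset h S) (Finset.notMem_erase h S) c,
    hT.mono (fun G hG => ?_) le_rfl⟩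
  · convert hR.shear hh (Finset.erase_subset h S) (Finset.notMem_erase h S) c using 2
    ext (j | j) <;> rfl
  · rw [mem_singularVanishingForms] at hG ⊢
    refine ⟨hG.1, fun j => ?_⟩
    rw [← hG.2 j]
    exact eval_congr_of_mem_restrictSupport (mem_singularForms.1 hG.1).1 fun i hi =>
      (shearPoint_of_ne (Finset.ne_of_mem_erase hi) _ c _).symm

end HoracePosition

section Mask
variable {K : Type*} [Field K] {σ : Type*} [DecidableEq σ]

/-- The projection of `K^σ` onto the coordinate subspace where the coordinates in `Z` vanish. -/
def mask (Z : Finset σ) : (σ → K) →ₗ[K] (σ → K) :=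
  LinearMap.pi fun i => if i ∈ Z then 0 else LinearMap.proj i

theorem mask_of_mem {Z : Finset σ} {i : σ} (hi : i ∈ Z) (x : σ → K) : mask Z x i = 0 := by
  simp [mask, hi]

theorem mask_of_notMem {Z : Finset σ} {i : σ} (hi : i ∉ Z) (x : σ → K) : mask Z x i = x i := by
  simp [mask, hi]

theorem mask_mask (Z Z' : Finset σ) (x : σ → K) : mask Z (mask Z' x) = mask (Z' ∪ Z) x := by
  ext i
  by_cases hi : i ∈ Z <;> by_cases hi' : i ∈ Z' <;> simp [mask, hi, hi']

theorem mask_empty (x : σ → K) : mask ∅ x = x := by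
  ext i
  simp [mask]

theorem eval_mask (Z : Finset σ) (x : σ → K) (G : MvPolynomial σ K) :
    eval (mask Z x) G = eval x (restrictCoord Z G) := by
  have hcomp : (aeval (mask Z x) : MvPolynomial σ K →ₐ[K] K) =
      (aeval x : MvPolynomial σ K →ₐ[K] K).comp (restrictCoord Z) := by
    ext i
    by_cases hi : i ∈ Z <;> simp [restrictCoord, mask, hi]
  simpa [aeval_eq_eval] using AlgHom.congr_fun hcomp G

end Mask

section Horace
variable {K : Type*} [Field K] {σ ι κ τ : Type*}

/-- The limit of the residual systems when singular points tend to the points `q` in the direction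
of `x_h`: the polynomials with exponents in `E` which are singular at the points `r` and whose
derivatives along the hyperplane `x_h = 0` vanish at the points `q`. -/
noncomputable def limitResidualForms (E : Set (σ →₀ ℕ)) (h : σ) (q : κ → σ → K)
    (r : ι → σ → K) : Submodule K (MvPolynomial σ K) :=
  singularForms E r ⊓ ⨅ ji : κ × {i // i ≠ h}, LinearMap.ker (pderivAt (q ji.1) ji.2)

theorem mem_limitResidualForms {E : Set (σ →₀ ℕ)} {h : σ} {q : κ → σ → K} {r : ι → σ → K}
    {G : MvPolynomial σ K} :
    G ∈ limitResidualForms E h q r ↔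
      G ∈ singularForms E r ∧ ∀ j i, i ≠ h → eval (q j) (pderiv i G) = 0 := by
  simp [limitResidualForms, Submodule.mem_inf, Submodule.mem_iInf, pderivAt_apply]

theorem DimLE.limitResidualForms [Fintype κ] {E : Set (σ →₀ ℕ)} {q : κ → σ → K}
    {r : ι → σ → K} {m : ℕ} (hqr : DimLE (singularForms E (Sum.elim q r)) m) (h : σ) :
    DimLE (limitResidualForms E h q r) (m + Fintype.card κ) := by
  refine DimLE.add_card (fun j => pderivAt (q j) h) (fun G hG h0 => ?_) hqr
  rw [mem_limitResidualForms, mem_singularForms] at hG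
  refine mem_singularForms.2 ⟨hG.1.1, ?_⟩
  rintro (j | j) i
  · by_cases hi : i = h
    · simpa [hi, pderivAt_apply] using h0 j
    · exact hG.2 j i hi
  · exact hG.1.2 j i

theorem DimLE.limitResidualForms_inf_ker_restrictCoord [CharZero K] [Finite σ] [DecidableEq σ]
    {S : Finset σ} {h : σ} {d m : ℕ} {q : κ → σ → K} {r : ι → σ → K} (hr : ∀ j, r j h ≠ 0)
    (hm : DimLE (singularForms (formExponents S d) r) m) :
    DimLE (_root_.limitResidualForms (formExponents S (d + 1)) h q r ⊓
      LinearMap.ker (restrictCoord (K := K) {h}).toLinearMap) m := by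
  obtain ⟨D, hD⟩ := exists_leftInverse_X_mul (K := K) h
  have hdiv (G) (hG : G ∈ _root_.limitResidualForms (formExponents S (d + 1)) h q r ⊓
      LinearMap.ker (restrictCoord (K := K) {h}).toLinearMap) :
      ∃ F ∈ singularForms (formExponents S d) r, G = X h * F := by
    obtain ⟨hG, h0⟩ := hG
    rw [SetLike.mem_coe, mem_limitResidualForms, mem_singularForms] at hG
    obtain ⟨F, hF, rfl⟩ := exists_eq_X_mul_of_restrictCoord_eq_zero hG.1.1 h0
    exact ⟨F, mem_singularForms.2
      ⟨hF, fun j i => pderiv_eq_zero_of_X_mul hF (hr j) (hG.1.2 j) i⟩, rfl⟩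
  refine hm.of_injOn D (fun G hG => ?_) (fun G hG h0 => ?_) <;> obtain ⟨F, hF, rfl⟩ := hdiv G hG
  · rwa [hD]
  · rw [hD] at h0
    rw [h0, mul_zero]

section HyperplanePoints
variable [DecidableEq σ]

theorem DimLE.singularVanishingForms_mask {S : Finset σ} {h : σ} {d m : ℕ}
    {s : ι → σ → K} {q : κ → σ → K}
    (hs : DimLE (singularVanishingForms (formExponents (S.erase h) (d + 1)) s q) m) :
    DimLE (singularVanishingForms (formExponents (S.erase h) (d + 1))
      (fun j => mask {h} (s j)) q) m := by
  refine hs.mono (fun G hG => ?_) le_rfl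
  rw [mem_singularVanishingForms, mem_singularForms] at hG ⊢
  refine ⟨⟨hG.1.1, fun j i => ?_⟩, hG.2⟩
  rw [← hG.1.2 j i]
  exact eval_congr_of_mem_restrictSupport (pderiv_mem_restrictSupport hG.1.1 i) fun k hk =>
    (mask_of_notMem (by simpa using Finset.ne_of_mem_erase hk) _).symm

theorem exists_hyperplane_points [Infinite K] [Finite σ] {S : Finset σ} {h : σ}
    {D : Submodule K (MvPolynomial σ K)} {u d a b n : ℕ} {q : κ → σ → K} (hD : DimLE D a)
    (hDker : DimLE (D ⊓ LinearMap.ker (restrictCoord (K := K) {h}).toLinearMap) b)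
    (hT : ∃ s : Fin u → σ → K,
      DimLE (singularVanishingForms (formExponents (S.erase h) (d + 1)) s q) n) :
    ∃ s : Fin u → σ → K, (∀ j, s j h = 0) ∧
      DimLE (singularVanishingForms (formExponents (S.erase h) (d + 1)) s q) n ∧
      DimLE (D ⊓ ⨅ j, LinearMap.ker (aeval (s j) : MvPolynomial σ K →ₐ[K] K).toLinearMap)
        (max (a - u) b) := by
  let ev (x : σ → K) : MvPolynomial σ K →ₗ[K] K :=
    (aeval (mask {h} x) : MvPolynomial σ K →ₐ[K] K).toLinearMap
  let N := LinearMap.ker (restrictCoord (K := K) {h}).toLinearMap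
  have hcut := DimLE.exists_cut (N := N) ev (fun G _ hG => by
    obtain ⟨x, hx⟩ := exists_eval_ne_zero (K := K) (G := restrictCoord {h} G) hG
    exact ⟨x, by simpa [ev, aeval_eq_eval, eval_mask] using hx⟩) hDker u hD
  have openD : LineOpen K fun s : Fin u → σ → K =>
      DimLE (D ⊓ ⨅ j, LinearMap.ker (ev (s j))) (max (a - u) b) := by
    have : Module.Finite K D := (dimLE_iff_finrank_le.1 hD).1
    refine LineOpen.dimLE (ψ := fun j s => ev (s j)) (fun j => ?_) D _
      (fun s G => by simp [Submodule.mem_inf, Submodule.mem_iInf]) _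
    exact polynomialOnLines_aeval
      ((mask {h}).comp (LinearMap.proj j : (Fin u → σ → K) →ₗ[K] (σ → K)))
  have openT : LineOpen K fun s : Fin u → σ → K =>
      DimLE (singularVanishingForms (formExponents (S.erase h) (d + 1)) s q) n :=
    lineOpen_dimLE_singularVanishingForms_left (finite_formExponents _ _) q n
  obtain ⟨s, hs, hsT⟩ := openD.exists_and openT hcut hT
  exact ⟨fun j => mask {h} (s j), fun j => mask_of_mem (Finset.mem_singleton_self h) (s j),
    hsT.singularVanishingForms_mask, hs⟩

end HyperplanePoints

variable [Finite σ]

theorem mem_limitResidualForms_of_first_order [CharZero K] {S : Finset σ} {h : σ} {d : ℕ}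
    {s : ι → σ → K} {q : κ → σ → K} {r : τ → σ → K} (hs : ∀ j, s j h = 0) (hq : ∀ j, q j h = 0)
    (hr : ∀ j, r j h ≠ 0) {F F' : MvPolynomial σ K}
    (hF : F ∈ restrictSupport K (formExponents S d))
    (hsing : X h * F ∈ singularForms (formExponents S (d + 1)) (Sum.elim s r))
    (hfirst : ∀ j i, eval (q j) (pderiv i (X h * F')) +
      eval (q j) (pderiv h (pderiv i (X h * F))) = 0) :
    F ∈ limitResidualForms (formExponents S d) h q r ⊓
      ⨅ j, LinearMap.ker (aeval (s j) : MvPolynomial σ K →ₐ[K] K).toLinearMap := by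
  have hsing := (mem_singularForms.1 hsing).2
  refine ⟨mem_limitResidualForms.2 ⟨mem_singularForms.2 ⟨hF, fun j i => ?_⟩, fun j i hi => ?_⟩,
    (Submodule.mem_iInf _).2 fun j => ?_⟩
  · exact pderiv_eq_zero_of_X_mul hF (hr j) (hsing (Sum.inr j)) i
  · simpa [Derivation.leibniz, pderiv_X_of_ne hi.symm, hq] using hfirst j i
  · simpa [eval_pderiv_X_mul_self, hs, aeval_eq_eval] using hsing (Sum.inl j) h

variable [DecidableEq σ]

theorem exists_mem_limitResidualForms_of_first_order [CharZero K] {S : Finset σ} {h : σ} {d : ℕ}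
    {s : ι → σ → K} {q : κ → σ → K} {r : τ → σ → K} (hs : ∀ j, s j h = 0) (hq : ∀ j, q j h = 0)
    (hr : ∀ j, r j h ≠ 0) {G G' : MvPolynomial σ K}
    (hG : G ∈ singularForms (formExponents S (d + 2)) (Sum.elim s r))
    (hG' : G' ∈ restrictSupport K (formExponents S (d + 2)))
    (hGh : (∀ j, eval (q j) G = 0) → restrictCoord {h} G = 0)
    (hGh' : (∀ j, eval (q j) G' = 0) → restrictCoord {h} G' = 0)
    (hzero : ∀ j i, eval (q j) (pderiv i G) = 0)
    (hfirst : ∀ j i, eval (q j) (pderiv i G') + eval (q j) (pderiv h (pderiv i G)) = 0) :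
    ∃ F ∈ limitResidualForms (formExponents S (d + 1)) h q r ⊓
      ⨅ j, LinearMap.ker (aeval (s j) : MvPolynomial σ K →ₐ[K] K).toLinearMap, G = X h * F := by
  have hGE := (mem_singularForms.1 hG).1
  obtain ⟨F, hF, rfl⟩ := exists_eq_X_mul_of_restrictCoord_eq_zero hGE
    (hGh fun j => eval_eq_zero_of_pderiv_eq_zero hGE (by omega) (hzero j))
  obtain ⟨F', -, rfl⟩ := exists_eq_X_mul_of_restrictCoord_eq_zero hG'
    (hGh' fun j => eval_eq_zero_of_first_order hGE hG' (hzero j) h (hfirst j))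
  exact ⟨F, mem_limitResidualForms_of_first_order hs hq hr hF hG hfirst, rfl⟩

/-- The moving points are `q j + t • e_h`. A first-order solution `G + t G'` at `t = 0` of their
conditions is divisible by `x_h`, and the quotient of `G` lies in the limit residual system. -/
theorem exists_dimLE_singularForms_degeneration [CharZero K] {S : Finset σ} {h : σ} {d a b : ℕ}
    {s : ι → σ → K} {q : κ → σ → K} {r : τ → σ → K} (hs : ∀ j, s j h = 0) (hq : ∀ j, q j h = 0)
    (hr : ∀ j, r j h ≠ 0)
    (hT : DimLE (singularVanishingForms (formExponents (S.erase h) (d + 2)) s q) a)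
    (hR : DimLE (limitResidualForms (formExponents S (d + 1)) h q r ⊓
      ⨅ j, LinearMap.ker (aeval (s j) : MvPolynomial σ K →ₐ[K] K).toLinearMap) b) :
    ∃ t : K, DimLE (singularForms (formExponents S (d + 2))
      (Sum.elim s (Sum.elim r fun j => q j + t • Pi.single h 1))) (a + b) := by
  obtain ⟨μ, hμ⟩ := dimLE_iff_exists_functionals.1 hT
  obtain ⟨ν, hν⟩ := dimLE_iff_exists_functionals.1 hR
  obtain ⟨D, hD⟩ := exists_leftInverse_X_mul (K := K) h
  let E := formExponents S (d + 2)
  let W : Submodule K (MvPolynomial σ K) := singularForms E (Sum.elim s r) ⊓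
    ((⨅ l, LinearMap.ker ((μ l).comp (restrictCoord {h}).toLinearMap)) ⊓
      ⨅ l, LinearMap.ker ((ν l).comp D))
  have hW (G) : G ∈ W ↔ G ∈ singularForms E (Sum.elim s r) ∧
      (∀ l, μ l (restrictCoord {h} G) = 0) ∧ ∀ l, ν l (D G) = 0 := by
    simp [W, Submodule.mem_inf, Submodule.mem_iInf]
  have hrestrict {G} (hG : G ∈ W) (hGq : ∀ j, eval (q j) G = 0) : restrictCoord {h} G = 0 := by
    rw [hW, mem_singularForms] at hG
    exact hμ _ (restrictCoord_mem_singularVanishingForms hs hq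
      (mem_singularForms.2 ⟨hG.1.1, fun j => hG.1.2 (Sum.inl j)⟩) hGq) hG.2.1
  have hsupp {G} (hG : G ∈ W) : G ∈ restrictSupport K E := (mem_singularForms.1 ((hW G).1 hG).1).1
  have : Module.Finite K (restrictSupport K E) := finite_restrictSupport (finite_formExponents _ _)
  have : Module.Finite K W := Submodule.finiteDimensional_of_le (fun _ => hsupp)
  obtain ⟨t, ht⟩ := exists_forall_eq_zero_of_first_order (K := K) (M := W) (J := κ × σ)
    (fun ji => (restrictLine (q ji.1) (Pi.single h 1)).toLinearMap.comp
      ((pderiv ji.2).toLinearMap.comp W.subtype)) (by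
    rintro ⟨G, hG⟩ hzero ⟨G', hG'⟩ hfirst
    replace hzero (j i) : eval (q j) (pderiv i G) = 0 := by
      simpa [coeff_zero_restrictLine] using hzero (j, i)
    replace hfirst (j i) : eval (q j) (pderiv i G') + eval (q j) (pderiv h (pderiv i G)) = 0 := by
      simpa [coeff_zero_restrictLine, coeff_one_restrictLine_single] using hfirst (j, i)
    obtain ⟨F, hF, rfl⟩ := exists_mem_limitResidualForms_of_first_order hs hq hr ((hW G).1 hG).1
      (hsupp hG') (hrestrict hG) (hrestrict hG') hzero hfirst
    have : F = 0 := hν F hF fun l => by rw [← hD F]; exact ((hW _).1 hG).2.2 l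
    simp [this])
  refine ⟨t, ?_⟩
  simpa using DimLE.of_forall_eq_zero (Sum.elim
    (fun l => (μ l).comp (restrictCoord {h}).toLinearMap) fun l => (ν l).comp D) fun G hG h0 => by
    obtain ⟨hE, hp⟩ := mem_singularForms.1 hG
    have hGW : G ∈ W := (hW G).2 ⟨mem_singularForms.2 ⟨hE, by
      rintro (j | j)
      exacts [hp (Sum.inl j), hp (Sum.inr (Sum.inl j))]⟩,
      fun l => h0 (Sum.inl l), fun l => h0 (Sum.inr l)⟩
    exact congrArg Subtype.val (ht ⟨G, hGW⟩ fun ji => by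
      simpa [eval_restrictLine] using hp (Sum.inr (Sum.inr ji.1)) ji.2)

/-- `u` points are specialised to the hyperplane `x_h = 0`, and `ε` further points tend to it. -/
theorem horace [CharZero K] {S : Finset σ} {h : σ} (hh : h ∈ S) {d ε u w n m m' : ℕ}
    (hε : ε ≤ (S.erase h).card)
    (hT : ∃ s : Fin u → σ → K, DimLE (singularForms (formExponents (S.erase h) (d + 2)) s) n)
    (hR : ∃ (q : Fin ε → σ → K) (r : Fin w → σ → K),
      DimLE (singularForms (formExponents S (d + 1)) (Sum.elim q r)) m)
    (hR' : ∃ r : Fin w → σ → K, DimLE (singularForms (formExponents S d) r) m') :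
    ∃ p : Fin u ⊕ Fin w ⊕ Fin ε → σ → K,
      DimLE (singularForms (formExponents S (d + 2)) p) ((n - ε) + max (m + ε - u) m') := by
  obtain ⟨q, r, s, hq, hr, hR, hR', hT⟩ := exists_horace_position hh hε hT hR hR'
  obtain ⟨s, hs, hT, hR⟩ := exists_hyperplane_points (hR.limitResidualForms h)
    (DimLE.limitResidualForms_inf_ker_restrictCoord hr hR') ⟨s, hT⟩
  obtain ⟨t, ht⟩ := exists_dimLE_singularForms_degeneration hs hq hr hT hR
  exact ⟨_, by simpa using ht⟩

end Horace

/-! ### Points on coordinate subspaces -/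

section SingularBound
variable {K : Type*} [Field K] {σ : Type*} [DecidableEq σ] {ι κ ι₀ ι₁ ι₂ : Type*}

variable (K) in
/-- For suitable points, the `j`-th lying on the coordinate subspace where the variables in `M j`
vanish, the system of polynomials with exponents in `E` singular at these points has dimension
at most `m`. -/
def SingularBound (E : Set (σ →₀ ℕ)) (M : ι → Finset σ) (m : ℕ) : Prop :=
  ∃ p : ι → σ → K, DimLE (singularForms E fun j => mask (M j) (p j)) m

theorem SingularBound.mono {E E' : Set (σ →₀ ℕ)} {M : ι → Finset σ} {M' : κ → Finset σ}
    {m m' : ℕ} (h : SingularBound K E M m) (hE : E' ⊆ E) (e : ι ↪ κ) (hM : ∀ j, M' (e j) ⊆ M j)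
    (hm : m ≤ m') : SingularBound K E' M' m' := by
  obtain ⟨p, hp⟩ := h
  refine ⟨Function.extend e (fun j => mask (M j) (p j)) 0, hp.mono (fun G hG => ?_) hm⟩
  rw [mem_singularForms] at hG ⊢
  refine ⟨restrictSupport_mono K hE hG.1, fun j i => ?_⟩
  simpa [e.injective.extend_apply, mask_mask, Finset.union_eq_left.2 (hM j)] using hG.2 (e j) i

theorem singularForms_le_of_restrictCoord_eq_zero {E : Set (σ →₀ ℕ)} {Z : Finset σ}
    {p : ι → σ → K} :
    singularForms E p ⊓ LinearMap.ker (restrictCoord (K := K) Z).toLinearMap ≤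
      singularForms {α ∈ E | ∃ i ∈ Z, α i ≠ 0} p := by
  rintro G ⟨hG, hG0⟩
  replace hG := mem_singularForms.1 hG
  refine mem_singularForms.2 ⟨mem_restrictSupport_iff_coeff.2 fun α hα =>
    ⟨mem_restrictSupport_iff_coeff.1 hG.1 α hα, ?_⟩, hG.2⟩
  contrapose! hα
  have hcoeff : coeff α (restrictCoord Z G) = 0 := by
    rw [show restrictCoord Z G = 0 from hG0, coeff_zero]
  rwa [coeff_restrictCoord, if_pos hα] at hcoeff

theorem restrictCoord_mem_singularForms {E : Set (σ →₀ ℕ)} {Z : Finset σ} {M : ι → Finset σ}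
    {p : ι → σ → K} {G : MvPolynomial σ K}
    (hG : G ∈ singularForms E fun j => mask (M j ∪ Z) (p j)) :
    restrictCoord Z G ∈
      singularForms {α ∈ E | ∀ i ∈ Z, α i = 0} fun j => mask (M j) (p j) := by
  rw [mem_singularForms] at hG ⊢
  refine ⟨mem_restrictSupport_iff_coeff.2 fun α hα => ?_, fun j i => ?_⟩
  · rw [coeff_restrictCoord, ite_ne_right_iff] at hα
    exact ⟨mem_restrictSupport_iff_coeff.1 hG.1 α hα.2, hα.1⟩
  · by_cases hi : i ∈ Z
    · rw [pderiv_restrictCoord_of_mem hi, map_zero]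
    · rw [pderiv_restrictCoord hi, ← eval_mask, mask_mask, hG.2]

theorem lineOpen_dimLE_singularForms_mask {V : Type*} [AddCommGroup V] [Module K V]
    {E : Set (σ →₀ ℕ)} (hE : E.Finite) (M : ι → Finset σ) (f : ι → V →ₗ[K] (σ → K)) (m : ℕ) :
    LineOpen K fun x => DimLE (singularForms E fun j => mask (M j) (f j x)) m :=
  lineOpen_dimLE_singularForms hE (fun j => (mask (M j)).comp (f j)) m

theorem SingularBound.exists_common [Infinite K] {E₁ E₂ : Set (σ →₀ ℕ)} (hE₁ : E₁.Finite)
    (hE₂ : E₂.Finite) {M₀ : ι₀ → Finset σ} {M₁ M₁' : ι₁ → Finset σ} {M₂ : ι₂ → Finset σ} {a b : ℕ}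
    (h₁ : SingularBound K E₁ (Sum.elim M₀ M₁) a) (h₂ : SingularBound K E₂ (Sum.elim M₁' M₂) b) :
    ∃ (p₀ : ι₀ → σ → K) (p₁ : ι₁ → σ → K) (p₂ : ι₂ → σ → K),
      DimLE (singularForms E₁ fun j => mask (Sum.elim M₀ M₁ j) (Sum.elim p₀ p₁ j)) a ∧
      DimLE (singularForms E₂ fun j => mask (Sum.elim M₁' M₂ j) (Sum.elim p₁ p₂ j)) b := by
  let V := (ι₀ → σ → K) × (ι₁ → σ → K) × (ι₂ → σ → K)
  let f₀ (j : ι₀) : V →ₗ[K] (σ → K) := (LinearMap.proj j).comp (LinearMap.fst _ _ _)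
  let f₁ (j : ι₁) : V →ₗ[K] (σ → K) :=
    (LinearMap.proj j).comp ((LinearMap.fst _ _ _).comp (LinearMap.snd _ _ _))
  let f₂ (j : ι₂) : V →ₗ[K] (σ → K) :=
    (LinearMap.proj j).comp ((LinearMap.snd _ _ _).comp (LinearMap.snd _ _ _))
  obtain ⟨p, hp⟩ := h₁
  obtain ⟨q, hq⟩ := h₂
  obtain ⟨x, hx₁, hx₂⟩ :=
    (lineOpen_dimLE_singularForms_mask hE₁ (Sum.elim M₀ M₁) (Sum.elim f₀ f₁) a).exists_and
      (lineOpen_dimLE_singularForms_mask hE₂ (Sum.elim M₁' M₂) (Sum.elim f₁ f₂) b)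
      ⟨(fun j => p (Sum.inl j), fun j => p (Sum.inr j), 0), by
        convert hp using 4 with j; rcases j with j | j <;> rfl⟩
      ⟨(0, fun j => q (Sum.inl j), fun j => q (Sum.inr j)), by
        convert hq using 4 with j; rcases j with j | j <;> rfl⟩
  refine ⟨x.1, x.2.1, x.2.2, ?_, ?_⟩
  · convert hx₁ using 4 with j
    rcases j with j | j <;> rfl
  · convert hx₂ using 4 with j
    rcases j with j | j <;> rfl

/-- The Horace method for the coordinate subspace `x_i = 0`, `i ∈ Z`, with points in general
position on prescribed coordinate subspaces: the points with index in `ι₀` and `ι₁` lie on the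
subspace, those in `ι₂` need not, and those in `ι₀` are not used in the residual system. -/
theorem SingularBound.add_restrictCoord [Infinite K] {E : Set (σ →₀ ℕ)} (hE : E.Finite)
    (Z : Finset σ) {M₀ : ι₀ → Finset σ} {M₁ : ι₁ → Finset σ} {M₂ : ι₂ → Finset σ} {a b : ℕ}
    (h₁ : SingularBound K {α ∈ E | ∀ i ∈ Z, α i = 0} (Sum.elim M₀ M₁) a)
    (h₂ : SingularBound K {α ∈ E | ∃ i ∈ Z, α i ≠ 0} (Sum.elim (fun j => M₁ j ∪ Z) M₂) b) :
    SingularBound K E (Sum.elim (fun j => M₀ j ∪ Z) (Sum.elim (fun j => M₁ j ∪ Z) M₂))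
      (a + b) := by
  obtain ⟨p₀, p₁, p₂, hp₁, hp₂⟩ :=
    h₁.exists_common (hE.subset (Set.sep_subset _ _)) (hE.subset (Set.sep_subset _ _)) h₂
  refine ⟨Sum.elim p₀ (Sum.elim p₁ p₂), DimLE.add_ker (restrictCoord Z).toLinearMap
    (fun G hG => restrictCoord_mem_singularForms ?_) hp₁ (hp₂.mono (fun G hG => ?_) le_rfl)⟩
  · rw [mem_singularForms] at hG ⊢
    refine ⟨hG.1, ?_⟩
    rintro (j | j)
    exacts [hG.2 (Sum.inl j), hG.2 (Sum.inr (Sum.inl j))]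
  · have hres := mem_singularForms.1 (singularForms_le_of_restrictCoord_eq_zero hG)
    refine mem_singularForms.2 ⟨hres.1, ?_⟩
    rintro (j | j)
    exacts [hres.2 (Sum.inr (Sum.inl j)), hres.2 (Sum.inr (Sum.inr j))]

end SingularBound

section DoublePointBound
variable {K : Type*} [Field K] {σ : Type*}

variable (K) in
/-- `k` suitable double points leave a space of dimension at most `m` of degree-`d` forms in the
variables `S`. -/
def DoublePointBound (S : Finset σ) (d k m : ℕ) : Prop :=
  ∃ p : Fin k → σ → K, DimLE (singularForms (formExponents S d) p) m

theorem doublePointBound_iff_singularBound [DecidableEq σ] {S : Finset σ} {d k m : ℕ} :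
    DoublePointBound K S d k m ↔
      SingularBound K (formExponents S d) (fun _ : Fin k => ∅) m := by
  simp [DoublePointBound, SingularBound, mask_empty]

theorem DoublePointBound.mono {S : Finset σ} {d k k' m m' : ℕ} (h : DoublePointBound K S d k m)
    (hk : k ≤ k') (hm : m ≤ m') : DoublePointBound K S d k' m' := by
  classical
  rw [doublePointBound_iff_singularBound] at h ⊢
  exact h.mono subset_rfl (Fin.castLEEmb hk) (fun _ => subset_rfl) hm

theorem DimLE.doublePointBound {ι : Type*} [Fintype ι] {S : Finset σ} {d m : ℕ} {p : ι → σ → K}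
    (h : DimLE (singularForms (formExponents S d) p) m) :
    DoublePointBound K S d (Fintype.card ι) m := by
  refine ⟨p ∘ (Fintype.equivFin ι).symm, h.mono (fun G hG => ?_) le_rfl⟩
  rw [mem_singularForms] at hG ⊢
  exact ⟨hG.1, fun j i => by simpa using hG.2 (Fintype.equivFin ι j) i⟩

theorem DoublePointBound.drop_one {S : Finset σ} {d k m : ℕ}
    (h : DoublePointBound K S d (k + 1) m) : DoublePointBound K S d k (m + S.card) := by
  obtain ⟨p, hp⟩ := h
  refine ⟨fun j => p j.castSucc, ?_⟩
  rw [← Fintype.card_coe S]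
  refine DimLE.add_card (fun i : S => pderivAt (p (Fin.last k)) i.1) (fun G hG h0 => ?_) hp
  rw [mem_singularForms] at hG ⊢
  refine ⟨hG.1, fun j i => Fin.lastCases ?_ (fun j => hG.2 j i) j⟩
  by_cases hi : i ∈ S
  · simpa [pderivAt_apply] using h0 ⟨i, hi⟩
  · rw [pderiv_eq_zero_of_notMem hG.1 hi, map_zero]

theorem DoublePointBound.drop {S : Finset σ} {d k m : ℕ} (j : ℕ)
    (h : DoublePointBound K S d (k + j) m) : DoublePointBound K S d k (m + S.card * j) := by
  induction j generalizing m with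
  | zero => simpa using h
  | succ j ih => exact (ih h.drop_one).mono le_rfl (by rw [Nat.mul_succ]; omega)

theorem DoublePointBound.horace [CharZero K] [Finite σ] [DecidableEq σ] {S : Finset σ} {h : σ}
    (hh : h ∈ S) {d ε u w n m₁ m₂ k m : ℕ} (hε : ε + 1 ≤ S.card)
    (hT : DoublePointBound K (S.erase h) (d + 2) u n)
    (hR : DoublePointBound K S (d + 1) (w + ε) m₁) (hR' : DoublePointBound K S d w m₂)
    (hk : u + ε + w ≤ k) (hm₁ : (n - ε) + (m₁ + ε - u) ≤ m) (hm₂ : (n - ε) + m₂ ≤ m) :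
    DoublePointBound K S (d + 2) k m := by
  obtain ⟨p, hp⟩ := hR
  have hR : ∃ (q : Fin ε → σ → K) (r : Fin w → σ → K),
      DimLE (singularForms (formExponents S (d + 1)) (Sum.elim q r)) m₁ := by
    refine ⟨fun j => p (Fin.natAdd w j), fun j => p (Fin.castAdd ε j), hp.mono ?_ le_rfl⟩
    intro G hG
    rw [mem_singularForms] at hG ⊢
    exact ⟨hG.1, Fin.addCases (fun j => hG.2 (Sum.inr j)) fun j => hG.2 (Sum.inl j)⟩
  have hε : ε ≤ (S.erase h).card := by rw [Finset.card_erase_of_mem hh]; omega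
  obtain ⟨_, hp⟩ := _root_.horace hh hε hT hR hR'
  exact hp.doublePointBound.mono (by simp; omega) (by omega)

end DoublePointBound

/-! ### Gaussian elimination modulo 101 -/

section Elimination

/-- Evaluates `x` before passing it on; equal to `k x`, see `force_eq`. -/
def force {α : Type*} (x : ℕ) (k : ℕ → α) : α :=
  match x with
  | 0 => k 0
  | n + 1 => k (n + 1)

theorem force_eq {α : Type*} (x : ℕ) (k : ℕ → α) : force x k = k x := by
  cases x <;> rfl

/-- The base in which rows of residues modulo `101` are packed into one natural number. -/
def packBase : ℕ := 4294967296

/-- The row `l`, packed into the number with base-`packBase` digits `l`, least significant first. -/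
def packRow : List ℕ → ℕ
  | [] => 0
  | a :: l => a + packBase * packRow l

/-- Multiplies the first `n` digits of `r` by `s` and reduces them modulo `101`. -/
def reduceRow (s : ℕ) : ℕ → ℕ → ℕ
  | 0, _ => 0
  | n + 1, r => Nat.add (Nat.mod (Nat.mul (Nat.mod r packBase) s) 101)
      (Nat.mul packBase (reduceRow s n (Nat.div r packBase)))

/-- Adds to `r` the multiple of `P` that clears, modulo `101`, the digit with place value `q`,
provided that this digit of `P` is `1`. -/
def clearDigit (q P r : ℕ) : ℕ :=
  Nat.add r (Nat.mul (Nat.sub 101 (Nat.mod (Nat.mod (Nat.div r q) packBase) 101)) P)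

/-- Gaussian elimination modulo `101` on packed rows with `n` digits, without exchanging rows or
columns, starting from the most significant digit; `t` is the number of columns left and `q` the
place value of the next pivot. The result is `true` if all pivots are found. For the sake of
evaluation by the kernel, operations on natural numbers are spelled out, inverses modulo `101` are
computed as 99th powers, and intermediate results are forced. -/
def solveRows (n : ℕ) : ℕ → List ℕ → ℕ → Bool
  | 0, _, _ => true
  | _ + 1, [], _ => false
  | t + 1, r :: rs, q =>
    force r fun r =>
      force (Nat.mod (Nat.pow (Nat.mod (Nat.mod (Nat.div r q) packBase) 101) 99) 101) fun s =>
        force (reduceRow s n r) fun P =>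
          Nat.beq (Nat.div P q) 1 &&
            force (Nat.div q packBase) (solveRows n t (rs.map (clearDigit q P)))

theorem sum_mul_pow_div_pow_mod {B n : ℕ} (hB : 0 < B) {a : ℕ → ℕ} (ha : ∀ j, a j < B)
    {j : ℕ} (hj : j < n) :
    (∑ i ∈ Finset.range n, a i * B ^ i) / B ^ j % B = a j := by
  induction n generalizing a j with
  | zero => omega
  | succ n ih =>
    have e : ∑ i ∈ Finset.range (n + 1), a i * B ^ i
        = a 0 + B * ∑ i ∈ Finset.range n, a (i + 1) * B ^ i := by
      rw [Finset.sum_range_succ', Finset.mul_sum, add_comm]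
      simp only [pow_zero, mul_one]
      congr 1
      exact Finset.sum_congr rfl fun i _ => by ring
    rw [e]
    cases j with
    | zero => simp [Nat.mod_eq_of_lt (ha 0)]
    | succ j =>
      rw [pow_succ', ← Nat.div_div_eq_div_mul, Nat.add_mul_div_left _ _ hB,
        Nat.div_eq_of_lt (ha 0), zero_add]
      exact ih (a := fun i => a (i + 1)) (fun i => ha _) (by omega)

/-- The number `r` packs a relation modulo `101` satisfied by `c`, with `n` digits that are at
most `b`. -/
def RowRelation (c : ℕ → ZMod 101) (n b r : ℕ) : Prop :=
  ∃ a : ℕ → ℕ, (∀ j, a j ≤ b) ∧ r = ∑ j ∈ Finset.range n, a j * packBase ^ j ∧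
    ∑ j ∈ Finset.range n, (a j : ZMod 101) * c j = 0

theorem RowRelation.add_mul {c : ℕ → ZMod 101} {n b b' r r' : ℕ} (f : ℕ) (hf : f ≤ 101)
    (h : RowRelation c n b r) (h' : RowRelation c n b' r') :
    RowRelation c n (b + 101 * b') (r + f * r') := by
  obtain ⟨a, ha, hr, hs⟩ := h
  obtain ⟨a', ha', hr', hs'⟩ := h'
  refine ⟨fun j => a j + f * a' j, fun j => Nat.add_le_add (ha j) (Nat.mul_le_mul hf (ha' j)),
    ?_, ?_⟩
  · rw [hr, hr', Finset.mul_sum, ← Finset.sum_add_distrib]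
    exact Finset.sum_congr rfl fun j _ => by ring
  · have : ∑ j ∈ Finset.range n, ((a j + f * a' j : ℕ) : ZMod 101) * c j
        = ∑ j ∈ Finset.range n, (a j : ZMod 101) * c j
          + f * ∑ j ∈ Finset.range n, (a' j : ZMod 101) * c j := by
      rw [Finset.mul_sum, ← Finset.sum_add_distrib]
      exact Finset.sum_congr rfl fun j _ => by push_cast; ring
    rw [this, hs, hs', mul_zero, add_zero]

theorem RowRelation.clear {c : ℕ → ZMod 101} {n b r P : ℕ} (q : ℕ) (h : RowRelation c n b r)
    (hP : RowRelation c n 100 P) : RowRelation c n (b + 10100) (clearDigit q P r) :=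
  h.add_mul _ (Nat.sub_le _ _) hP

theorem reduceRow_succ (s n r : ℕ) : reduceRow s (n + 1) r =
    r % packBase * s % 101 + packBase * reduceRow s n (r / packBase) := rfl

theorem reduceRow_eq (s n r : ℕ) : reduceRow s n r =
    ∑ j ∈ Finset.range n, (r / packBase ^ j % packBase * s % 101) * packBase ^ j := by
  induction n generalizing r with
  | zero => simp [reduceRow]
  | succ n ih =>
    rw [reduceRow_succ, ih, Finset.sum_range_succ', Finset.mul_sum, add_comm]
    simp only [pow_zero, mul_one, Nat.div_one]
    congr 1
    refine Finset.sum_congr rfl fun j _ => ?_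
    rw [Nat.div_div_eq_div_mul, ← pow_succ']
    ring

theorem packBase_pos : 0 < packBase := by simp [packBase]

theorem RowRelation.reduce {c : ℕ → ZMod 101} {n b r : ℕ} (s : ℕ) (h : RowRelation c n b r)
    (hb : b < packBase) : RowRelation c n 100 (reduceRow s n r) := by
  obtain ⟨a, ha, hr, hs⟩ := h
  refine ⟨fun j => a j * s % 101, fun j => Nat.le_of_lt_succ (Nat.mod_lt _ (by norm_num)), ?_, ?_⟩
  · rw [reduceRow_eq]
    refine Finset.sum_congr rfl fun j hj => ?_
    rw [hr, sum_mul_pow_div_pow_mod packBase_pos (fun j => (ha j).trans_lt hb)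
      (Finset.mem_range.1 hj)]
  · have : ∑ j ∈ Finset.range n, ((a j * s % 101 : ℕ) : ZMod 101) * c j
        = s * ∑ j ∈ Finset.range n, (a j : ZMod 101) * c j := by
      rw [Finset.mul_sum]
      refine Finset.sum_congr rfl fun j _ => ?_
      rw [ZMod.natCast_mod]; push_cast; ring
    rw [this, hs, mul_zero]

theorem RowRelation.eq_zero_of_div_eq_one {c : ℕ → ZMod 101} {n P t : ℕ}
    (h : RowRelation c n 100 P) (ht : t < n) (hP : P / packBase ^ t = 1)
    (hc : ∀ j < t, c j = 0) : c t = 0 := by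
  obtain ⟨a, ha, hPa, hsum⟩ := h
  have hdigit : ∀ i < n, P / packBase ^ i % packBase = a i := fun i hi => by
    rw [hPa, sum_mul_pow_div_pow_mod packBase_pos
      (fun j => (ha j).trans_lt (by simp [packBase])) hi]
  have hat : a t = 1 := by rw [← hdigit t ht, hP]; simp [packBase]
  have hhigh : ∀ i < n, t < i → a i = 0 := fun i hi hti => by
    obtain ⟨k, rfl⟩ : ∃ k, i = t + (k + 1) := ⟨i - t - 1, by omega⟩
    rw [← hdigit _ hi, pow_add, ← Nat.div_div_eq_div_mul, hP, Nat.div_eq_of_lt, Nat.zero_mod]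
    exact Nat.one_lt_pow (by omega) (by simp [packBase])
  rw [Finset.sum_eq_single_of_mem t (Finset.mem_range.2 ht) fun i hi hit => ?_, hat] at hsum
  · simpa using hsum
  · rcases lt_or_gt_of_ne hit with hlt | hgt
    · rw [hc i hlt, mul_zero]
    · rw [hhigh i (Finset.mem_range.1 hi) hgt, Nat.cast_zero, zero_mul]

/-- The digits of the rows grow by at most `100 * 101` per step, so by `hb` no carries occur. -/
theorem eq_zero_of_solveRows {c : ℕ → ZMod 101} {n : ℕ} (t : ℕ) (ht : t ≤ n) {b : ℕ}
    (hb : b + 10100 * t < packBase) (rows : List ℕ) (hrows : ∀ r ∈ rows, RowRelation c n b r)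
    {q : ℕ} (hq : ∀ t', t = t' + 1 → q = packBase ^ t')
    (h : solveRows n t rows q = true) : ∀ j < t, c j = 0 := by
  induction t generalizing b rows q with
  | zero => intro j hj; omega
  | succ t ih =>
    obtain rfl := hq t rfl
    cases rows with
    | nil => simp [solveRows] at h
    | cons r rs =>
      simp only [solveRows, force_eq, Bool.and_eq_true, Nat.beq_eq] at h
      obtain ⟨hpivot, hrest⟩ := h
      have hP := (hrows r List.mem_cons_self).reduce (Nat.mod (Nat.pow (Nat.mod (Nat.mod
        (Nat.div r (packBase ^ t)) packBase) 101) 99) 101) (by omega)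
      generalize reduceRow _ n r = P at hpivot hrest hP
      have hlow : ∀ j < t, c j = 0 := by
        refine ih (by omega) (b := b + 10100) (by omega) _ ?_ ?_ hrest
        · intro r' hr'
          obtain ⟨r₀, hr₀, rfl⟩ := List.mem_map.1 hr'
          exact (hrows r₀ (List.mem_cons_of_mem _ hr₀)).clear _ hP
        · rintro t' rfl
          exact Nat.div_eq_of_eq_mul_left packBase_pos (pow_succ _ _)
      intro j hj
      rcases Nat.lt_succ_iff_lt_or_eq.1 hj with hj | rfl
      · exact hlow j hj
      · exact hP.eq_zero_of_div_eq_one ht hpivot hlow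

theorem packRow_eq (l : List ℕ) :
    packRow l = ∑ j ∈ Finset.range l.length, l.getD j 0 * packBase ^ j := by
  induction l with
  | nil => simp [packRow]
  | cons a l ih =>
    rw [packRow, ih, List.length_cons, Finset.sum_range_succ', Finset.mul_sum, add_comm]
    simp only [pow_zero, mul_one, List.getD_cons_zero, List.getD_cons_succ]
    congr 1
    exact Finset.sum_congr rfl fun j _ => by ring

theorem rowRelation_packRow_ofFn {n : ℕ} {a : Fin n → ℕ} {v : Fin n → ZMod 101}
    (h : ∑ j, (a j : ZMod 101) * v j = 0) :
    RowRelation (fun j => if hj : j < n then v ⟨j, hj⟩ else 0) n 100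
      (packRow (List.ofFn fun j => a j % 101)) := by
  refine ⟨fun j => if hj : j < n then a ⟨j, hj⟩ % 101 else 0, fun j => ?_, ?_, ?_⟩
  · dsimp only
    split_ifs
    · exact Nat.le_of_lt_succ (Nat.mod_lt _ (by norm_num))
    · simp
  · rw [packRow_eq, List.length_ofFn]
    refine Finset.sum_congr rfl fun j hj => ?_
    simp [List.getD_eq_getElem?_getD, Finset.mem_range.1 hj]
  · rw [← Fin.sum_univ_eq_sum_range
      (fun j => ((if hj : j < n then a ⟨j, hj⟩ % 101 else 0 : ℕ) : ZMod 101) *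
        if hj : j < n then v ⟨j, hj⟩ else 0), ← h]
    exact Finset.sum_congr rfl fun j _ => by simp

theorem det_ne_zero_of_solveRows {n : ℕ} (hn : 100 + 10100 * n < packBase)
    (A : Matrix (Fin n) (Fin n) ℕ)
    (h : solveRows n n (List.ofFn fun k => packRow (List.ofFn fun j => A k j % 101))
      (packBase ^ (n - 1)) = true) :
    (A.map (Nat.cast : ℕ → ZMod 101)).det ≠ 0 := by
  have : Fact (Nat.Prime 101) := ⟨by norm_num⟩
  intro hdet
  obtain ⟨v, hv, hAv⟩ := Matrix.exists_mulVec_eq_zero_iff.2 hdet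
  have hzero := eq_zero_of_solveRows (c := fun j => if hj : j < n then v ⟨j, hj⟩ else 0) n le_rfl
    hn _ (fun r hr => ?_) (by rintro t' rfl; rfl) h
  · exact hv (funext fun j => by simpa using hzero j j.2)
  · obtain ⟨k, rfl⟩ := List.mem_ofFn.1 hr
    exact rowRelation_packRow_ofFn (congrFun hAv k)

theorem det_map_natCast (R : Type*) [CommRing R] {n : Type*} [Fintype n] [DecidableEq n]
    (A : Matrix n n ℕ) :
    (A.map (Nat.cast : ℕ → R)).det = ((A.map (Nat.cast : ℕ → ℤ)).det : R) := by
  rw [← eq_intCast (Int.castRingHom R), RingHom.map_det]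
  congr 1
  ext i j
  simp

theorem det_map_natCast_ne_zero_of_charZero {K L : Type*} [CommRing K] [CommRing L] [CharZero L]
    {n : Type*} [Fintype n] [DecidableEq n] {A : Matrix n n ℕ}
    (h : (A.map (Nat.cast : ℕ → K)).det ≠ 0) : (A.map (Nat.cast : ℕ → L)).det ≠ 0 := by
  rw [det_map_natCast] at h ⊢
  exact fun h0 => h (by rw [Int.cast_eq_zero.1 h0, Int.cast_zero])

theorem eq_zero_of_solveRows_of_charZero {K : Type*} [Field K] [CharZero K] {n : ℕ}
    (hn : 100 + 10100 * n < packBase) (A : Matrix (Fin n) (Fin n) ℕ)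
    (h : solveRows n n (List.ofFn fun k => packRow (List.ofFn fun j => A k j % 101))
      (packBase ^ (n - 1)) = true)
    {c : Fin n → K} (hc : ∀ k, ∑ j, (A k j : K) * c j = 0) : c = 0 := by
  by_contra hne
  exact det_map_natCast_ne_zero_of_charZero (det_ne_zero_of_solveRows hn A h)
    (Matrix.exists_mulVec_eq_zero_iff.1 ⟨c, hne, funext hc⟩)

end Elimination

/-! ### Certificates for linear systems of forms -/

section Certificates

/-- The value of the monomial with exponents `as` at the point `xs`. -/
def monVal : List ℕ → List ℕ → ℕ
  | x :: xs, a :: as => Nat.mul (Nat.pow x a) (monVal xs as)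
  | _, _ => 1

/-- The value at the point `xs` of the derivative with respect to the `i`-th variable of the
monomial with exponents `as`. -/
def dmonVal : List ℕ → List ℕ → ℕ → ℕ
  | x :: xs, a :: as, 0 => Nat.mul (Nat.mul a (Nat.pow x (Nat.pred a))) (monVal xs as)
  | x :: xs, a :: as, i + 1 => Nat.mul (Nat.pow x a) (dmonVal xs as i)
  | _, _, _ => 0

/-- The exponents of all monomials of degree `d` in `V` variables. -/
def allMons : ℕ → ℕ → List (List ℕ)
  | 0, 0 => [[]]
  | 0, _ + 1 => []
  | V + 1, d => (List.range (d + 1)).flatMap fun a => (allMons V (d - a)).map (a :: ·)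

/-- The coefficient, at the monomial `l`, of the row indexed by `r = (j, i)`: the `i`-th derivative
at the `j`-th point if there is such a point, and the coefficient functional of the `i`-th entry of
`dr` otherwise. -/
def rowEntry (pts dr : List (List ℕ)) (r : ℕ × ℕ) (l : List ℕ) : ℕ :=
  match pts[r.1]? with
  | some x => dmonVal x l r.2
  | none => if dr[r.2]? = some l then 1 else 0

/-- The computation certifying that degree-`d` polynomials in `V` variables whose monomials satisfy
`pred`, singular at `pts` and without the monomials `dr`, vanish. The list `rows` chooses as many
conditions as there are monomials, in an order for which elimination needs no exchanges. -/
def certify (V d : ℕ) (pred : List ℕ → Bool) (pts dr : List (List ℕ))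
    (rows : List (ℕ × ℕ)) : Bool :=
  let mons := (allMons V d).filter pred
  (rows.length == mons.length && decide (100 + 10100 * mons.length < packBase) &&
    pts.all fun x => x.length == V) &&
  solveRows mons.length
    mons.length
    (rows.map fun r => packRow (mons.map fun l => Nat.mod (rowEntry pts dr r l) 101))
    (packBase ^ (mons.length - 1))

theorem monVal_cons (x a : ℕ) (xs as : List ℕ) :
    monVal (x :: xs) (a :: as) = x ^ a * monVal xs as := rfl

theorem dmonVal_zero (x a : ℕ) (xs as : List ℕ) :
    dmonVal (x :: xs) (a :: as) 0 = a * x ^ (a - 1) * monVal xs as := rfl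

theorem dmonVal_succ (x a : ℕ) (xs as : List ℕ) (i : ℕ) :
    dmonVal (x :: xs) (a :: as) (i + 1) = x ^ a * dmonVal xs as i := rfl

theorem monVal_ofFn {V : ℕ} (x a : Fin V → ℕ) :
    monVal (List.ofFn x) (List.ofFn a) = ∏ j, x j ^ a j := by
  induction V with
  | zero => simp [monVal]
  | succ V ih => rw [List.ofFn_succ, List.ofFn_succ, monVal_cons, ih, Fin.prod_univ_succ]

theorem dmonVal_ofFn {V : ℕ} (x a : Fin V → ℕ) (i : Fin V) :
    dmonVal (List.ofFn x) (List.ofFn a) i = a i * ∏ j, x j ^ (a j - if j = i then 1 else 0) := by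
  induction V with
  | zero => exact i.elim0
  | succ V ih =>
    rw [List.ofFn_succ, List.ofFn_succ, Fin.prod_univ_succ]
    refine Fin.cases ?_ (fun i => ?_) i
    · simp [dmonVal_zero, monVal_ofFn, Fin.succ_ne_zero, mul_assoc]
    · rw [Fin.val_succ, dmonVal_succ, ih]
      simp [(Fin.succ_ne_zero i).symm]
      ring

theorem dmonVal_of_le {x a : List ℕ} {i : ℕ} (h : a.length ≤ i) : dmonVal x a i = 0 := by
  induction a generalizing x i with
  | nil => cases x <;> simp [dmonVal]
  | cons b a ih =>
    cases x with
    | nil => simp [dmonVal]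
    | cons y x =>
      simp only [List.length_cons] at h
      obtain ⟨i, rfl⟩ : ∃ i', i = i' + 1 := ⟨i - 1, by omega⟩
      rw [dmonVal_succ, ih (by omega), mul_zero]

theorem mem_allMons {V d : ℕ} {l : List ℕ} :
    l ∈ allMons V d ↔ ∃ a : Fin V → ℕ, ∑ i, a i = d ∧ l = List.ofFn a := by
  induction V generalizing d l with
  | zero =>
    cases d with
    | zero => simp [allMons]
    | succ d => simp [allMons]
  | succ V ih =>
    rw [allMons, List.mem_flatMap]
    simp only [List.mem_map, List.mem_range, ih]
    constructor
    · rintro ⟨b, hb, _, ⟨a, ha, rfl⟩, rfl⟩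
      refine ⟨Fin.cons b a, ?_, by simp [List.ofFn_succ]⟩
      rw [Fin.sum_univ_succ]
      simp [ha]; omega
    · rintro ⟨a, ha, rfl⟩
      rw [Fin.sum_univ_succ] at ha
      exact ⟨a 0, by omega, _, ⟨fun i => a i.succ, by dsimp only; omega, rfl⟩, by
        rw [List.ofFn_succ]⟩

theorem nodup_allMons (V d : ℕ) : (allMons V d).Nodup := by
  induction V generalizing d with
  | zero => cases d <;> simp [allMons]
  | succ V ih =>
    rw [allMons, List.nodup_flatMap]
    refine ⟨fun a _ => (ih _).map (List.cons_injective), ?_⟩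
    refine (List.nodup_range).imp ?_
    intro a b hab l hl hl'
    simp only [List.mem_map] at hl hl'
    obtain ⟨_, _, rfl⟩ := hl
    obtain ⟨_, _, h⟩ := hl'
    exact hab (List.cons_eq_cons.1 h).1.symm

/-- The exponent vector with entries `l`. -/
noncomputable def listExp (V : ℕ) (l : List ℕ) : Fin V →₀ ℕ :=
  Finsupp.equivFunOnFinite.symm fun i => l.getD i 0

theorem listExp_ofFn {V : ℕ} (α : Fin V →₀ ℕ) : listExp V (List.ofFn α) = α := by
  ext i; simp [listExp]

theorem ofFn_listExp {V : ℕ} {l : List ℕ} (h : l.length = V) : List.ofFn (listExp V l) = l := by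
  subst h
  apply List.ext_getElem <;> simp [listExp]

theorem eq_sum_monomial_listExp {K : Type*} [CommSemiring K] {V : ℕ} {mons : List (List ℕ)}
    (hnodup : mons.Nodup) (hlen : ∀ l ∈ mons, l.length = V) {G : MvPolynomial (Fin V) K}
    (hG : ∀ α, coeff α G ≠ 0 → List.ofFn α ∈ mons) :
    G = ∑ j : Fin mons.length, monomial (listExp V mons[j]) (coeff (listExp V mons[j]) G) := by
  ext α
  simp only [coeff_sum, coeff_monomial]
  by_cases hα : coeff α G = 0
  · rw [hα, Finset.sum_eq_zero]
    intro j _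
    split_ifs with hj
    · rw [hj, hα]
    · rfl
  · obtain ⟨j, hj, hjα⟩ := List.getElem_of_mem (hG α hα)
    rw [Finset.sum_eq_single_of_mem ⟨j, hj⟩ (Finset.mem_univ _)]
    · simp [hjα, listExp_ofFn]
    · refine fun i _ hij => if_neg fun hiα => hij ?_
      have hmons : mons[i] = mons[j] := by
        rw [hjα, ← hiα]
        exact (ofFn_listExp (hlen _ (List.getElem_mem _))).symm
      exact Fin.ext (hnodup.getElem_inj_iff.1 hmons)

theorem eval_pderiv_monomial_listExp {K : Type*} [CommSemiring K] {V : ℕ} {x l : List ℕ}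
    (hx : x.length = V) (hl : l.length = V) (i : Fin V) (c : K) :
    eval (fun i : Fin V => (x.getD i 0 : K)) (pderiv i (monomial (listExp V l) c)) =
      dmonVal x l i * c := by
  have hval := dmonVal_ofFn (fun i : Fin V => x.getD i 0) (listExp V l) i
  have hofFn : (List.ofFn fun i : Fin V => x.getD i 0) = x := by
    apply List.ext_getElem <;> simp [hx]
  rw [ofFn_listExp hl, hofFn] at hval
  rw [hval, pderiv_monomial, eval_monomial, Finsupp.prod_fintype _ _ (by simp), mul_assoc,
    mul_comm]
  push_cast
  simp only [Pi.sub_apply, Finsupp.single_apply, eq_comm (a := i)]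

theorem sum_rowEntry_mul_coeff_eq_zero {K : Type*} [Field K] {V : ℕ} {mons : List (List ℕ)}
    (hnodup : mons.Nodup) (hlen : ∀ l ∈ mons, l.length = V) {pts dr : List (List ℕ)}
    (hpts : ∀ x ∈ pts, x.length = V) {E : Set (Fin V →₀ ℕ)} (hE : ∀ α ∈ E, List.ofFn α ∈ mons)
    {G : MvPolynomial (Fin V) K}
    (hG : G ∈ singularForms E fun (j : Fin pts.length) (i : Fin V) => ((pts[j].getD i 0 : ℕ) : K))
    (hdr : ∀ l ∈ dr, coeff (listExp V l) G = 0) (r : ℕ × ℕ) :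
    ∑ j : Fin mons.length, (rowEntry pts dr r mons[j] : K) * coeff (listExp V mons[j]) G = 0 := by
  rw [mem_singularForms] at hG
  have hsum := eq_sum_monomial_listExp hnodup hlen
    fun α hα => hE α (mem_restrictSupport_iff_coeff.1 hG.1 α hα)
  have hlen' : ∀ j : Fin mons.length, mons[j].length = V := fun j => hlen _ (List.getElem_mem _)
  unfold rowEntry
  split
  case h_1 x hx =>
    obtain ⟨hr, rfl⟩ := List.getElem?_eq_some_iff.1 hx
    by_cases hrV : r.2 < V
    · have hderiv := hG.2 ⟨r.1, hr⟩ ⟨r.2, hrV⟩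
      rw [hsum, map_sum, map_sum] at hderiv
      rw [← hderiv]
      exact Finset.sum_congr rfl fun j _ => (eval_pderiv_monomial_listExp
        (hpts _ (List.getElem_mem _)) (hlen' j) ⟨r.2, hrV⟩ _).symm
    · refine Finset.sum_eq_zero fun j _ => ?_
      rw [dmonVal_of_le (by rw [hlen']; omega), Nat.cast_zero, zero_mul]
  case h_2 =>
    refine Finset.sum_eq_zero fun j _ => ?_
    split_ifs with hj
    · rw [hdr _ (List.mem_of_getElem? hj), mul_zero]
    · rw [Nat.cast_zero, zero_mul]

theorem dimLE_of_certify {K : Type*} [Field K] [CharZero K] {V d : ℕ} {pred : List ℕ → Bool}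
    {pts dr : List (List ℕ)} {rows : List (ℕ × ℕ)} (h : certify V d pred pts dr rows = true)
    {E : Set (Fin V →₀ ℕ)} (hE : ∀ α ∈ E, α.degree = d ∧ pred (List.ofFn α) = true) :
    DimLE (singularForms E fun (j : Fin pts.length) (i : Fin V) =>
      ((pts[j].getD i 0 : ℕ) : K)) dr.length := by
  simp only [certify, Bool.and_eq_true, beq_iff_eq, decide_eq_true_eq, List.all_eq_true] at h
  obtain ⟨⟨⟨hrows, hn⟩, hpts⟩, hsolve⟩ := h
  have hnodup : ((allMons V d).filter pred).Nodup := (nodup_allMons V d).filter _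
  have hlen : ∀ l ∈ (allMons V d).filter pred, l.length = V := by
    intro l hl
    obtain ⟨a, _, rfl⟩ := mem_allMons.1 (List.mem_filter.1 hl).1
    exact List.length_ofFn
  have hmem : ∀ α ∈ E, List.ofFn α ∈ (allMons V d).filter pred := fun α hα =>
    List.mem_filter.2 ⟨mem_allMons.2 ⟨α, by rw [← (hE α hα).1, Finsupp.degree_eq_sum], rfl⟩,
      (hE α hα).2⟩
  generalize (allMons V d).filter pred = mons at *
  have hdim := DimLE.of_forall_eq_zero (D := singularForms E fun (j : Fin pts.length)
    (i : Fin V) => ((pts[j].getD i 0 : ℕ) : K))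
    (fun t : Fin dr.length => lcoeff K (listExp V dr[t])) fun G hG hdr => ?_
  · simpa using hdim
  have hcoeff : (fun j : Fin mons.length => coeff (listExp V mons[j]) G) = 0 := by
    refine eq_zero_of_solveRows_of_charZero hn
      (fun k j => rowEntry pts dr (rows[k.1]'(by omega)) mons[j]) ?_
      fun k => sum_rowEntry_mul_coeff_eq_zero hnodup hlen hpts hmem hG (fun l hl => ?_) _
    · convert hsolve using 2
      refine List.ext_getElem (by simp [hrows]) fun k _ _ => ?_
      simp only [List.getElem_ofFn, List.getElem_map]
      refine congrArg packRow (List.ext_getElem (by simp) fun i _ _ => ?_)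
      simp only [List.getElem_ofFn, List.getElem_map]
      rfl
    · obtain ⟨t, ht, rfl⟩ := List.getElem_of_mem hl
      exact hdr ⟨t, ht⟩
  rw [eq_sum_monomial_listExp hnodup hlen
    fun α hα => hmem α (mem_restrictSupport_iff_coeff.1 (mem_singularForms.1 hG).1 α hα)]
  exact Finset.sum_eq_zero fun j _ => by rw [congrFun hcoeff j, Pi.zero_apply, map_zero]

section Relabel
variable {K : Type*} [Field K] {σ τ ι : Type*}

theorem exists_rename_eq_of_mem_restrictSupport (e : τ ↪ σ) {E : Set (σ →₀ ℕ)}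
    (hE : ∀ α ∈ E, ∃ β : τ →₀ ℕ, α = β.mapDomain e) {G : MvPolynomial σ K}
    (hG : G ∈ restrictSupport K E) : ∃ H : MvPolynomial τ K, rename e H = G := by
  refine exists_rename_eq_of_vars_subset_range G e e.injective fun s hs => ?_
  obtain ⟨α, hα, hsα⟩ := (mem_vars_iff_mem_support s).1 (Finset.mem_coe.1 hs)
  obtain ⟨β, rfl⟩ := hE α (mem_restrictSupport_iff_coeff.1 hG α (by simpa using hα))
  by_contra hrange
  exact Finsupp.mem_support_iff.1 hsα (Finsupp.mapDomain_of_notMem_range _ _ hrange)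

variable [DecidableEq σ]

theorem mem_singularForms_of_rename {e : τ ↪ σ} {E : Set (τ →₀ ℕ)} {E' : Set (σ →₀ ℕ)}
    (hE : ∀ α' ∈ E', ∃ α ∈ E, α' = α.mapDomain e) {M : ι → Finset σ} {p : ι → τ → K}
    (hM : ∀ j i, e i ∈ M j → p j i = 0) {H : MvPolynomial τ K}
    (hH : rename e H ∈ singularForms E' fun j => mask (M j) (Function.extend e (p j) 0)) :
    H ∈ singularForms E p := by
  rw [mem_singularForms] at hH ⊢
  refine ⟨mem_restrictSupport_iff_coeff.2 fun α hα => ?_, fun j i => ?_⟩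
  · rw [← coeff_rename_mapDomain e e.injective] at hα
    obtain ⟨β, hβ, hαβ⟩ := hE _ (mem_restrictSupport_iff_coeff.1 hH.1 _ hα)
    rwa [Finsupp.mapDomain_injective e.injective hαβ]
  · have hpoint : mask (M j) (Function.extend e (p j) 0) ∘ e = p j := by
      ext s
      by_cases hs : e s ∈ M j
      · rw [Function.comp_apply, mask_of_mem hs, hM j s hs]
      · rw [Function.comp_apply, mask_of_notMem hs, e.injective.extend_apply]
    simpa only [pderiv_rename e.injective, eval_rename, hpoint] using hH.2 j (e i)

theorem DimLE.singularBound_mapDomain (e : τ ↪ σ) {E : Set (τ →₀ ℕ)} {E' : Set (σ →₀ ℕ)}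
    {M : ι → Finset σ} {m : ℕ} {p : ι → τ → K} (h : DimLE (singularForms E p) m)
    (hE : ∀ α' ∈ E', ∃ α ∈ E, α' = α.mapDomain e) (hM : ∀ j i, e i ∈ M j → p j i = 0) :
    SingularBound K E' M m := by
  have hrename : ∀ G ∈ restrictSupport K E', ∃ H : MvPolynomial τ K, rename e H = G :=
    fun G => exists_rename_eq_of_mem_restrictSupport e fun α hα => (hE α hα).imp fun _ => And.right
  refine ⟨fun j => Function.extend e (p j) 0, DimLE.of_injOn h
    (killCompl e.injective).toLinearMap (fun G hG => ?_) (fun G hG hG0 => ?_)⟩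
  all_goals
    obtain ⟨H, rfl⟩ := hrename G (mem_singularForms.1 hG).1
    rw [AlgHom.toLinearMap_apply, killCompl_rename_app] at *
  · exact mem_singularForms_of_rename hE hM hG
  · rw [hG0, map_zero]

end Relabel

end Certificates

/-! ### Certificates for blocks of variables -/

section Blocks
variable {σ : Type*}

theorem getElem_mem_left_iff_of_eq_append {l l₁ l₂ : List σ} (hl : l = l₁ ++ l₂) (h : l.Nodup)
    {i : ℕ} (hi : i < l.length) : l[i] ∈ l₁ ↔ i < l₁.length := by
  subst hl
  refine ⟨fun hmem => ?_, fun hlt => by rw [List.getElem_append_left hlt]; exact List.getElem_mem _⟩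
  by_contra! hle
  rw [List.getElem_append_right hle] at hmem
  exact List.disjoint_of_nodup_append h hmem (List.getElem_mem _)

theorem getElem_mem_right_iff_of_eq_append {l l₁ l₂ : List σ} (hl : l = l₁ ++ l₂) (h : l.Nodup)
    {i : ℕ} (hi : i < l.length) : l[i] ∈ l₂ ↔ l₁.length ≤ i := by
  rw [← not_lt, ← getElem_mem_left_iff_of_eq_append hl h hi]
  subst hl
  exact ⟨fun h₂ h₁ => List.disjoint_of_nodup_append h h₁ h₂, fun h₁ =>
    (List.mem_append.1 (List.getElem_mem hi)).resolve_left h₁⟩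

/-- The embedding `e` enumerates first the block `X`, of size `a`, then the block `Y`, of size `b`,
and finally the block `W`. -/
structure IsBlockEnum (X Y W : Finset σ) (a b : ℕ) {V : ℕ} (e : Fin V ↪ σ) : Prop where
  mem_left : ∀ i, e i ∈ X ↔ i.1 < a
  mem_middle : ∀ i, e i ∈ Y ↔ a ≤ i.1 ∧ i.1 < a + b
  mem_right : ∀ i, e i ∈ W ↔ a + b ≤ i.1
  exists_eq : ∀ s, s ∈ X ∨ s ∈ Y ∨ s ∈ W → ∃ i, e i = s

theorem exists_isBlockEnum {X Y W : Finset σ} (hXY : Disjoint X Y) (hXW : Disjoint X W)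
    (hYW : Disjoint Y W) {V : ℕ} (hV : X.card + Y.card + W.card = V) :
    ∃ e : Fin V ↪ σ, IsBlockEnum X Y W X.card Y.card e := by
  let L : List σ := X.toList ++ (Y.toList ++ W.toList)
  have hL : L.Nodup := by
    simp only [L, List.nodup_append', Finset.nodup_toList, List.disjoint_append_right, true_and]
    simp only [List.disjoint_left, Finset.mem_toList]
    exact ⟨fun {_} h => Finset.disjoint_left.1 hYW h, fun {_} h => Finset.disjoint_left.1 hXY h,
      fun {_} h => Finset.disjoint_left.1 hXW h⟩
  have hlen : L.length = V := by simp [L, ← hV, add_assoc]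
  subst hlen
  have hX (i : Fin L.length) : L[i] ∈ X ↔ i.1 < X.card := by
    simpa using getElem_mem_left_iff_of_eq_append rfl hL i.2
  have hW (i : Fin L.length) : L[i] ∈ W ↔ X.card + Y.card ≤ i.1 := by
    simpa using getElem_mem_right_iff_of_eq_append (List.append_assoc _ _ W.toList).symm hL i.2
  refine ⟨⟨L.get, hL.injective_get⟩, hX, fun i => ?_, hW, fun s hs => ?_⟩
  · have hYW' : L[i] ∈ Y ∨ L[i] ∈ W ↔ X.card ≤ i.1 := by
      simpa using getElem_mem_right_iff_of_eq_append rfl hL i.2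
    have hdisj : L[i] ∈ Y → L[i] ∉ W := fun h => Finset.disjoint_left.1 hYW h
    rw [hW] at hYW' hdisj
    change L[i] ∈ Y ↔ _
    constructor
    · exact fun h => ⟨hYW'.1 (.inl h), not_le.1 (hdisj h)⟩
    · exact fun h => (hYW'.2 h.1).resolve_right (not_le.2 h.2)
  · exact List.mem_iff_get.1 (by simpa [L] using hs)

/-- Exponents of degree `d` in the variables `S` which involve each of the blocks `X`, `Y`, `Z` that
is selected by the corresponding flag. -/
def blockExponents (S : Finset σ) (d : ℕ) (fX : Bool) (X : Finset σ) (fY : Bool) (Y : Finset σ)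
    (fZ : Bool) (Z : Finset σ) : Set (σ →₀ ℕ) :=
  {α ∈ formExponents S d | (fX = true → ∃ i ∈ X, α i ≠ 0) ∧ (fY = true → ∃ i ∈ Y, α i ≠ 0) ∧
    (fZ = true → ∃ i ∈ Z, α i ≠ 0)}

theorem finite_blockExponents [Finite σ] (S : Finset σ) (d : ℕ) (fX : Bool) (X : Finset σ)
    (fY : Bool) (Y : Finset σ) (fZ : Bool) (Z : Finset σ) :
    (blockExponents S d fX X fY Y fZ Z).Finite :=
  (finite_formExponents S d).subset (Set.sep_subset _ _)

/-- The list of exponents `l` involves one of the variables with index in `[a, b)`. -/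
def involves (a b : ℕ) (l : List ℕ) : Bool := ((l.drop a).take (b - a)).any fun x => !Nat.beq x 0

theorem involves_ofFn {V a b : ℕ} {α : Fin V → ℕ} {i : Fin V} (ha : a ≤ i.1) (hb : i.1 < b)
    (h : α i ≠ 0) : involves a b (List.ofFn α) = true := by
  rw [involves, List.any_eq_true]
  refine ⟨α i, List.mem_iff_getElem.2 ⟨i - a, by simp; omega, ?_⟩, ?_⟩
  · simp only [List.getElem_take, List.getElem_drop, List.getElem_ofFn, Nat.add_sub_cancel' ha]
  · rw [Bool.not_eq_true', ← Bool.not_eq_true, Nat.beq_eq]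
    exact h

/-- The points of the list vanish on the coordinates with index in `[a, b)`. -/
def vanishOn (a b : ℕ) (pts : List (List ℕ)) : Bool :=
  pts.all fun x => (List.range (b - a)).all fun i => Nat.beq (x.getD (a + i) 0) 0

theorem getD_eq_zero_of_vanishOn {a b : ℕ} {pts : List (List ℕ)} (h : vanishOn a b pts = true)
    {x : List ℕ} (hx : x ∈ pts) {i : ℕ} (ha : a ≤ i) (hb : i < b) : x.getD i 0 = 0 := by
  simp only [vanishOn, List.all_eq_true, List.mem_range, Nat.beq_eq] at h
  have hi := h x hx (i - a) (by omega)
  rwa [Nat.add_sub_cancel' ha] at hi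

/-- The selection by flags in `blockExponents`, on lists of exponents in `V` variables of which the
first `a` form the first block and the next `b` form the second one. -/
def involvesBlocks (a b V : ℕ) (fX fY fW : Bool) (l : List ℕ) : Bool :=
  (!fX || involves 0 a l) && (!fY || involves a (a + b) l) && (!fW || involves (a + b) V l)

theorem degree_eq_and_involvesBlocks_of_mapDomain_mem {S X Y W : Finset σ} {a b V d : ℕ}
    {e : Fin V ↪ σ} (he : IsBlockEnum X Y W a b e) {fX fY fW : Bool} {α : Fin V →₀ ℕ}
    (hα : α.mapDomain e ∈ blockExponents S d fX X fY Y fW W) :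
    α.degree = d ∧ involvesBlocks a b V fX fY fW (List.ofFn α) = true := by
  obtain ⟨hform, hX, hY, hW⟩ := hα
  have hpull : ∀ {s}, α.mapDomain e s ≠ 0 → ∃ i, e i = s ∧ α i ≠ 0 := by
    intro s hs
    obtain ⟨i, rfl⟩ : s ∈ Set.range e :=
      not_imp_comm.1 (Finsupp.mapDomain_of_notMem_range _ _) hs
    exact ⟨i, rfl, by rwa [Finsupp.mapDomain_apply e.injective] at hs⟩
  refine ⟨by rw [← hform.2, Finsupp.degree_mapDomain], ?_⟩
  simp only [involvesBlocks, Bool.and_eq_true, Bool.or_eq_true, Bool.not_eq_true',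
    ← Bool.not_eq_true, ← imp_iff_not_or]
  refine ⟨⟨fun hf => ?_, fun hf => ?_⟩, fun hf => ?_⟩
  · obtain ⟨s, hs, hαs⟩ := hX hf
    obtain ⟨i, rfl, hi⟩ := hpull hαs
    exact involves_ofFn (Nat.zero_le _) ((he.mem_left i).1 hs) hi
  · obtain ⟨s, hs, hαs⟩ := hY hf
    obtain ⟨i, rfl, hi⟩ := hpull hαs
    exact involves_ofFn ((he.mem_middle i).1 hs).1 ((he.mem_middle i).1 hs).2 hi
  · obtain ⟨s, hs, hαs⟩ := hW hf
    obtain ⟨i, rfl, hi⟩ := hpull hαs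
    exact involves_ofFn ((he.mem_right i).1 hs) i.2 hi

variable {K : Type*} [Field K]

theorem singularForms_le_of_forall_exists_eq {ι κ : Type*} (E : Set (σ →₀ ℕ)) {p : ι → σ → K}
    {q : κ → σ → K} (h : ∀ j, ∃ i, p i = q j) : singularForms E p ≤ singularForms E q := by
  intro G hG
  rw [mem_singularForms] at hG ⊢
  refine ⟨hG.1, fun j => ?_⟩
  obtain ⟨i, hi⟩ := h j
  exact hi ▸ hG.2 i

variable [DecidableEq σ]

theorem exists_mapDomain_mem_of_mem_blockExponents {X Y W : Finset σ} {a b V d : ℕ}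
    {e : Fin V ↪ σ} (he : IsBlockEnum X Y W a b e) {fX fY fW : Bool} {α : σ →₀ ℕ}
    (hα : α ∈ blockExponents (X ∪ (Y ∪ W)) d fX X fY Y fW W) :
    ∃ β ∈ {β : Fin V →₀ ℕ | β.mapDomain e ∈ blockExponents (X ∪ (Y ∪ W)) d fX X fY Y fW W},
      α = β.mapDomain e := by
  have hrange : (α.support : Set σ) ⊆ Set.range e := fun s hs =>
    he.exists_eq s (by simpa only [Finset.mem_union] using hα.1.1 s (by simpa using hs))
  have hmap := Finsupp.mapDomain_comapDomain e e.injective α hrange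
  exact ⟨α.comapDomain e e.injective.injOn, by rwa [Set.mem_ofPred_eq, hmap], hmap.symm⟩

variable (K) in
/-- For `n₁`, `n₂`, `n₃` suitable points on the coordinate subspaces given by the vanishing of the
variables in `X`, `Y`, `Z`, the system of polynomials with exponents in `E` singular at these points
has dimension at most `m`. -/
def SingularBound₃ (E : Set (σ →₀ ℕ)) (n₁ : ℕ) (X : Finset σ) (n₂ : ℕ) (Y : Finset σ) (n₃ : ℕ)
    (Z : Finset σ) (m : ℕ) : Prop :=
  SingularBound K E
    (Sum.elim (fun _ : Fin n₁ => X) (Sum.elim (fun _ : Fin n₂ => Y) fun _ : Fin n₃ => Z)) m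

/-- The computation certifying a `SingularBound₃` for block sizes `a`, `b` and `V - a - b`: the
points of the lists `pX`, `pY`, `pZ` lie on the coordinate subspaces of the first, second and third
block. If the flag `free` is set, the points of the last list are unconstrained instead. -/
def certifyBlocks (a b V d : ℕ) (fX fY fW free : Bool) (pX pY pZ dr : List (List ℕ))
    (rows : List (ℕ × ℕ)) : Bool :=
  (vanishOn 0 a pX && vanishOn a (a + b) pY && (free || vanishOn (a + b) V pZ)) &&
    certify V d (involvesBlocks a b V fX fY fW) (pX ++ (pY ++ pZ)) dr rows

theorem singularBound₃_of_certifyBlocks [CharZero K] {X Y W : Finset σ} (hXY : Disjoint X Y)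
    (hXW : Disjoint X W) (hYW : Disjoint Y W) {a b c V d : ℕ} (ha : X.card = a) (hb : Y.card = b)
    (hc : W.card = c) (hV : a + b + c = V) {fX fY fW free : Bool} {pX pY pZ dr : List (List ℕ)}
    {rows : List (ℕ × ℕ)} (h : certifyBlocks a b V d fX fY fW free pX pY pZ dr rows = true) :
    SingularBound₃ K (blockExponents (X ∪ (Y ∪ W)) d fX X fY Y fW W) pX.length X pY.length Y
      pZ.length (if free then ∅ else W) dr.length := by
  simp only [certifyBlocks, Bool.and_eq_true, Bool.or_eq_true] at h
  obtain ⟨⟨⟨hpX, hpY⟩, hpZ⟩, hcert⟩ := h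
  subst ha hb hc
  obtain ⟨e, he⟩ := exists_isBlockEnum hXY hXW hYW hV
  have hdim := dimLE_of_certify (K := K) hcert
    fun α hα => degree_eq_and_involvesBlocks_of_mapDomain_mem (S := X ∪ (Y ∪ W)) he hα
  let pts : Fin pX.length ⊕ (Fin pY.length ⊕ Fin pZ.length) → List ℕ :=
    Sum.elim (fun j => pX[j]) (Sum.elim (fun j => pY[j]) fun j => pZ[j])
  have hpts : ∀ x ∈ pX ++ (pY ++ pZ), ∃ j, pts j = x := by
    intro x hx
    rw [List.mem_append, List.mem_append, List.mem_iff_get, List.mem_iff_get,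
      List.mem_iff_get] at hx
    obtain ⟨k, rfl⟩ | ⟨k, rfl⟩ | ⟨k, rfl⟩ := hx
    exacts [⟨.inl k, rfl⟩, ⟨.inr (.inl k), rfl⟩, ⟨.inr (.inr k), rfl⟩]
  refine DimLE.singularBound_mapDomain e (p := fun j i => ((pts j).getD i 0 : ℕ))
    (hdim.mono (singularForms_le_of_forall_exists_eq _ fun j => ?_) le_rfl)
    (fun α => exists_mapDomain_mem_of_mem_blockExponents he) ?_
  · obtain ⟨i, hi⟩ := hpts _ (List.getElem_mem j.2)
    exact ⟨i, by simp only [hi, Fin.getElem_fin]⟩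
  · rintro (j | j | j) i hi <;> refine Nat.cast_eq_zero.2 ?_
    · exact getD_eq_zero_of_vanishOn hpX (List.getElem_mem _) (Nat.zero_le _)
        ((he.mem_left i).1 hi)
    · exact getD_eq_zero_of_vanishOn hpY (List.getElem_mem _) ((he.mem_middle i).1 hi).1
        ((he.mem_middle i).1 hi).2
    · cases free
      · exact getD_eq_zero_of_vanishOn (by simpa using hpZ) (List.getElem_mem _)
          ((he.mem_right i).1 (by simpa using hi)) i.2
      · simp at hi

end Blocks

/-! ### The initial cases -/

section InitialCases
variable {K : Type*} [Field K] {σ : Type*}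

theorem doublePointBound_of_certify [CharZero K] {S : Finset σ} {n d : ℕ} (hS : S.card = n)
    {pts dr : List (List ℕ)} {rows : List (ℕ × ℕ)}
    (h : certify n d (fun _ => true) pts dr rows = true) :
    DoublePointBound K S d pts.length dr.length := by
  classical
  let e : Fin n ↪ σ := (S.equivFinOfCardEq hS).symm.toEmbedding.trans (.subtype _)
  have he : Set.range e = S := by
    simp [e, Function.Embedding.trans, Set.range_comp]
  refine doublePointBound_iff_singularBound.2 (DimLE.singularBound_mapDomain e
    (dimLE_of_certify h (E := {α | α.degree = d}) fun α hα => ⟨hα, rfl⟩) (fun α hα => ?_)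
    fun _ _ hi => absurd hi (Finset.notMem_empty _))
  have hmap : (α.comapDomain e e.injective.injOn).mapDomain e = α :=
    Finsupp.mapDomain_comapDomain e e.injective α fun s hs =>
      he ▸ hα.1 s (Finsupp.mem_support_iff.1 hs)
  exact ⟨_, by rw [Set.mem_ofPred_eq, ← hα.2, ← Finsupp.degree_mapDomain e, hmap], hmap.symm⟩

theorem doublePointBound_1_3_1 [CharZero K] {S : Finset σ} (hS : S.card = 1) :
    DoublePointBound K S 3 1 0 :=
  doublePointBound_of_certify hS
    (pts := [[1]])
    (dr := [])
    (rows := [(0, 0)])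
    (by decide +kernel)

theorem doublePointBound_2_3_2 [CharZero K] {S : Finset σ} (hS : S.card = 2) :
    DoublePointBound K S 3 2 0 :=
  doublePointBound_of_certify hS
    (pts := [[1, 0], [0, 1]])
    (dr := [])
    (rows := [(0, 0), (0, 1), (1, 0), (1, 1)])
    (by decide +kernel)

theorem doublePointBound_3_3_4 [CharZero K] {S : Finset σ} (hS : S.card = 3) :
    DoublePointBound K S 3 4 0 :=
  doublePointBound_of_certify hS
    (pts := [[1, 0, 0], [0, 1, 0], [0, 0, 1], [3, 1, 0]])
    (dr := [])
    (rows := [(0, 0), (0, 1), (0, 2), (1, 0), (3, 2), (2, 0), (1, 1), (1, 2), (2, 1), (2, 2)])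
    (by decide +kernel)

theorem doublePointBound_5_3_6 [CharZero K] {S : Finset σ} (hS : S.card = 5) :
    DoublePointBound K S 3 6 5 :=
  doublePointBound_of_certify hS
    (pts := [[1, 0, 0, 0, 0], [0, 1, 0, 0, 0], [0, 0, 1, 0, 0], [0, 0, 0, 1, 0], [0, 0, 0, 0, 1],
      [2, 1, 1, 0, 2]])
    (dr := [[1, 0, 1, 1, 0], [1, 0, 0, 1, 1], [0, 1, 1, 1, 0], [0, 1, 0, 1, 1], [0, 0, 1, 1, 1]])
    (rows := [(0, 0), (0, 1), (0, 2), (0, 3), (0, 4), (1, 0), (5, 0), (5, 3), (5, 2), (2, 0),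
      (6, 0), (5, 1), (3, 0), (6, 1), (4, 0), (1, 1), (1, 2), (1, 3), (1, 4), (2, 1), (6, 2),
      (5, 4), (3, 1), (6, 3), (4, 1), (2, 2), (2, 3), (2, 4), (3, 2), (6, 4), (4, 2), (3, 3),
      (3, 4), (4, 3), (4, 4)])
    (by decide +kernel)

theorem doublePointBound_5_3_7 [CharZero K] {S : Finset σ} (hS : S.card = 5) :
    DoublePointBound K S 3 7 1 :=
  doublePointBound_of_certify hS
    (pts := [[1, 0, 0, 0, 0], [0, 1, 0, 0, 0], [0, 0, 1, 0, 0], [0, 0, 0, 1, 0], [0, 0, 0, 0, 1],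
      [2, 1, 2, 2, 3], [1, 2, 3, 1, 2]])
    (dr := [[0, 0, 1, 1, 1]])
    (rows := [(0, 0), (0, 1), (0, 2), (0, 3), (0, 4), (1, 0), (5, 0), (5, 2), (5, 3), (2, 0),
      (5, 1), (6, 0), (3, 0), (6, 1), (4, 0), (1, 1), (1, 2), (1, 3), (1, 4), (2, 1), (5, 4),
      (6, 2), (3, 1), (6, 3), (4, 1), (2, 2), (2, 3), (2, 4), (3, 2), (7, 0), (4, 2), (3, 3),
      (3, 4), (4, 3), (4, 4)])
    (by decide +kernel)

theorem doublePointBound_5_3_8 [CharZero K] {S : Finset σ} (hS : S.card = 5) :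
    DoublePointBound K S 3 8 0 :=
  doublePointBound_of_certify hS
    (pts := [[1, 0, 0, 0, 0], [0, 1, 0, 0, 0], [0, 0, 1, 0, 0], [0, 0, 0, 1, 0], [0, 0, 0, 0, 1],
      [1, 2, 2, 0, 1], [1, 3, 1, 2, 2], [3, 1, 2, 0, 0]])
    (dr := [])
    (rows := [(0, 0), (0, 1), (0, 2), (0, 3), (0, 4), (1, 0), (5, 0), (5, 3), (5, 2), (2, 0),
      (6, 0), (5, 1), (3, 0), (6, 1), (4, 0), (1, 1), (1, 2), (1, 3), (1, 4), (2, 1), (6, 2),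
      (5, 4), (3, 1), (6, 3), (4, 1), (2, 2), (2, 3), (2, 4), (3, 2), (7, 3), (4, 2), (3, 3),
      (3, 4), (4, 3), (4, 4)])
    (by decide +kernel)

theorem doublePointBound_8_3_15 [CharZero K] {S : Finset σ} (hS : S.card = 8) :
    DoublePointBound K S 3 15 0 :=
  doublePointBound_of_certify hS
    (pts := [[1, 0, 0, 0, 0, 0, 0, 0], [0, 1, 0, 0, 0, 0, 0, 0], [0, 0, 1, 0, 0, 0, 0, 0],
      [0, 0, 0, 1, 0, 0, 0, 0], [0, 0, 0, 0, 1, 0, 0, 0], [0, 0, 0, 0, 0, 1, 0, 0],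
      [0, 0, 0, 0, 0, 0, 1, 0], [0, 0, 0, 0, 0, 0, 0, 1], [2, 2, 2, 3, 2, 0, 2, 2],
      [2, 0, 2, 2, 3, 2, 0, 3], [0, 3, 0, 2, 3, 0, 1, 0], [2, 1, 3, 0, 1, 2, 0, 0],
      [2, 3, 0, 3, 1, 3, 2, 2], [1, 2, 1, 1, 3, 1, 0, 0], [3, 0, 2, 2, 0, 3, 3, 0]])
    (dr := [])
    (rows := [(0, 0), (0, 1), (0, 2), (0, 3), (0, 4), (0, 5), (0, 6), (0, 7), (1, 0), (8, 0),
      (8, 2), (8, 3), (8, 5), (8, 4), (8, 6), (2, 0), (8, 1), (9, 0), (9, 3), (9, 4), (9, 5),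
      (3, 0), (9, 1), (9, 2), (10, 0), (11, 0), (4, 0), (11, 1), (11, 2), (11, 3), (5, 0), (11, 4),
      (12, 0), (6, 0), (12, 1), (7, 0), (1, 1), (1, 2), (1, 3), (1, 4), (1, 5), (1, 6), (1, 7),
      (2, 1), (8, 7), (10, 2), (11, 5), (11, 6), (12, 2), (3, 1), (9, 6), (10, 1), (10, 4),
      (10, 5), (4, 1), (10, 7), (10, 3), (11, 7), (5, 1), (12, 3), (12, 4), (6, 1), (12, 5),
      (7, 1), (2, 2), (2, 3), (2, 4), (2, 5), (2, 6), (2, 7), (3, 2), (9, 7), (12, 6), (13, 0),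
      (12, 7), (4, 2), (13, 1), (13, 2), (13, 3), (5, 2), (13, 4), (13, 5), (6, 2), (14, 0),
      (7, 2), (3, 3), (3, 4), (3, 5), (3, 6), (3, 7), (4, 3), (13, 6), (10, 6), (13, 7), (5, 3),
      (14, 1), (14, 2), (6, 3), (14, 3), (7, 3), (4, 4), (4, 5), (4, 6), (4, 7), (5, 4), (14, 4),
      (14, 5), (6, 4), (14, 6), (7, 4), (5, 5), (5, 6), (5, 7), (6, 5), (14, 7), (7, 5), (6, 6),
      (6, 7), (7, 6), (7, 7)])
    (by decide +kernel)

theorem doublePointBound_3_4_4 [CharZero K] {S : Finset σ} (hS : S.card = 3) :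
    DoublePointBound K S 4 4 3 :=
  doublePointBound_of_certify hS
    (pts := [[1, 0, 0], [0, 1, 0], [0, 0, 1], [1, 2, 2]])
    (dr := [[2, 0, 2], [1, 1, 2], [0, 2, 2]])
    (rows := [(0, 0), (0, 1), (0, 2), (3, 0), (3, 1), (4, 0), (1, 0), (3, 2), (4, 1), (2, 0),
      (1, 1), (1, 2), (4, 2), (2, 1), (2, 2)])
    (by decide +kernel)

theorem doublePointBound_3_4_5 [CharZero K] {S : Finset σ} (hS : S.card = 3) :
    DoublePointBound K S 4 5 1 :=
  doublePointBound_of_certify hS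
    (pts := [[1, 0, 0], [0, 1, 0], [0, 0, 1], [3, 1, 3], [1, 3, 1]])
    (dr := [[0, 2, 2]])
    (rows := [(0, 0), (0, 1), (0, 2), (3, 0), (3, 1), (4, 0), (1, 0), (3, 2), (4, 1), (2, 0),
      (1, 1), (1, 2), (5, 0), (2, 1), (2, 2)])
    (by decide +kernel)

theorem doublePointBound_3_4_6 [CharZero K] {S : Finset σ} (hS : S.card = 3) :
    DoublePointBound K S 4 6 0 :=
  doublePointBound_of_certify hS
    (pts := [[1, 0, 0], [0, 1, 0], [0, 0, 1], [0, 2, 2], [1, 3, 2], [1, 3, 3]])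
    (dr := [])
    (rows := [(0, 0), (0, 1), (0, 2), (4, 0), (4, 1), (5, 0), (1, 0), (3, 0), (4, 2), (2, 0),
      (1, 1), (1, 2), (3, 1), (2, 1), (2, 2)])
    (by decide +kernel)

theorem doublePointBound_4_4_8 [CharZero K] {S : Finset σ} (hS : S.card = 4) :
    DoublePointBound K S 4 8 3 :=
  doublePointBound_of_certify hS
    (pts := [[1, 0, 0, 0], [0, 1, 0, 0], [0, 0, 1, 0], [0, 0, 0, 1], [1, 3, 2, 1], [2, 3, 2, 3],
      [1, 3, 0, 2], [2, 1, 2, 2]])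
    (dr := [[0, 2, 0, 2], [0, 1, 1, 2], [0, 0, 2, 2]])
    (rows := [(0, 0), (0, 1), (0, 2), (0, 3), (4, 0), (4, 1), (4, 2), (6, 0), (5, 1), (5, 0),
      (1, 0), (4, 3), (5, 2), (6, 1), (6, 3), (5, 3), (2, 0), (6, 2), (7, 0), (3, 0), (1, 1),
      (1, 2), (1, 3), (7, 1), (7, 2), (8, 0), (2, 1), (7, 3), (8, 1), (3, 1), (2, 2), (2, 3),
      (8, 2), (3, 2), (3, 3)])
    (by decide +kernel)

theorem doublePointBound_4_4_9 [CharZero K] {S : Finset σ} (hS : S.card = 4) :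
    DoublePointBound K S 4 9 1 :=
  doublePointBound_of_certify hS
    (pts := [[1, 0, 0, 0], [0, 1, 0, 0], [0, 0, 1, 0], [0, 0, 0, 1], [1, 1, 1, 3], [2, 1, 1, 3],
      [1, 0, 2, 1], [3, 1, 0, 3], [0, 0, 2, 3]])
    (dr := [[0, 2, 0, 2]])
    (rows := [(0, 0), (0, 1), (0, 2), (0, 3), (4, 0), (4, 1), (4, 2), (6, 0), (6, 1), (7, 0),
      (1, 0), (4, 3), (5, 2), (5, 1), (6, 2), (7, 1), (2, 0), (6, 3), (7, 2), (3, 0), (1, 1),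
      (1, 2), (1, 3), (5, 0), (7, 3), (9, 0), (2, 1), (8, 0), (8, 1), (3, 1), (2, 2), (2, 3),
      (8, 2), (3, 2), (3, 3)])
    (by decide +kernel)

theorem doublePointBound_4_4_10 [CharZero K] {S : Finset σ} (hS : S.card = 4) :
    DoublePointBound K S 4 10 0 :=
  doublePointBound_of_certify hS
    (pts := [[1, 0, 0, 0], [0, 1, 0, 0], [0, 0, 1, 0], [0, 0, 0, 1], [1, 1, 3, 3], [0, 3, 3, 1],
      [3, 1, 3, 1], [0, 1, 2, 3], [3, 2, 3, 2], [3, 3, 0, 1]])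
    (dr := [])
    (rows := [(0, 0), (0, 1), (0, 2), (0, 3), (4, 0), (4, 1), (4, 2), (8, 0), (6, 1), (6, 0),
      (1, 0), (4, 3), (5, 0), (6, 2), (7, 0), (6, 3), (2, 0), (8, 1), (8, 2), (3, 0), (1, 1),
      (1, 2), (1, 3), (5, 1), (5, 2), (7, 1), (2, 1), (5, 3), (7, 2), (3, 1), (2, 2), (2, 3),
      (9, 0), (3, 2), (3, 3)])
    (by decide +kernel)

theorem doublePointBound_5_4_13 [CharZero K] {S : Finset σ} (hS : S.card = 5) :
    DoublePointBound K S 4 13 5 :=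
  doublePointBound_of_certify hS
    (pts := [[1, 0, 0, 0, 0], [0, 1, 0, 0, 0], [0, 0, 1, 0, 0], [0, 0, 0, 1, 0], [0, 0, 0, 0, 1],
      [2, 3, 0, 0, 3], [2, 1, 3, 1, 3], [2, 2, 1, 3, 0], [2, 0, 2, 1, 1], [1, 0, 1, 2, 1],
      [3, 3, 1, 1, 2], [2, 1, 3, 3, 1], [2, 3, 1, 1, 3]])
    (dr := [[0, 0, 2, 1, 1], [0, 0, 2, 0, 2], [0, 0, 1, 2, 1], [0, 0, 1, 1, 2], [0, 0, 0, 2, 2]])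
    (rows := [(0, 0), (0, 1), (0, 2), (0, 3), (0, 4), (5, 0), (5, 2), (5, 3), (5, 1), (6, 0),
      (6, 2), (6, 1), (7, 0), (7, 1), (9, 0), (1, 0), (6, 3), (7, 2), (5, 4), (6, 4), (7, 3),
      (8, 1), (7, 4), (9, 1), (9, 2), (2, 0), (8, 0), (8, 2), (8, 3), (9, 4), (10, 0), (3, 0),
      (8, 4), (9, 3), (4, 0), (1, 1), (1, 2), (1, 3), (1, 4), (10, 1), (10, 2), (10, 3), (10, 4),
      (11, 0), (11, 1), (2, 1), (11, 2), (11, 3), (11, 4), (12, 1), (12, 0), (3, 1), (12, 2),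
      (12, 3), (4, 1), (2, 2), (2, 3), (2, 4), (12, 4), (13, 0), (13, 1), (3, 2), (13, 2), (13, 3),
      (4, 2), (3, 3), (3, 4), (13, 4), (4, 3), (4, 4)])
    (by decide +kernel)

theorem doublePointBound_5_4_14 [CharZero K] {S : Finset σ} (hS : S.card = 5) :
    DoublePointBound K S 4 14 1 :=
  doublePointBound_of_certify hS
    (pts := [[1, 0, 0, 0, 0], [0, 1, 0, 0, 0], [0, 0, 1, 0, 0], [0, 0, 0, 1, 0], [0, 0, 0, 0, 1],
      [1, 2, 3, 2, 1], [3, 1, 1, 0, 0], [2, 3, 0, 1, 2], [0, 3, 0, 1, 1], [2, 1, 0, 0, 2],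
      [2, 1, 0, 2, 0], [1, 2, 1, 3, 2], [2, 3, 3, 1, 2], [1, 0, 2, 2, 3]])
    (dr := [[0, 0, 0, 2, 2]])
    (rows := [(0, 0), (0, 1), (0, 2), (0, 3), (0, 4), (5, 0), (5, 1), (5, 2), (5, 3), (6, 0),
      (6, 1), (6, 3), (7, 0), (7, 1), (9, 0), (1, 0), (5, 4), (6, 2), (7, 2), (6, 4), (7, 3),
      (9, 1), (7, 4), (8, 0), (9, 2), (2, 0), (9, 3), (9, 4), (10, 0), (10, 2), (11, 0), (3, 0),
      (10, 1), (10, 3), (4, 0), (1, 1), (1, 2), (1, 3), (1, 4), (10, 4), (8, 2), (11, 1), (8, 1),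
      (8, 3), (11, 2), (2, 1), (11, 3), (11, 4), (12, 0), (12, 1), (12, 2), (3, 1), (8, 4),
      (12, 3), (4, 1), (2, 2), (2, 3), (2, 4), (13, 0), (13, 1), (13, 2), (3, 2), (13, 3), (13, 4),
      (4, 2), (3, 3), (3, 4), (14, 0), (4, 3), (4, 4)])
    (by decide +kernel)

theorem doublePointBound_5_4_15 [CharZero K] {S : Finset σ} (hS : S.card = 5) :
    DoublePointBound K S 4 15 0 :=
  doublePointBound_of_certify hS
    (pts := [[1, 0, 0, 0, 0], [0, 1, 0, 0, 0], [0, 0, 1, 0, 0], [0, 0, 0, 1, 0], [0, 0, 0, 0, 1],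
      [0, 3, 1, 3, 2], [0, 1, 2, 0, 2], [1, 0, 3, 0, 1], [3, 1, 2, 1, 3], [0, 2, 1, 1, 3],
      [2, 3, 2, 0, 0], [2, 0, 0, 1, 0], [0, 2, 1, 2, 0], [3, 3, 1, 2, 0], [2, 3, 3, 2, 3]])
    (dr := [])
    (rows := [(0, 0), (0, 1), (0, 2), (0, 3), (0, 4), (8, 0), (7, 1), (8, 1), (8, 2), (7, 0),
      (7, 3), (7, 2), (10, 0), (10, 1), (11, 0), (1, 0), (5, 0), (6, 0), (8, 3), (8, 4), (9, 0),
      (10, 2), (10, 3), (10, 4), (11, 1), (2, 0), (11, 2), (7, 4), (11, 4), (12, 0), (13, 0),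
      (3, 0), (13, 1), (13, 2), (4, 0), (1, 1), (1, 2), (1, 3), (1, 4), (5, 1), (5, 2), (5, 3),
      (6, 1), (6, 2), (9, 1), (2, 1), (5, 4), (6, 3), (6, 4), (9, 2), (9, 3), (3, 1), (9, 4),
      (12, 1), (4, 1), (2, 2), (2, 3), (2, 4), (12, 2), (12, 3), (13, 3), (3, 2), (12, 4), (13, 4),
      (4, 2), (3, 3), (3, 4), (14, 0), (4, 3), (4, 4)])
    (by decide +kernel)

theorem doublePointBound_6_4_21 [CharZero K] {S : Finset σ} (hS : S.card = 6) :
    DoublePointBound K S 4 21 0 :=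
  doublePointBound_of_certify hS
    (pts := [[1, 0, 0, 0, 0, 0], [0, 1, 0, 0, 0, 0], [0, 0, 1, 0, 0, 0], [0, 0, 0, 1, 0, 0],
      [0, 0, 0, 0, 1, 0], [0, 0, 0, 0, 0, 1], [2, 0, 0, 3, 2, 0], [2, 1, 3, 2, 1, 1],
      [3, 3, 3, 1, 1, 0], [1, 3, 0, 0, 1, 0], [3, 1, 0, 1, 3, 1], [2, 1, 1, 1, 1, 0],
      [3, 0, 1, 0, 0, 3], [1, 2, 3, 3, 1, 0], [1, 0, 1, 3, 2, 1], [2, 1, 2, 2, 2, 1],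
      [1, 1, 3, 0, 2, 3], [1, 2, 1, 0, 1, 3], [1, 1, 3, 2, 3, 0], [0, 2, 0, 1, 0, 2],
      [3, 2, 0, 3, 0, 1]])
    (dr := [])
    (rows := [(0, 0), (0, 1), (0, 2), (0, 3), (0, 4), (0, 5), (7, 0), (7, 1), (6, 1), (7, 2),
      (7, 3), (8, 0), (6, 2), (8, 1), (8, 2), (6, 0), (6, 3), (6, 5), (10, 0), (9, 1), (9, 0),
      (1, 0), (7, 5), (7, 4), (8, 3), (9, 2), (8, 5), (8, 4), (10, 1), (9, 3), (9, 4), (10, 2),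
      (9, 5), (10, 3), (10, 4), (11, 0), (2, 0), (10, 5), (11, 1), (11, 2), (11, 3), (11, 4),
      (12, 0), (11, 5), (12, 1), (12, 2), (3, 0), (6, 4), (12, 3), (12, 4), (12, 5), (13, 0),
      (4, 0), (13, 1), (13, 2), (5, 0), (1, 1), (1, 2), (1, 3), (1, 4), (1, 5), (13, 4), (13, 3),
      (13, 5), (14, 0), (14, 1), (14, 2), (14, 3), (14, 4), (14, 5), (15, 0), (2, 1), (15, 1),
      (15, 2), (15, 3), (15, 4), (16, 0), (15, 5), (16, 1), (16, 2), (16, 3), (3, 1), (16, 4),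
      (16, 5), (17, 0), (17, 1), (17, 2), (4, 1), (17, 3), (17, 4), (5, 1), (2, 2), (2, 3), (2, 4),
      (2, 5), (17, 5), (18, 0), (18, 1), (18, 2), (18, 3), (18, 4), (3, 2), (18, 5), (19, 1),
      (19, 0), (19, 2), (19, 3), (4, 2), (19, 4), (19, 5), (5, 2), (3, 3), (3, 4), (3, 5), (20, 0),
      (20, 1), (20, 2), (4, 3), (20, 3), (20, 4), (5, 3), (4, 4), (4, 5), (20, 5), (5, 4), (5, 5)])
    (by decide +kernel)

variable [DecidableEq σ]

theorem singularBound₃_three_blocks_3_3_3 [CharZero K] {X Y W : Finset σ} (hXY : Disjoint X Y)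
    (hXW : Disjoint X W) (hYW : Disjoint Y W) (hX : X.card = 3) (hY : Y.card = 3)
    (hW : W.card = 3) :
    SingularBound₃ K (blockExponents (X ∪ (Y ∪ W)) 3 true X true Y true W) 3 X 3 Y 3 W 0 :=
  singularBound₃_of_certifyBlocks hXY hXW hYW (V := 9) hX hY hW rfl (free := false)
    (pX := [[0, 0, 0, 3, 0, 0, 1, 1, 2], [0, 0, 0, 0, 0, 3, 0, 0, 3], [0, 0, 0, 2, 1, 2, 3, 3, 1]])
    (pY := [[2, 1, 3, 0, 0, 0, 1, 3, 0], [3, 3, 2, 0, 0, 0, 0, 1, 3], [0, 1, 2, 0, 0, 0, 0, 1, 2]])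
    (pZ := [[1, 2, 1, 3, 1, 0, 0, 0, 0], [3, 3, 1, 1, 1, 3, 0, 0, 0], [3, 2, 3, 1, 2, 2, 0, 0, 0]])
    (dr := [])
    (rows := [(0, 0), (3, 3), (2, 0), (3, 4), (4, 3), (4, 4), (3, 5), (4, 5), (1, 0), (0, 1),
      (5, 3), (2, 1), (6, 6), (5, 4), (6, 7), (6, 8), (5, 5), (1, 1), (0, 2), (7, 6), (2, 2),
      (7, 7), (7, 8), (8, 6), (8, 7), (8, 8), (1, 2)])
    (by decide +kernel)

theorem singularBound₃_two_blocks_3_3_0 [CharZero K] {X Y W : Finset σ} (hXY : Disjoint X Y)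
    (hXW : Disjoint X W) (hYW : Disjoint Y W) (hX : X.card = 3) (hY : Y.card = 3)
    (hW : W.card = 0) :
    SingularBound₃ K (blockExponents (X ∪ (Y ∪ W)) 3 true X true Y false W) 3 X 3 Y 3 ∅ 0 :=
  singularBound₃_of_certifyBlocks hXY hXW hYW (V := 6) hX hY hW rfl (free := true)
    (pX := [[0, 0, 0, 3, 0, 3], [0, 0, 0, 3, 3, 2], [0, 0, 0, 1, 1, 2]])
    (pY := [[1, 1, 3, 0, 0, 0], [2, 0, 1, 0, 0, 0], [0, 0, 2, 0, 0, 0]])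
    (pZ := [[3, 1, 0, 0, 3, 2], [1, 2, 0, 3, 1, 1], [2, 3, 0, 2, 2, 2]])
    (dr := [])
    (rows := [(3, 3), (3, 4), (3, 5), (4, 3), (4, 4), (4, 5), (6, 3), (6, 0), (6, 4), (0, 0),
      (1, 0), (2, 0), (6, 1), (7, 0), (7, 1), (7, 2), (6, 2), (7, 3), (7, 4), (6, 5), (8, 0),
      (0, 1), (1, 1), (2, 1), (7, 5), (8, 1), (8, 2), (5, 3), (5, 4), (5, 5), (0, 2), (1, 2),
      (2, 2), (8, 3), (8, 4), (8, 5)])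
    (by decide +kernel)

theorem singularBound₃_two_blocks_3_3_1 [CharZero K] {X Y W : Finset σ} (hXY : Disjoint X Y)
    (hXW : Disjoint X W) (hYW : Disjoint Y W) (hX : X.card = 3) (hY : Y.card = 3)
    (hW : W.card = 1) :
    SingularBound₃ K (blockExponents (X ∪ (Y ∪ W)) 3 true X true Y false W) 4 X 4 Y 3 ∅ 0 :=
  singularBound₃_of_certifyBlocks hXY hXW hYW (V := 7) hX hY hW rfl (free := true)
    (pX := [[0, 0, 0, 2, 1, 0, 2], [0, 0, 0, 1, 2, 1, 0], [0, 0, 0, 2, 3, 0, 3],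
      [0, 0, 0, 2, 1, 1, 0]])
    (pY := [[0, 2, 0, 0, 0, 0, 1], [3, 0, 3, 0, 0, 0, 0], [2, 2, 1, 0, 0, 0, 0],
      [1, 3, 2, 0, 0, 0, 3]])
    (pZ := [[1, 2, 1, 0, 3, 1, 0], [1, 0, 0, 0, 1, 2, 0], [3, 3, 0, 0, 1, 3, 2]])
    (dr := [])
    (rows := [(5, 3), (5, 4), (5, 5), (6, 3), (6, 4), (6, 5), (7, 3), (7, 4), (7, 5), (0, 0),
      (1, 0), (2, 0), (3, 0), (8, 0), (8, 3), (8, 1), (8, 4), (9, 0), (4, 3), (4, 4), (4, 5),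
      (9, 1), (8, 2), (9, 2), (0, 1), (1, 1), (2, 1), (3, 1), (8, 5), (9, 3), (8, 6), (9, 4),
      (9, 6), (10, 0), (9, 5), (10, 1), (0, 2), (1, 2), (2, 2), (3, 2), (10, 2), (10, 3), (10, 4),
      (10, 5), (10, 6)])
    (by decide +kernel)

theorem singularBound₃_two_blocks_3_3_2 [CharZero K] {X Y W : Finset σ} (hXY : Disjoint X Y)
    (hXW : Disjoint X W) (hYW : Disjoint Y W) (hX : X.card = 3) (hY : Y.card = 3)
    (hW : W.card = 2) :
    SingularBound₃ K (blockExponents (X ∪ (Y ∪ W)) 3 true X true Y false W) 5 X 5 Y 3 ∅ 0 :=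
  singularBound₃_of_certifyBlocks hXY hXW hYW (V := 8) hX hY hW rfl (free := true)
    (pX := [[0, 0, 0, 3, 2, 3, 2, 0], [0, 0, 0, 2, 0, 2, 2, 3], [0, 0, 0, 0, 1, 0, 2, 2],
      [0, 0, 0, 2, 0, 3, 3, 0], [0, 0, 0, 2, 3, 2, 0, 2]])
    (pY := [[0, 0, 2, 0, 0, 0, 1, 1], [2, 3, 2, 0, 0, 0, 1, 2], [3, 0, 3, 0, 0, 0, 1, 0],
      [0, 3, 3, 0, 0, 0, 1, 2], [3, 0, 1, 0, 0, 0, 1, 3]])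
    (pZ := [[3, 2, 2, 2, 2, 2, 3, 1], [2, 3, 3, 0, 1, 1, 0, 1], [3, 1, 3, 2, 3, 3, 1, 1]])
    (dr := [])
    (rows := [(6, 3), (6, 4), (6, 5), (7, 3), (7, 4), (7, 5), (9, 3), (9, 4), (9, 5), (0, 0),
      (1, 0), (3, 0), (4, 0), (10, 0), (2, 0), (10, 3), (10, 1), (10, 2), (11, 0), (11, 1),
      (11, 2), (8, 3), (8, 4), (8, 5), (10, 4), (10, 5), (11, 3), (0, 1), (1, 1), (3, 1), (4, 1),
      (10, 6), (2, 1), (11, 4), (10, 7), (11, 5), (11, 6), (12, 0), (12, 1), (5, 3), (5, 4),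
      (5, 5), (0, 2), (1, 2), (3, 2), (4, 2), (12, 2), (2, 2), (11, 7), (12, 3), (12, 4), (12, 5),
      (12, 6), (12, 7)])
    (by decide +kernel)

theorem singularBound₃_one_block_3_1 [CharZero K] {X W : Finset σ} (hXW : Disjoint X W)
    (hX : X.card = 3) (hW : W.card = 1) :
    SingularBound₃ K (blockExponents (X ∪ (∅ ∪ W)) 3 true X false ∅ false W) 1 X 0 ∅ 4 ∅ 0 :=
  singularBound₃_of_certifyBlocks (Finset.disjoint_empty_right X) hXW
    (Finset.disjoint_empty_left W) (V := 4) hX Finset.card_empty hW rfl (free := true)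
    (pX := [[0, 0, 0, 1]])
    (pY := [])
    (pZ := [[0, 1, 2, 0], [2, 1, 2, 2], [1, 0, 3, 3], [3, 1, 3, 2]])
    (dr := [])
    (rows := [(2, 0), (2, 1), (2, 2), (2, 3), (1, 0), (3, 0), (3, 2), (3, 3), (4, 0), (0, 0),
      (1, 1), (1, 2), (1, 3), (3, 1), (4, 1), (0, 1), (4, 2), (4, 3), (0, 2)])
    (by decide +kernel)

theorem singularBound₃_one_block_3_3 [CharZero K] {X W : Finset σ} (hXW : Disjoint X W)
    (hX : X.card = 3) (hW : W.card = 3) :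
    SingularBound₃ K (blockExponents (X ∪ (∅ ∪ W)) 3 true X false ∅ false W) 4 X 0 ∅ 6 ∅ 0 :=
  singularBound₃_of_certifyBlocks (Finset.disjoint_empty_right X) hXW
    (Finset.disjoint_empty_left W) (V := 6) hX Finset.card_empty hW rfl (free := true)
    (pX := [[0, 0, 0, 3, 2, 1], [0, 0, 0, 0, 0, 2], [0, 0, 0, 3, 2, 2], [0, 0, 0, 1, 3, 1]])
    (pY := [])
    (pZ := [[1, 0, 3, 2, 0, 0], [1, 3, 3, 0, 2, 1], [3, 2, 1, 3, 0, 2], [3, 2, 3, 1, 0, 2],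
      [0, 1, 3, 1, 2, 1], [1, 3, 1, 2, 2, 0]])
    (dr := [])
    (rows := [(4, 0), (4, 1), (4, 2), (4, 3), (4, 4), (4, 5), (5, 0), (5, 1), (5, 2), (5, 3),
      (5, 4), (6, 0), (6, 1), (6, 2), (6, 3), (0, 0), (3, 0), (2, 0), (7, 0), (7, 1), (1, 0),
      (5, 5), (6, 4), (7, 2), (7, 3), (8, 0), (6, 5), (7, 4), (8, 1), (8, 2), (0, 1), (3, 1),
      (2, 1), (8, 3), (8, 4), (1, 1), (7, 5), (8, 5), (9, 0), (9, 1), (0, 2), (3, 2), (2, 2),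
      (9, 2), (9, 3), (1, 2)])
    (by decide +kernel)

theorem singularBound₃_one_block_3_5 [CharZero K] {X W : Finset σ} (hXW : Disjoint X W)
    (hX : X.card = 3) (hW : W.card = 5) :
    SingularBound₃ K (blockExponents (X ∪ (∅ ∪ W)) 3 true X false ∅ false W) 7 X 0 ∅ 8 ∅ 0 :=
  singularBound₃_of_certifyBlocks (Finset.disjoint_empty_right X) hXW
    (Finset.disjoint_empty_left W) (V := 8) hX Finset.card_empty hW rfl (free := true)
    (pX := [[0, 0, 0, 3, 1, 0, 1, 3], [0, 0, 0, 2, 3, 2, 2, 3], [0, 0, 0, 0, 2, 2, 3, 3],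
      [0, 0, 0, 0, 2, 1, 3, 3], [0, 0, 0, 1, 0, 3, 1, 3], [0, 0, 0, 0, 0, 3, 2, 3],
      [0, 0, 0, 1, 1, 0, 0, 1]])
    (pY := [])
    (pZ := [[3, 0, 2, 1, 1, 2, 2, 1], [1, 0, 0, 3, 3, 1, 2, 1], [0, 3, 2, 0, 3, 0, 1, 1],
      [3, 1, 3, 1, 1, 0, 3, 1], [3, 2, 0, 1, 1, 1, 0, 0], [2, 0, 3, 3, 2, 3, 2, 1],
      [3, 3, 2, 3, 3, 1, 0, 0], [3, 3, 1, 3, 3, 1, 3, 3]])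
    (dr := [])
    (rows := [(7, 0), (7, 1), (7, 2), (7, 3), (7, 4), (7, 5), (7, 6), (7, 7), (9, 0), (8, 1),
      (10, 0), (10, 1), (10, 2), (10, 3), (10, 4), (8, 0), (8, 2), (8, 3), (8, 4), (8, 6), (8, 7),
      (0, 0), (1, 0), (4, 0), (6, 0), (10, 5), (2, 0), (3, 0), (11, 0), (11, 1), (5, 0), (11, 2),
      (11, 3), (11, 4), (12, 0), (12, 1), (9, 1), (9, 2), (9, 3), (9, 4), (9, 5), (9, 6), (9, 7),
      (10, 6), (10, 7), (11, 5), (12, 2), (12, 3), (12, 4), (0, 1), (1, 1), (4, 1), (6, 1),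
      (11, 6), (2, 1), (3, 1), (11, 7), (12, 6), (5, 1), (13, 0), (13, 1), (13, 2), (13, 3),
      (13, 4), (8, 5), (12, 5), (13, 5), (13, 6), (13, 7), (14, 0), (0, 2), (1, 2), (4, 2), (6, 2),
      (12, 7), (2, 2), (3, 2), (14, 1), (14, 2), (5, 2), (14, 3), (14, 4), (14, 5), (14, 6),
      (14, 7)])
    (by decide +kernel)

theorem singularBound₃_one_block_3_0 [CharZero K] {X W : Finset σ} (hXW : Disjoint X W)
    (hX : X.card = 3) (hW : W.card = 0) :
    SingularBound₃ K (blockExponents (X ∪ (∅ ∪ W)) 3 true X false ∅ false W) 0 X 0 ∅ 3 ∅ 1 :=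
  singularBound₃_of_certifyBlocks (Finset.disjoint_empty_right X) hXW
    (Finset.disjoint_empty_left W) (V := 3) hX Finset.card_empty hW rfl (free := true)
    (pX := [])
    (pY := [])
    (pZ := [[0, 0, 1], [2, 3, 2], [0, 3, 0]])
    (dr := [[1, 1, 1]])
    (rows := [(1, 0), (1, 1), (1, 2), (2, 0), (3, 0), (0, 0), (2, 1), (2, 2), (0, 1), (0, 2)])
    (by decide +kernel)

end InitialCases

/-! ### Cubics -/

section Cubics
variable {K : Type*} [Field K] {σ : Type*}

theorem apply_eq_zero_of_degree_le_card {α : σ →₀ ℕ} {T : Finset σ} (hd : α.degree ≤ T.card)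
    (hT : ∀ i ∈ T, α i ≠ 0) {l : σ} (hl : l ∉ T) : α l = 0 := by
  by_contra hαl
  have hsub : T.cons l hl ⊆ α.support := fun i hi => Finsupp.mem_support_iff.2 <| by
    rcases Finset.mem_cons.1 hi with rfl | hi
    exacts [hαl, hT i hi]
  have hcard := Finset.card_le_card hsub
  have hdeg : α.support.card ≤ α.degree := by
    rw [Finset.card_eq_sum_ones]
    exact Finset.sum_le_sum fun i hi => Nat.one_le_iff_ne_zero.2 (Finsupp.mem_support_iff.1 hi)
  rw [Finset.card_cons] at hcard
  omega

variable [DecidableEq σ]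

theorem sep_formExponents_subset_sdiff (S Z : Finset σ) (d : ℕ) :
    {α ∈ formExponents S d | ∀ i ∈ Z, α i = 0} ⊆ formExponents (S \ Z) d :=
  fun _ ⟨hα, hz⟩ => ⟨fun i hi => Finset.mem_sdiff.2 ⟨hα.1 i hi, fun h => hi (hz i h)⟩, hα.2⟩

theorem sep_blockExponents_subset_sdiff (X Y W Z : Finset σ) (d : ℕ) (fX fY : Bool) :
    {α ∈ blockExponents (X ∪ (Y ∪ W)) d fX X fY Y false W | ∀ i ∈ Z, α i = 0} ⊆
      blockExponents (X ∪ (Y ∪ W \ Z)) d fX X fY Y false (W \ Z) := by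
  rintro α ⟨⟨⟨hs, hd⟩, hx, hy, -⟩, hz⟩
  refine ⟨⟨fun i hi => ?_, hd⟩, hx, hy, by simp⟩
  have hi' := hs i hi
  have hiZ : i ∉ Z := fun h => hi (hz i h)
  simp only [Finset.mem_union, Finset.mem_sdiff] at hi' ⊢
  tauto

theorem sep_blockExponents_subset_three_blocks {X Y Z W : Finset σ} (hXY : Disjoint X Y)
    (hXZ : Disjoint X Z) (hYZ : Disjoint Y Z) :
    {α ∈ blockExponents (X ∪ (Y ∪ W)) 3 true X true Y false W | ∃ i ∈ Z, α i ≠ 0} ⊆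
      blockExponents (X ∪ (Y ∪ Z)) 3 true X true Y true Z := by
  rintro α ⟨⟨⟨-, hd⟩, hX, hY, -⟩, hZ⟩
  refine ⟨⟨fun i hi => ?_, hd⟩, hX, hY, fun _ => hZ⟩
  obtain ⟨x, hx, hαx⟩ := hX rfl
  obtain ⟨y, hy, hαy⟩ := hY rfl
  obtain ⟨z, hz, hαz⟩ := hZ
  by_contra hn
  simp only [Finset.mem_union, not_or] at hn
  have hcard : ({x, y, z} : Finset σ).card = 3 := Finset.card_eq_three.2 ⟨x, y, z,
    Finset.disjoint_iff_ne.1 hXY x hx y hy, Finset.disjoint_iff_ne.1 hXZ x hx z hz,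
    Finset.disjoint_iff_ne.1 hYZ y hy z hz, rfl⟩
  refine hi (apply_eq_zero_of_degree_le_card (T := {x, y, z}) (by rw [hd, hcard]) ?_ ?_)
  · simp [hαx, hαy, hαz]
  · simp only [Finset.mem_insert, Finset.mem_singleton, not_or]
    exact ⟨fun h => hn.1 (h ▸ hx), fun h => hn.2.1 (h ▸ hy), fun h => hn.2.2 (h ▸ hz)⟩

theorem sep_blockExponents_subset_two_blocks (X W Z : Finset σ) (d : ℕ) :
    {α ∈ blockExponents (X ∪ (∅ ∪ W)) d true X false ∅ false W | ∃ i ∈ Z, α i ≠ 0} ⊆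
      blockExponents (X ∪ (Z ∪ W \ Z)) d true X true Z false (W \ Z) := by
  rintro α ⟨⟨⟨hs, hd⟩, hx, -, -⟩, hz⟩
  refine ⟨⟨fun i hi => ?_, hd⟩, hx, fun _ => hz, by simp⟩
  have hi' := hs i hi
  simp only [Finset.mem_union, Finset.mem_sdiff, Finset.notMem_empty, false_or] at hi' ⊢
  tauto

theorem sep_formExponents_subset_one_block (S X : Finset σ) (d : ℕ) :
    {α ∈ formExponents S d | ∃ i ∈ X, α i ≠ 0} ⊆
      blockExponents (X ∪ (∅ ∪ S \ X)) d true X false ∅ false (S \ X) := by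
  rintro α ⟨⟨hs, hd⟩, hx⟩
  refine ⟨⟨fun i hi => ?_, hd⟩, fun _ => hx, by simp, by simp⟩
  have hi' := hs i hi
  simp only [Finset.mem_union, Finset.mem_sdiff, Finset.notMem_empty, false_or]
  tauto

variable (K σ) in
/-- Cubics in `3 + 3 + w` variables each of whose monomials involves both blocks of size three:
`w + 3` points on each of the two coordinate subspaces of codimension three and three free points
leave nothing. -/
def TwoBlockBound (w : ℕ) : Prop :=
  ∀ X Y W : Finset σ, Disjoint X Y → Disjoint X W → Disjoint Y W →
    X.card = 3 → Y.card = 3 → W.card = w →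
      SingularBound₃ K (blockExponents (X ∪ (Y ∪ W)) 3 true X true Y false W)
        (w + 3) X (w + 3) Y 3 ∅ 0

variable (K σ) in
/-- Cubics in `3 + c` variables each of whose monomials involves the block of size three:
`s` points on the coordinate subspace of codimension three and `c + 3` free points leave a system of
dimension at most `m`. -/
def OneBlockBound (c s m : ℕ) : Prop :=
  ∀ X W : Finset σ, Disjoint X W → X.card = 3 → W.card = c →
    SingularBound₃ K (blockExponents (X ∪ (∅ ∪ W)) 3 true X false ∅ false W) s X 0 ∅ (c + 3) ∅ m

omit [DecidableEq σ] in
variable (K σ) in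
/-- `k` suitable double points leave a space of dimension at most `m` of cubics in any `V` of the
variables. -/
def CubicBound (V k m : ℕ) : Prop := ∀ S : Finset σ, S.card = V → DoublePointBound K S 3 k m

/-- A third block `Z` of size three is split off `W`: the trace on its subspace is the system for
`w`, and the residual monomials involve all three blocks, hence no other variable. -/
theorem TwoBlockBound.add_three [CharZero K] [Finite σ] {w : ℕ} (h : TwoBlockBound K σ w) :
    TwoBlockBound K σ (w + 3) := by
  intro X Y W hXY hXW hYW hX hY hW
  obtain ⟨Z, hZW, hZ⟩ := Finset.exists_subset_card_eq (s := W) (n := 3) (by omega)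
  have hXZ := Finset.disjoint_of_subset_right hZW hXW
  have hYZ := Finset.disjoint_of_subset_right hZW hYW
  have trace := h X Y (W \ Z) hXY (Finset.disjoint_of_subset_right Finset.sdiff_subset hXW)
    (Finset.disjoint_of_subset_right Finset.sdiff_subset hYW) hX hY
    (by rw [Finset.card_sdiff_of_subset hZW]; omega)
  have residual := singularBound₃_three_blocks_3_3_3 (K := K) hXY hXZ hYZ hX hY hZ
  have key := SingularBound.add_restrictCoord (K := K)
    (M₀ := Sum.elim (fun _ : Fin (w + 3) => X) (fun _ : Fin (w + 3) => Y))
    (M₁ := fun _ : Fin 3 => ∅) (M₂ := Sum.elim (fun _ : Fin 3 => X) (fun _ : Fin 3 => Y))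
    (finite_blockExponents (X ∪ (Y ∪ W)) 3 true X true Y false W) Z
    (trace.mono (sep_blockExponents_subset_sdiff X Y W Z 3 true true)
      (Equiv.sumAssoc _ _ _).symm.toEmbedding (by rintro (_ | _ | _) <;> simp) le_rfl)
    (residual.mono (sep_blockExponents_subset_three_blocks hXY hXZ hYZ)
      ((Equiv.sumAssoc _ _ _).symm.trans (Equiv.sumComm _ _)).toEmbedding
      (by rintro (i | i | i) <;> simp) le_rfl)
  let e : (Fin (w + 3) ⊕ Fin (w + 3)) ⊕ (Fin 3 ⊕ (Fin 3 ⊕ Fin 3)) →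
      Fin (w + 3 + 3) ⊕ (Fin (w + 3 + 3) ⊕ Fin 3)
    | .inl (.inl i) => .inl (Fin.castAdd 3 i)
    | .inl (.inr i) => .inr (.inl (Fin.castAdd 3 i))
    | .inr (.inl i) => .inr (.inr i)
    | .inr (.inr (.inl i)) => .inl (Fin.natAdd (w + 3) i)
    | .inr (.inr (.inr i)) => .inr (.inl (Fin.natAdd (w + 3) i))
  have he : Function.Injective e := by
    rintro ((i | i) | (i | (i | i))) ((j | j) | (j | (j | j))) h <;>
      simp [e, Fin.ext_iff] at h ⊢ <;> omega
  exact key.mono subset_rfl ⟨e, he⟩ (by rintro ((i | i) | (i | (i | i))) <;> simp [e]) le_rfl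

variable (K σ) in
theorem twoBlockBound [CharZero K] [Finite σ] : ∀ w, TwoBlockBound K σ w
  | 0 => fun _ _ _ hXY hXW hYW => singularBound₃_two_blocks_3_3_0 hXY hXW hYW
  | 1 => fun _ _ _ hXY hXW hYW => singularBound₃_two_blocks_3_3_1 hXY hXW hYW
  | 2 => fun _ _ _ hXY hXW hYW => singularBound₃_two_blocks_3_3_2 hXY hXW hYW
  | w + 3 => (twoBlockBound w).add_three

theorem OneBlockBound.add_three [CharZero K] [Finite σ] {c s m : ℕ} (h : OneBlockBound K σ c s m) :
    OneBlockBound K σ (c + 3) (s + (c + 3)) m := by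
  intro X W hXW hX hW
  obtain ⟨Z, hZW, hZ⟩ := Finset.exists_subset_card_eq (s := W) (n := 3) (by omega)
  have hXZ := Finset.disjoint_of_subset_right hZW hXW
  have hXW' := Finset.disjoint_of_subset_right (Finset.sdiff_subset (t := Z)) hXW
  have hc : (W \ Z).card = c := by rw [Finset.card_sdiff_of_subset hZW]; omega
  have trace := h X (W \ Z) hXW' hX hc
  have residual := twoBlockBound K σ c X Z (W \ Z) hXZ hXW' Finset.disjoint_sdiff hX hZ hc
  have key := SingularBound.add_restrictCoord (K := K) (M₀ := fun _ : Fin s => X)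
    (M₁ := fun _ : Fin (c + 3) => ∅)
    (M₂ := Sum.elim (fun _ : Fin (c + 3) => X) (fun _ : Fin 3 => ∅))
    (finite_blockExponents (X ∪ (∅ ∪ W)) 3 true X false ∅ false W) Z
    (trace.mono (sep_blockExponents_subset_sdiff X ∅ W Z 3 true false)
      (Equiv.sumCongr (Equiv.refl _) (Equiv.emptySum _ _)).toEmbedding
      (by rintro (i | i | i) <;> first | exact i.elim0 | simp) le_rfl)
    (residual.mono (sep_blockExponents_subset_two_blocks X W Z 3)
      (((Equiv.sumAssoc _ _ _).symm.trans (Equiv.sumCongr (Equiv.sumComm _ _) (Equiv.refl _))).trans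
        (Equiv.sumAssoc _ _ _)).toEmbedding (by rintro (i | i | i) <;> simp) le_rfl)
  let e : Fin s ⊕ (Fin (c + 3) ⊕ (Fin (c + 3) ⊕ Fin 3)) →
      Fin (s + (c + 3)) ⊕ (Fin 0 ⊕ Fin (c + 3 + 3))
    | .inl i => .inl (Fin.castAdd (c + 3) i)
    | .inr (.inl i) => .inr (.inr (Fin.castAdd 3 i))
    | .inr (.inr (.inl i)) => .inl (Fin.natAdd s i)
    | .inr (.inr (.inr i)) => .inr (.inr (Fin.natAdd (c + 3) i))
  have he : Function.Injective e := by
    rintro (i | (i | (i | i))) (j | (j | (j | j))) h <;> simp [e, Fin.ext_iff] at h ⊢ <;> omega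
  exact key.mono subset_rfl ⟨e, he⟩ (by rintro (i | (i | (i | i))) <;> simp [e]) le_rfl

theorem CubicBound.add_three [CharZero K] [Finite σ] {V s m m' : ℕ} (h : CubicBound K σ V s m)
    (hA : OneBlockBound K σ V s m') : CubicBound K σ (V + 3) (s + (V + 3)) (m + m') := by
  intro S hS
  obtain ⟨X, hXS, hX⟩ := Finset.exists_subset_card_eq (s := S) (n := 3) (by omega)
  have hc : (S \ X).card = V := by rw [Finset.card_sdiff_of_subset hXS]; omega
  have trace := doublePointBound_iff_singularBound.1 (h (S \ X) hc)
  have residual := hA X (S \ X) Finset.disjoint_sdiff hX hc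
  have key := SingularBound.add_restrictCoord (K := K) (M₀ := fun _ : Empty => ∅)
    (M₁ := fun _ : Fin s => ∅) (M₂ := fun _ : Fin (V + 3) => ∅) (finite_formExponents S 3) X
    (trace.mono (sep_formExponents_subset_sdiff S X 3) (Equiv.emptySum _ _).symm.toEmbedding
      (by simp) le_rfl)
    (residual.mono (sep_formExponents_subset_one_block S X 3)
      (Equiv.sumCongr (Equiv.refl _) (Equiv.emptySum _ _)).toEmbedding
      (by rintro (i | i | i) <;> first | exact i.elim0 | simp) le_rfl)
  exact doublePointBound_iff_singularBound.2 (key.mono subset_rfl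
    ((Equiv.emptySum _ _).trans finSumFinEquiv).toEmbedding (fun _ => Finset.empty_subset _) le_rfl)

theorem CubicBound.iterate_add_three [CharZero K] [Finite σ] {V s m m' : ℕ}
    (hT : CubicBound K σ V s m) (hA : OneBlockBound K σ V s m') (a : ℕ) :
    ∃ t, 2 * t + 3 * a = 2 * s + 2 * a * (V + 3) + 3 * a ^ 2 ∧
      CubicBound K σ (V + 3 * a) t (m + a * m') ∧ OneBlockBound K σ (V + 3 * a) t m' := by
  induction a with
  | zero => exact ⟨s, by ring, by simpa using hT, hA⟩
  | succ a ih =>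
    obtain ⟨t, ht, hcubic, hblock⟩ := ih
    have hnext := hcubic.add_three hblock
    rw [show m + a * m' + m' = m + (a + 1) * m' by ring] at hnext
    exact ⟨t + (V + 3 * a + 3), by linarith, hnext, hblock.add_three⟩

omit [DecidableEq σ]

theorem DoublePointBound.sub_mul_of_gap {S : Finset σ} {V d N k₀ m₀ k₁ : ℕ} (hV : S.card = V)
    (h₀ : DoublePointBound K S d k₀ m₀) (hm : m₀ + V * k₀ = N) (h₁ : DoublePointBound K S d k₁ 0)
    {k : ℕ} (hk : k ≤ k₀ ∨ k₁ ≤ k) : DoublePointBound K S d k (N - V * k) := by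
  rcases hk with hk | hk
  · obtain ⟨j, rfl⟩ := Nat.exists_eq_add_of_le hk
    refine (h₀.drop j).mono le_rfl ?_
    rw [hV, ← hm, mul_add]
    omega
  · exact h₁.mono hk (Nat.zero_le _)

theorem DoublePointBound.sub_mul {S : Finset σ} {V d N k₀ m₀ : ℕ} (hV : S.card = V)
    (h₀ : DoublePointBound K S d k₀ m₀) (hm : m₀ + V * k₀ = N)
    (h₁ : DoublePointBound K S d (k₀ + 1) 0) (k : ℕ) : DoublePointBound K S d k (N - V * k) :=
  h₀.sub_mul_of_gap hV hm h₁ (Nat.lt_or_ge k₀ k).symm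

theorem DoublePointBound.sub_mul_of_perfect {S : Finset σ} {V d N k₀ : ℕ} (hV : S.card = V)
    (h₀ : DoublePointBound K S d k₀ 0) (hm : V * k₀ = N) (k : ℕ) :
    DoublePointBound K S d k (N - V * k) :=
  DoublePointBound.sub_mul hV h₀ (by omega) (h₀.mono (Nat.le_succ _) le_rfl) k

theorem two_mul_multichoose_two (V : ℕ) : 2 * V.multichoose 2 = V * (V + 1) := by
  induction V with
  | zero => simp
  | succ V ih =>
    rw [Nat.multichoose_succ_succ, Nat.multichoose_one_right]
    linarith

theorem six_mul_multichoose_three (V : ℕ) : 6 * V.multichoose 3 = V * (V + 1) * (V + 2) := by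
  induction V with
  | zero => simp
  | succ V ih =>
    have := two_mul_multichoose_two (V + 1)
    rw [Nat.multichoose_succ_succ]
    linarith

variable (K) in
theorem doublePointBound_empty (d : ℕ) : DoublePointBound K (∅ : Finset σ) (d + 1) 0 0 := by
  refine ⟨0, dimLE_zero_iff.2 <| (Submodule.eq_bot_iff _).2 fun g hg => ?_⟩
  ext α
  by_contra hα
  obtain ⟨hsupp, hdeg⟩ := mem_restrictSupport_iff_coeff.1 (mem_singularForms.1 hg).1 α hα
  have hα₀ : α = 0 := Finsupp.ext fun i => by
    by_contra hi
    exact absurd (hsupp i hi) (Finset.notMem_empty i)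
  simp [hα₀] at hdeg

variable [CharZero K] [Finite σ]

theorem doublePointBound_cubic_three_mul_add_three {S : Finset σ} {a : ℕ}
    (hV : S.card = 3 * (a + 1)) (k : ℕ) :
    DoublePointBound K S 3 k ((3 * (a + 1)).multichoose 3 - 3 * (a + 1) * k) := by
  classical
  obtain ⟨t, ht, hT, -⟩ := CubicBound.iterate_add_three (K := K) (σ := σ) (V := 0) (s := 0)
    (m := 0) (m' := 1)
    (fun S hS => by rw [Finset.card_eq_zero.1 hS]; exact doublePointBound_empty K 2)
    (fun X W hXW hX hW => singularBound₃_one_block_3_0 hXW hX hW) (a + 1)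
  obtain ⟨t', ht', hT', -⟩ := CubicBound.iterate_add_three (K := K) (σ := σ) (V := 3) (s := 4)
    (m := 0) (m' := 0) (fun S hS => doublePointBound_3_3_4 hS)
    (fun X W hXW hX hW => singularBound₃_one_block_3_3 hXW hX hW) a
  obtain rfl : t' = t + 1 := by nlinarith
  refine DoublePointBound.sub_mul hV (hT S (by omega)) ?_ (by simpa using hT' S (by omega)) k
  have hN := six_mul_multichoose_three (3 * (a + 1))
  zify at *
  nlinarith

theorem mul_eq_multichoose_three {V t : ℕ} (h : 6 * t = (V + 1) * (V + 2)) :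
    V * t = V.multichoose 3 := by
  have hN := six_mul_multichoose_three V
  refine Nat.eq_of_mul_eq_mul_left (by norm_num : 0 < 6) ?_
  rw [hN, mul_left_comm, h, mul_assoc]

theorem doublePointBound_cubic_one_add_three_mul {S : Finset σ} {a : ℕ} (hV : S.card = 1 + 3 * a)
    (k : ℕ) : DoublePointBound K S 3 k ((1 + 3 * a).multichoose 3 - (1 + 3 * a) * k) := by
  classical
  obtain ⟨t, ht, hT, -⟩ := CubicBound.iterate_add_three (K := K) (σ := σ) (V := 1) (s := 1)
    (m := 0) (m' := 0) (fun S hS => doublePointBound_1_3_1 hS)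
    (fun X W hXW hX hW => singularBound₃_one_block_3_1 hXW hX hW) a
  exact DoublePointBound.sub_mul_of_perfect hV (by simpa using hT S (by omega))
    (mul_eq_multichoose_three (by linarith)) k

theorem doublePointBound_cubic_eight_add_three_mul {S : Finset σ} {b : ℕ}
    (hV : S.card = 8 + 3 * b) (k : ℕ) :
    DoublePointBound K S 3 k ((8 + 3 * b).multichoose 3 - (8 + 3 * b) * k) := by
  classical
  have hblock : OneBlockBound K σ 5 7 0 := fun X W hXW hX hW =>
    singularBound₃_one_block_3_5 hXW hX hW
  obtain ⟨t, ht, hT, -⟩ := CubicBound.iterate_add_three (K := K) (σ := σ) (V := 8) (s := 15)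
    (m := 0) (m' := 0) (fun S hS => doublePointBound_8_3_15 hS) hblock.add_three b
  exact DoublePointBound.sub_mul_of_perfect hV (by simpa using hT S (by omega))
    (mul_eq_multichoose_three (by linarith)) k

theorem doublePointBound_cubic {S : Finset σ} {V : ℕ} (hV : S.card = V) (h₁ : 1 ≤ V) (h₅ : V ≠ 5)
    (k : ℕ) : DoublePointBound K S 3 k (V.multichoose 3 - V * k) := by
  obtain ⟨a, rfl⟩ | ⟨a, rfl⟩ | rfl | ⟨b, rfl⟩ :
      (∃ a, V = 3 * (a + 1)) ∨ (∃ a, V = 1 + 3 * a) ∨ V = 2 ∨ ∃ b, V = 8 + 3 * b := by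
    obtain h | h | h : V % 3 = 0 ∨ V % 3 = 1 ∨ V % 3 = 2 := by omega
    · exact .inl ⟨V / 3 - 1, by omega⟩
    · exact .inr (.inl ⟨V / 3, by omega⟩)
    · rcases eq_or_ne V 2 with h₂ | h₂
      exacts [.inr (.inr (.inl h₂)), .inr (.inr (.inr ⟨(V - 8) / 3, by omega⟩))]
  · exact doublePointBound_cubic_three_mul_add_three hV k
  · exact doublePointBound_cubic_one_add_three_mul hV k
  · exact (doublePointBound_2_3_2 hV).sub_mul_of_perfect hV (by simp [Nat.multichoose_eq]) k
  · exact doublePointBound_cubic_eight_add_three_mul hV k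

omit [Finite σ] in
theorem doublePointBound_cubic_of_card_eq_five {S : Finset σ} (hV : S.card = 5) {k : ℕ}
    (h₇ : k ≠ 7) : DoublePointBound K S 3 k (35 - 5 * k) := by
  rcases Nat.lt_or_ge k 7 with hk | hk
  · obtain ⟨j, hj⟩ := Nat.exists_eq_add_of_le (Nat.le_of_lt_succ hk)
    have h₆ := doublePointBound_5_3_6 (K := K) hV
    rw [hj] at h₆
    exact (h₆.drop j).mono le_rfl (by rw [hV]; omega)
  · exact (doublePointBound_5_3_8 hV).mono (by omega) (Nat.zero_le _)

end Cubics

/-! ### Numerical inequalities -/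

section Numbers

theorem succ_mul_multichoose_succ (n d : ℕ) :
    (d + 1) * (n + 1).multichoose (d + 1) = (n + 1 + d) * (n + 1).multichoose d := by
  rw [Nat.multichoose_eq, Nat.multichoose_eq, show n + 1 + (d + 1) - 1 = n + d + 1 by omega,
    show n + 1 + d - 1 = n + d by omega, mul_comm, ← Nat.add_one_mul_choose_eq (n + d) d]
  ring

theorem twentyfour_mul_multichoose_four (V : ℕ) :
    24 * V.multichoose 4 = V * (V + 1) * (V + 2) * (V + 3) := by
  rcases V with _ | n
  · simp
  · have h₁ := succ_mul_multichoose_succ n 3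
    have h₂ := six_mul_multichoose_three (n + 1)
    norm_num at h₁
    nlinarith

theorem multichoose_le_multichoose_succ (n d : ℕ) :
    (n + 1).multichoose d ≤ (n + 1).multichoose (d + 1) := by
  rw [Nat.multichoose_succ_succ]
  omega

theorem sq_add_self_le_multichoose {n d : ℕ} (hn : 3 ≤ n) (hd : 4 ≤ d) :
    n * n + n ≤ n.multichoose d := by
  induction d, hd using Nat.le_induction with
  | base =>
    have := twentyfour_mul_multichoose_four n
    obtain ⟨m, rfl⟩ := Nat.exists_eq_add_of_le hn
    nlinarith
  | succ d _ ih =>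
    obtain ⟨m, rfl⟩ := Nat.exists_eq_add_of_le' (show 1 ≤ n by omega)
    exact ih.trans (multichoose_le_multichoose_succ m d)

theorem mul_multichoose_eq_of_three_degrees (n e : ℕ) :
    (e + 2) * ((n + 1) * (n + 1).multichoose (e + 1)) = (e + 2) * (n + 1).multichoose (e + 2) +
      (e + 2) * (n * (n + 1).multichoose e) + n * (n + 1).multichoose e * (n - 1) := by
  rcases n with _ | n
  · simp
  · have h₁ := succ_mul_multichoose_succ (n + 1) (e + 1)
    have h₂ := succ_mul_multichoose_succ (n + 1) e
    rw [Nat.add_sub_cancel]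
    zify at *
    linear_combination - h₁ + (n + 1) * h₂

theorem mul_le_mul_multichoose_succ {m e c : ℕ}
    (h : (e + 2) * c ≤ (m + 1) * (m + 2).multichoose e * m) :
    (e + 3) * c ≤ (m + 1) * (m + 2).multichoose (e + 1) * m := by
  have hr := succ_mul_multichoose_succ (m + 1) e
  refine Nat.le_of_mul_le_mul_left (c := (e + 1) * (e + 2)) ?_ (by positivity)
  generalize (m + 2).multichoose e = A at *
  generalize (m + 2).multichoose (e + 1) = B at *
  calc (e + 1) * (e + 2) * ((e + 3) * c) = (e + 1) * (e + 3) * ((e + 2) * c) := by ring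
    _ ≤ (e + 1) * (e + 3) * ((m + 1) * A * m) := Nat.mul_le_mul_left _ h
    _ ≤ (e + 2) * (m + 1 + 1 + e) * ((m + 1) * A * m) := Nat.mul_le_mul_right _ (by nlinarith)
    _ = (e + 2) * (m + 1) * m * ((m + 1 + 1 + e) * A) := by ring
    _ = (e + 1) * (e + 2) * ((m + 1) * B * m) := by rw [← hr]; ring

theorem five_mul_le_mul_multichoose_three (m : ℕ) :
    5 * ((m + 4) + (m + 4) * (m + 2) ^ 2) ≤ (m + 3) * (m + 4).multichoose 3 * (m + 2) := by
  refine Nat.le_of_mul_le_mul_left (c := 6) ?_ (by norm_num)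
  calc 6 * (5 * ((m + 4) + (m + 4) * (m + 2) ^ 2))
      = (m + 4) * (30 * (1 + (m + 2) ^ 2)) := by ring
    _ ≤ (m + 4) * ((m + 3) * (m + 2) * ((m + 5) * (m + 6))) :=
      Nat.mul_le_mul_left _ (by nlinarith [Nat.zero_le (m ^ 3), Nat.zero_le (m ^ 4)])
    _ = (m + 3) * (m + 2) * ((m + 4) * (m + 4 + 1) * (m + 4 + 2)) := by ring
    _ = 6 * ((m + 3) * (m + 4).multichoose 3 * (m + 2)) := by
      rw [← six_mul_multichoose_three]; ring

/-- The excess term in `mul_multichoose_eq_of_three_degrees` dominates the rounding errors in the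
Horace step. -/
theorem mul_rounding_le_excess {n e : ℕ} (h : (3 ≤ n ∧ 3 ≤ e) ∨ (n = 2 ∧ 5 ≤ e)) :
    (e + 2) * ((n + 1) + (n + 1) * (n - 1) ^ 2) ≤ n * (n + 1).multichoose e * (n - 1) := by
  rcases h with ⟨hn, he⟩ | ⟨rfl, he⟩
  · obtain ⟨m, rfl⟩ := Nat.exists_eq_add_of_le' hn
    induction e, he using Nat.le_induction with
    | base => exact five_mul_le_mul_multichoose_three m
    | succ e _ ih => exact mul_le_mul_multichoose_succ ih
  · induction e, he using Nat.le_induction with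
    | base => simp only [Nat.multichoose_eq]; decide
    | succ e _ ih => exact mul_le_mul_multichoose_succ ih

/-- The parameters of the Horace step: `u` and `ε` are the quotient and the remainder of
`(n + 1) k - M` on division by `n`, such that the conditions on the trace, and those on the first
residual system, are as many as expected. The hypothesis `H` makes `w` large enough for the second
residual system to vanish. -/
theorem exists_horace_parameters {n k N M B T : ℕ} (hn : 1 ≤ n) (hN : N = T + M)
    (h₁ : N < (n + 1) * k + (n + 1)) (h₂ : (n + 1) * k ≤ N + (n + 1)) (hT : n * n + n ≤ T)
    (H : N + n * B + (n + 1) + (n + 1) * (n - 1) ^ 2 ≤ (n + 1) * M) :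
    ∃ u ε w, u + ε + w = k ∧ ε < n ∧ ε < u ∧ B ≤ (n + 1) * w ∧ n * u + ε + M = (n + 1) * k := by
  set c := (n + 1) * k - M with hc
  have hdiv := Nat.div_add_mod c n
  have hlt := Nat.mod_lt c hn
  set u := c / n
  set ε := c % n
  have hu : n ≤ u := (Nat.le_div_iff_mul_le hn).2 (by omega)
  have hconditions : n * u + ε + M = (n + 1) * k := by omega
  obtain ⟨p, rfl⟩ := Nat.exists_eq_add_of_le' hn
  rw [Nat.add_sub_cancel] at H
  have hεp : ε ≤ p := by omega
  have hmul : (p + 1) * B + (p + 1) * ((p + 1 + 1) * (u + ε)) ≤ (p + 1) * ((p + 1 + 1) * k) := by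
    have : (p + 1 + 1) * p * ε ≤ (p + 1 + 1) * p * p := Nat.mul_le_mul_left _ hεp
    nlinarith
  have hle : B + (p + 1 + 1) * (u + ε) ≤ (p + 1 + 1) * k :=
    Nat.le_of_mul_le_mul_left (by rw [mul_add]; exact hmul) (Nat.succ_pos p)
  have hk : u + ε ≤ k := Nat.le_of_mul_le_mul_left (le_trans (Nat.le_add_left _ _) hle)
    (Nat.succ_pos (p + 1))
  obtain ⟨w, hw⟩ := Nat.exists_eq_add_of_le hk
  exact ⟨u, ε, w, hw.symm, hlt, by omega, by rw [hw, mul_add _ (u + ε) w] at hle; omega,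
    hconditions⟩

end Numbers

/-! ### The Alexander–Hirschowitz theorem -/

section AlexanderHirschowitz
variable {K : Type*} [Field K] {σ : Type*}

theorem eq_single_degree {α : σ →₀ ℕ} {i : σ} (h : ∀ j ≠ i, α j = 0) :
    α = Finsupp.single i α.degree := by
  have hα : α = Finsupp.single i (α i) := by
    ext j
    rcases eq_or_ne j i with rfl | hj
    · simp
    · rw [h j hj, Finsupp.single_eq_of_ne hj]
  rw [hα, Finsupp.degree_single, ← hα]

theorem eval_single_eq_coeff [DecidableEq σ] {S : Finset σ} {d : ℕ} {G : MvPolynomial σ K}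
    (hG : G ∈ restrictSupport K (formExponents S d)) (i : σ) :
    eval (Pi.single i 1) G = coeff (Finsupp.single i d) G := by
  rw [eval_eq, Finset.sum_eq_single (Finsupp.single i d)]
  · rw [Finset.prod_eq_one, mul_one]
    intro j hj
    rcases eq_or_ne j i with rfl | hji
    · simp
    · exact absurd (Finsupp.single_eq_of_ne hji) (Finsupp.mem_support_iff.1 hj)
  · intro β hβ hne
    have hd : β.degree = d := (mem_restrictSupport_iff_coeff.1 hG β (mem_support_iff.1 hβ)).2
    obtain ⟨j, hji, hj⟩ : ∃ j ≠ i, β j ≠ 0 := by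
      by_contra! hzero
      exact hne (hd ▸ eq_single_degree hzero)
    rw [Finset.prod_eq_zero (Finsupp.mem_support_iff.2 hj) (by simp [hji, hj]), mul_zero]
  · intro h
    rw [notMem_support_iff.1 h, zero_mul]

theorem coeff_eq_zero_of_eval_single_pderiv [CharZero K] [DecidableEq σ] {S : Finset σ} {d : ℕ}
    {G : MvPolynomial σ K} (hG : G ∈ restrictSupport K (formExponents S (d + 1))) {i j : σ}
    (h : eval (Pi.single i 1) (pderiv j G) = 0) :
    coeff (Finsupp.single i d + Finsupp.single j 1) G = 0 := by
  rw [eval_single_eq_coeff (pderiv_mem_restrictSupport hG j), coeff_pderiv] at h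
  exact (mul_eq_zero.1 h).resolve_right (Nat.cast_add_one_ne_zero _)

theorem exists_eq_single_add_single {α : σ →₀ ℕ} (hα : α.degree = 2) :
    ∃ i j, α = Finsupp.single i 1 + Finsupp.single j 1 := by
  have exists_eq_single_add : ∀ β : σ →₀ ℕ, β.degree ≠ 0 → ∃ i γ, β = Finsupp.single i 1 + γ := by
    intro β hβ
    obtain ⟨i, hi⟩ := Finsupp.ne_iff.1 fun h : β = 0 => hβ (by simp [h])
    exact ⟨i, exists_add_of_le (by simpa [Nat.one_le_iff_ne_zero] using hi)⟩
  obtain ⟨i, β, rfl⟩ := exists_eq_single_add α (by omega)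
  rw [map_add, Finsupp.degree_single] at hα
  obtain ⟨j, γ, rfl⟩ := exists_eq_single_add β (by omega)
  rw [map_add, Finsupp.degree_single] at hα
  obtain rfl : γ = 0 := (Finsupp.degree_eq_zero_iff γ).1 (by omega)
  exact ⟨i, j, by rw [add_zero]⟩

theorem doublePointBound_quadric [CharZero K] {S : Finset σ} {w : ℕ} (hw : S.card ≤ w) :
    DoublePointBound K S 2 w 0 := by
  classical
  refine (DimLE.doublePointBound (ι := S) (p := fun i => Pi.single i.1 1) (m := 0)
    (dimLE_zero_iff.2 ((Submodule.eq_bot_iff _).2 fun G hG => ?_))).mono (by simpa using hw) le_rfl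
  obtain ⟨hG₂, hsing⟩ := mem_singularForms.1 hG
  ext α
  by_contra hα
  obtain ⟨hS, hdeg⟩ := mem_restrictSupport_iff_coeff.1 hG₂ α hα
  obtain ⟨i, j, rfl⟩ := exists_eq_single_add_single hdeg
  have hi : i ∈ S := hS i (by simp)
  exact hα (coeff_eq_zero_of_eval_single_pderiv hG₂ (hsing ⟨i, hi⟩ j))

theorem doublePointBound_of_card_eq_one [CharZero K] {S : Finset σ} (hS : S.card = 1) (d : ℕ) :
    DoublePointBound K S (d + 1) 1 0 := by
  classical
  obtain ⟨i, rfl⟩ := Finset.card_eq_one.1 hS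
  refine ⟨fun _ => Pi.single i 1, dimLE_zero_iff.2 ((Submodule.eq_bot_iff _).2 fun G hG => ?_)⟩
  obtain ⟨hGd, hsing⟩ := mem_singularForms.1 hG
  ext α
  by_contra hα
  obtain ⟨hS, hdeg⟩ := mem_restrictSupport_iff_coeff.1 hGd α hα
  have hsingle : α = Finsupp.single i (d + 1) := hdeg ▸ eq_single_degree fun j hj =>
    by_contra fun h => hj (Finset.mem_singleton.1 (hS j h))
  rw [hsingle, Finsupp.single_add] at hα
  exact hα (coeff_eq_zero_of_eval_single_pderiv hGd (hsing 0 i))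

/-- The numbers `V` of variables, `d` of the degree and `k` of the points in the exceptional cases
of the Alexander–Hirschowitz theorem in degree at least three. -/
def IsExceptional (V d k : ℕ) : Prop :=
  (V = 3 ∧ d = 4 ∧ k = 5) ∨ (V = 4 ∧ d = 4 ∧ k = 9) ∨ (V = 5 ∧ d = 4 ∧ k = 14) ∨
    (V = 5 ∧ d = 3 ∧ k = 7)

theorem IsExceptional.le {V d k : ℕ} (h : IsExceptional V d k) : V.multichoose d ≤ V * k := by
  rcases h with ⟨rfl, rfl, rfl⟩ | ⟨rfl, rfl, rfl⟩ | ⟨rfl, rfl, rfl⟩ | ⟨rfl, rfl, rfl⟩ <;>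
    simp [Nat.multichoose_eq, Nat.choose]

theorem IsExceptional.bounds {V d k : ℕ} (h : IsExceptional V d k) :
    3 ≤ V ∧ V ≤ 5 ∧ 3 ≤ d ∧ d ≤ 4 := by
  unfold IsExceptional at h
  omega

variable (K σ) in
/-- Forms of degree `d` in `V` variables singular at `k` suitable points have the expected
dimension, unless the numbers are exceptional. The expected dimension is the truncated difference,
and only the upper bound is stated, the lower bound being clear. -/
def HasExpectedDimension (V d : ℕ) : Prop :=
  ∀ k, ¬ IsExceptional V d k → ∀ S : Finset σ, S.card = V →
    DoublePointBound K S d k (V.multichoose d - V * k)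

variable [CharZero K]

theorem hasExpectedDimension_one (d : ℕ) : HasExpectedDimension K σ 1 (d + 1) := fun k _ _ hS =>
  (doublePointBound_of_card_eq_one hS d).sub_mul_of_perfect hS (by simp) k

variable [Finite σ]

theorem hasExpectedDimension_three {V : ℕ} (hV : 1 ≤ V) : HasExpectedDimension K σ V 3 := by
  intro k hk S hS
  rcases eq_or_ne V 5 with rfl | h₅
  · rw [show Nat.multichoose 5 3 = 35 by simp [Nat.multichoose_eq, Nat.choose]]
    refine doublePointBound_cubic_of_card_eq_five hS ?_
    unfold IsExceptional at hk
    omega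
  · exact doublePointBound_cubic hS hV h₅ k

theorem HasExpectedDimension.horace {V e u ε w k m : ℕ} {S : Finset σ}
    (hT : HasExpectedDimension K σ V (e + 2)) (h₁ : HasExpectedDimension K σ (V + 1) (e + 1))
    (hS : S.card = V + 1) (h₂ : DoublePointBound K S e w 0) (hε : ε ≤ V)
    (hTe : ¬ IsExceptional V (e + 2) u) (h₁e : ¬ IsExceptional (V + 1) (e + 1) (w + ε))
    (hk : u + ε + w = k)
    (hm : (V.multichoose (e + 2) - V * u - ε) +
      ((V + 1).multichoose (e + 1) - (V + 1) * (w + ε) + ε - u) ≤ m) :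
    DoublePointBound K S (e + 2) k m := by
  classical
  obtain ⟨h, hh⟩ : S.Nonempty := by rw [← Finset.card_pos]; omega
  exact DoublePointBound.horace hh (by omega)
    (hT u hTe (S.erase h) (by rw [Finset.card_erase_of_mem hh]; omega)) (h₁ _ h₁e S hS) h₂ hk.le hm
    (by omega)

/-- The induction step in the range where the parameters can be chosen uniformly. The number `B` is
the number of conditions making the second residual system vanish. -/
theorem HasExpectedDimension.succ_of_le {n e B : ℕ} (hT : HasExpectedDimension K σ n (e + 2))
    (h₁ : HasExpectedDimension K σ (n + 1) (e + 1)) (hn : 1 ≤ n)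
    (h₂ : ∀ w, B ≤ (n + 1) * w → ∀ S : Finset σ, S.card = n + 1 → DoublePointBound K S e w 0)
    (hTe : ∀ u, ¬ IsExceptional n (e + 2) u) (hTn : n * n + n ≤ n.multichoose (e + 2))
    (H : (n + 1).multichoose (e + 2) + n * B + (n + 1) + (n + 1) * (n - 1) ^ 2 ≤
      (n + 1) * (n + 1).multichoose (e + 1)) : HasExpectedDimension K σ (n + 1) (e + 2) := by
  intro k _ S hS
  have hN : (n + 1).multichoose (e + 2) = n.multichoose (e + 2) + (n + 1).multichoose (e + 1) :=
    Nat.multichoose_succ_succ _ _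
  have critical : ∀ k, (n + 1).multichoose (e + 2) < (n + 1) * k + (n + 1) →
      (n + 1) * k ≤ (n + 1).multichoose (e + 2) + (n + 1) →
      DoublePointBound K S (e + 2) k ((n + 1).multichoose (e + 2) - (n + 1) * k) := by
    intro k hk hk'
    obtain ⟨u, ε, w, hw, hε, hεu, hB, hu⟩ := exists_horace_parameters hn hN hk hk' hTn H
    have hwε : (n + 1) * (w + ε) + u = (n + 1).multichoose (e + 1) + ε := by
      rw [← hw] at hu
      nlinarith
    refine hT.horace h₁ hS (h₂ w hB S hS) hε.le (hTe u) (fun h => ?_) hw ?_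
    · have := h.le
      omega
    · omega
  have hdiv := Nat.div_add_mod ((n + 1).multichoose (e + 2)) (n + 1)
  have hlt : (n + 1).multichoose (e + 2) % (n + 1) < n + 1 := Nat.mod_lt _ (Nat.succ_pos n)
  set q := (n + 1).multichoose (e + 2) / (n + 1)
  have hq := critical q (by omega) (by omega)
  have hq' := critical (q + 1) (by rw [mul_add]; omega) (by rw [mul_add]; omega)
  rw [show (n + 1).multichoose (e + 2) - (n + 1) * (q + 1) = 0 by rw [mul_add]; omega] at hq'
  exact hq.sub_mul hS (by omega) hq' k

/-- At most one point is specialised to the hyperplane, which is a point of the projective line. -/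
theorem hasExpectedDimension_two_add_two {e : ℕ} (he : 2 ≤ e)
    (h₁ : HasExpectedDimension K σ 2 (e + 1)) (h₂ : e ≠ 2 → HasExpectedDimension K σ 2 e) :
    HasExpectedDimension K σ 2 (e + 2) := by
  intro k _ S hS
  have hno : ∀ {d u V : ℕ}, V ≤ 2 → ¬ IsExceptional V d u := fun hV h => by
    have := h.bounds
    omega
  have hR : DoublePointBound K S e ((e + 2) / 2) 0 := by
    rcases eq_or_ne e 2 with rfl | h
    · exact doublePointBound_quadric (by omega)
    · refine (h₂ h _ (hno le_rfl) S hS).mono le_rfl ?_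
      rw [Nat.multichoose_two]
      omega
  have hT : HasExpectedDimension K σ 1 (e + 2) := hasExpectedDimension_one _
  rcases Nat.even_or_odd' e with ⟨a, rfl | rfl⟩
  · refine DoublePointBound.sub_mul (m₀ := 1) hS
      (hT.horace (u := 0) (ε := 0) h₁ hS hR (by omega) (hno (by omega)) (hno (by omega)) rfl ?_) ?_
      (hT.horace (u := 1) (ε := 0) h₁ hS hR (by omega) (hno (by omega)) (hno (by omega))
        (by omega) ?_) k
    all_goals simp only [Nat.multichoose_two, Nat.multichoose_one, Nat.reduceAdd]; omega
  · refine DoublePointBound.sub_mul_of_perfect hS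
      (hT.horace (u := 1) (ε := 0) h₁ hS hR (by omega) (hno (by omega)) (hno (by omega)) rfl ?_) ?_
      k
    all_goals simp only [Nat.multichoose_two, Nat.multichoose_one, Nat.reduceAdd]; omega

/-! ### Quartics -/

theorem hasExpectedDimension_four_of_le_six {V : ℕ} (hV : 1 ≤ V) (hV₆ : V ≤ 6) :
    HasExpectedDimension K σ V 4 := by
  intro k hk S hS
  obtain rfl | rfl | rfl | rfl | rfl | rfl :
      V = 1 ∨ V = 2 ∨ V = 3 ∨ V = 4 ∨ V = 5 ∨ V = 6 := by omega
  · exact hasExpectedDimension_one 3 k hk S hS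
  · exact hasExpectedDimension_two_add_two le_rfl (hasExpectedDimension_three (by omega))
      (absurd rfl) k hk S hS
  · exact (doublePointBound_3_4_4 hS).sub_mul_of_gap hS (by simp [Nat.multichoose_eq, Nat.choose])
      (doublePointBound_3_4_6 hS) (by unfold IsExceptional at hk; omega)
  · exact (doublePointBound_4_4_8 hS).sub_mul_of_gap hS (by simp [Nat.multichoose_eq, Nat.choose])
      (doublePointBound_4_4_10 hS) (by unfold IsExceptional at hk; omega)
  · exact (doublePointBound_5_4_13 hS).sub_mul_of_gap hS (by simp [Nat.multichoose_eq, Nat.choose])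
      (doublePointBound_5_4_15 hS) (by unfold IsExceptional at hk; omega)
  · exact (doublePointBound_6_4_21 hS).sub_mul_of_perfect hS
      (by simp [Nat.multichoose_eq, Nat.choose]) k

theorem HasExpectedDimension.horace_quartic {V u ε w m : ℕ} {S : Finset σ}
    (hT : HasExpectedDimension K σ V 4) (hS : S.card = V + 1) (hw : V + 1 ≤ w) (hε : ε ≤ V)
    (hV : 5 < V) (hm : (V.multichoose 4 - V * u - ε) +
      ((V + 1).multichoose 3 - (V + 1) * (w + ε) + ε - u) ≤ m) :
    DoublePointBound K S 4 (u + ε + w) m :=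
  hT.horace (hasExpectedDimension_three (by omega)) hS (doublePointBound_quadric (by omega)) hε
    (fun h => by have := h.bounds; omega) (fun h => by have := h.bounds; omega) rfl hm

theorem hasExpectedDimension_seven_four : HasExpectedDimension K σ 7 4 := by
  intro k _ S hS
  have hT : HasExpectedDimension K σ 6 4 := hasExpectedDimension_four_of_le_six (by omega) le_rfl
  refine (hT.horace_quartic (u := 21) (ε := 0) (w := 9) (m := 0) hS ?_ ?_ ?_ ?_).sub_mul_of_perfect
    hS ?_ k
  all_goals simp [Nat.multichoose_eq, Nat.choose]

theorem hasExpectedDimension_eight_four : HasExpectedDimension K σ 8 4 := by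
  intro k _ S hS
  have hT := hasExpectedDimension_seven_four (K := K) (σ := σ)
  refine (hT.horace_quartic (u := 30) (ε := 0) (w := 11) (m := 2) hS ?_ ?_ ?_ ?_).sub_mul hS ?_
    (hT.horace_quartic (u := 30) (ε := 0) (w := 12) hS ?_ ?_ ?_ ?_) k
  all_goals simp [Nat.multichoose_eq, Nat.choose]

theorem hasExpectedDimension_nine_four : HasExpectedDimension K σ 9 4 := by
  intro k _ S hS
  have hT := hasExpectedDimension_eight_four (K := K) (σ := σ)
  refine (hT.horace_quartic (u := 41) (ε := 2) (w := 12) (m := 0) hS ?_ ?_ ?_ ?_).sub_mul_of_perfect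
    hS ?_ k
  all_goals simp [Nat.multichoose_eq, Nat.choose]

theorem hasExpectedDimension_ten_four : HasExpectedDimension K σ 10 4 := by
  intro k _ S hS
  have hT := hasExpectedDimension_nine_four (K := K) (σ := σ)
  refine (hT.horace_quartic (u := 55) (ε := 0) (w := 16) (m := 5) hS ?_ ?_ ?_ ?_).sub_mul hS ?_
    (hT.horace_quartic (u := 55) (ε := 0) (w := 17) hS ?_ ?_ ?_ ?_) k
  all_goals simp [Nat.multichoose_eq, Nat.choose]

theorem hasExpectedDimension_four {V : ℕ} (hV : 1 ≤ V) : HasExpectedDimension K σ V 4 := by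
  rcases Nat.lt_or_ge V 10 with h | h
  · obtain h₆ | rfl | rfl | rfl : V ≤ 6 ∨ V = 7 ∨ V = 8 ∨ V = 9 := by omega
    exacts [hasExpectedDimension_four_of_le_six hV h₆, hasExpectedDimension_seven_four,
      hasExpectedDimension_eight_four, hasExpectedDimension_nine_four]
  induction V, h using Nat.le_induction with
  | base => exact hasExpectedDimension_ten_four
  | succ n hn ih =>
    refine (ih (by omega)).succ_of_le (B := (n + 1) ^ 2) (hasExpectedDimension_three (by omega))
      (by omega) (fun w hw S hS => doublePointBound_quadric ?_)
      (fun u h => by have := h.bounds; omega) (sq_add_self_le_multichoose (by omega) le_rfl) ?_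
    · rw [hS]
      nlinarith
    · have h₄ := twentyfour_mul_multichoose_four (n + 1)
      have h₃ := six_mul_multichoose_three (n + 1)
      obtain ⟨m, rfl⟩ := Nat.exists_eq_add_of_le hn
      rw [show 10 + m - 1 = 9 + m by omega]
      ring_nf at h₃ h₄ ⊢
      nlinarith

/-! ### Degree at least five -/

theorem not_isExceptional_of_five_le {V d k : ℕ} (hd : 5 ≤ d) : ¬ IsExceptional V d k := fun h => by
  have := h.bounds
  omega

theorem HasExpectedDimension.succ_of_lower {n e B : ℕ} (he : 3 ≤ e) (hn : 1 ≤ n)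
    (hT : HasExpectedDimension K σ n (e + 2)) (h₁ : HasExpectedDimension K σ (n + 1) (e + 1))
    (h₂ : HasExpectedDimension K σ (n + 1) e)
    (hB : ∀ w, B ≤ (n + 1) * w → ¬ IsExceptional (n + 1) e w) (hB' : (n + 1).multichoose e ≤ B)
    (hTn : n * n + n ≤ n.multichoose (e + 2))
    (H : (n + 1).multichoose (e + 2) + n * B + (n + 1) + (n + 1) * (n - 1) ^ 2 ≤
      (n + 1) * (n + 1).multichoose (e + 1)) : HasExpectedDimension K σ (n + 1) (e + 2) :=
  hT.succ_of_le (B := B) h₁ hn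
    (fun w hw S hS => (h₂ w (hB w hw) S hS).mono le_rfl (by omega))
    (fun _ => not_isExceptional_of_five_le (by omega)) hTn H

theorem HasExpectedDimension.succ_uniform {n e : ℕ} (h : (3 ≤ n ∧ 3 ≤ e) ∨ (n = 2 ∧ 5 ≤ e))
    (hT : HasExpectedDimension K σ n (e + 2)) (h₁ : HasExpectedDimension K σ (n + 1) (e + 1))
    (h₂ : HasExpectedDimension K σ (n + 1) e) (hno : ∀ w, ¬ IsExceptional (n + 1) e w) :
    HasExpectedDimension K σ (n + 1) (e + 2) := by
  refine hT.succ_of_lower (by omega) (by omega) h₁ h₂ (fun w _ => hno w) le_rfl ?_ ?_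
  · rcases h with h | ⟨rfl, h⟩
    · exact sq_add_self_le_multichoose h.1 (by omega)
    · rw [Nat.multichoose_two]
      omega
  · have hid := mul_multichoose_eq_of_three_degrees n e
    have hexcess := mul_rounding_le_excess h
    refine Nat.le_of_mul_le_mul_left (c := e + 2) ?_ (by omega)
    linarith

theorem hasExpectedDimension_three_five (hT : HasExpectedDimension K σ 2 5)
    (h₁ : HasExpectedDimension K σ 3 4) (h₂ : HasExpectedDimension K σ 3 3) :
    HasExpectedDimension K σ 3 5 := by
  intro k _ S hS
  have hR := (h₂ 4 (by unfold IsExceptional; omega) S hS).mono le_rfl (m' := 0)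
    (by simp [Nat.multichoose_eq, Nat.choose])
  refine (hT.horace (u := 3) (ε := 0) (w := 4) (m := 0) h₁ hS hR (by omega)
    (not_isExceptional_of_five_le le_rfl) (by unfold IsExceptional; omega) rfl
    ?_).sub_mul_of_perfect hS ?_ k
  all_goals simp [Nat.multichoose_eq, Nat.choose]

theorem hasExpectedDimension_three_six (hT : HasExpectedDimension K σ 2 6)
    (h₁ : HasExpectedDimension K σ 3 5) (h₂ : HasExpectedDimension K σ 3 4) :
    HasExpectedDimension K σ 3 6 := by
  intro k _ S hS
  have hR := (h₂ 6 (by unfold IsExceptional; omega) S hS).mono le_rfl (m' := 0)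
    (by simp [Nat.multichoose_eq, Nat.choose])
  refine (hT.horace (u := 3) (ε := 0) (w := 6) (m := 1) h₁ hS hR (by omega)
    (not_isExceptional_of_five_le (by omega)) (not_isExceptional_of_five_le le_rfl) rfl
    ?_).sub_mul hS ?_ (hT.horace (u := 4) (ε := 0) (w := 6) h₁ hS hR (by omega)
    (not_isExceptional_of_five_le (by omega)) (not_isExceptional_of_five_le le_rfl) rfl ?_) k
  all_goals simp [Nat.multichoose_eq, Nat.choose]

theorem HasExpectedDimension.succ {n e : ℕ} (he : 3 ≤ e) (hn : 1 ≤ n)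
    (hT : HasExpectedDimension K σ n (e + 2)) (h₁ : HasExpectedDimension K σ (n + 1) (e + 1))
    (h₂ : HasExpectedDimension K σ (n + 1) e) : HasExpectedDimension K σ (n + 1) (e + 2) := by
  obtain rfl | ⟨rfl, rfl⟩ | ⟨rfl, rfl⟩ | hrange :
      n = 1 ∨ (n = 2 ∧ e = 3) ∨ (n = 2 ∧ e = 4) ∨ ((3 ≤ n ∧ 3 ≤ e) ∨ (n = 2 ∧ 5 ≤ e)) := by omega
  · exact hasExpectedDimension_two_add_two (by omega) h₁ fun _ => h₂
  · exact hasExpectedDimension_three_five hT h₁ h₂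
  · exact hasExpectedDimension_three_six hT h₁ h₂
  by_cases hex : ∀ w, ¬ IsExceptional (n + 1) e w
  · exact hT.succ_uniform hrange h₁ h₂ hex
  push Not at hex
  obtain ⟨w, hw⟩ := hex
  have avoid : ∀ B, (∀ w, B ≤ (n + 1) * w → ¬ IsExceptional (n + 1) e w) →
      (n + 1).multichoose e ≤ B → n * n + n ≤ n.multichoose (e + 2) → _ :=
    fun B => hT.succ_of_lower (B := B) he hn h₁ h₂
  -- `B` is enlarged so that the exceptional number of points is avoided.
  obtain ⟨rfl, rfl⟩ | ⟨rfl, rfl⟩ | ⟨rfl, rfl⟩ :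
      (n = 3 ∧ e = 4) ∨ (n = 4 ∧ e = 4) ∨ (n = 4 ∧ e = 3) := by
    unfold IsExceptional at hw
    omega
  · refine avoid 40 (fun w hw => by unfold IsExceptional; omega) ?_ ?_ ?_ <;>
      simp [Nat.multichoose_eq, Nat.choose]
  · refine avoid 75 (fun w hw => by unfold IsExceptional; omega) ?_ ?_ ?_ <;>
      simp [Nat.multichoose_eq, Nat.choose]
  · refine avoid 40 (fun w hw => by unfold IsExceptional; omega) ?_ ?_ ?_ <;>
      simp [Nat.multichoose_eq, Nat.choose]

variable (K σ) in
theorem hasExpectedDimension (d : ℕ) (hd : 3 ≤ d) : ∀ V, 1 ≤ V → HasExpectedDimension K σ V d := by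
  induction d using Nat.strong_induction_on with
  | _ d ih =>
  intro V hV
  obtain rfl | rfl | ⟨e, he, rfl⟩ : d = 3 ∨ d = 4 ∨ ∃ e, 3 ≤ e ∧ d = e + 2 := by
    rcases Nat.lt_or_ge d 5 with h | h
    exacts [by omega, .inr (.inr ⟨d - 2, by omega, by omega⟩)]
  · exact hasExpectedDimension_three hV
  · exact hasExpectedDimension_four hV
  induction V, hV using Nat.le_induction with
  | base => exact hasExpectedDimension_one (e + 1)
  | succ n hn ihV =>
    exact ihV.succ he hn (ih (e + 1) (by omega) (by omega) _ (by omega))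
      (ih e (by omega) he _ (by omega))

end AlexanderHirschowitz

/-! ### From double points to Waring rank -/

section Apolarity

variable {K σ : Type*} [Field K]

theorem DimLE.exists_points_separating [Infinite K] {D : Submodule K (MvPolynomial σ K)} {m : ℕ}
    (h : DimLE D m) : ∃ q : Fin m → σ → K, ∀ G ∈ D, (∀ j, eval (q j) G = 0) → G = 0 := by
  obtain ⟨_, hle⟩ := dimLE_iff_finrank_le.1 h
  obtain ⟨q, hq⟩ := exists_fin_separating
    (fun x : σ → K => (aeval x : MvPolynomial σ K →ₐ[K] K).toLinearMap.comp D.subtype)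
    fun G hG => Subtype.ext (MvPolynomial.funext fun x => by simpa [aeval_eq_eval] using hG x)
  refine ⟨fun j => if hj : j < Module.finrank K D then q ⟨j, hj⟩ else 0, fun G hG hz => ?_⟩
  refine congrArg Subtype.val (hq ⟨G, hG⟩ fun k => ?_)
  simpa [aeval_eq_eval] using hz (Fin.castLE hle k)

theorem coeff_sum_C_mul_X_pow [Fintype σ] (d : ℕ) (l : σ → K) {α : σ →₀ ℕ} (hα : α.degree = d) :
    coeff α ((∑ j, C (l j) * X j) ^ d) = (α.multinomial : K) * ∏ j, l j ^ α j := by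
  simp only [← smul_eq_C_mul]
  rw [coeff_linearCombination_X_pow_of_fintype, if_pos (by simpa [Finsupp.degree_eq_sum,
    Finsupp.sum_fintype] using hα), Finsupp.prod_fintype _ _ (by simp)]

variable [Fintype σ]

noncomputable instance (d : ℕ) : Fintype (formExponents (Finset.univ : Finset σ) d) :=
  (finite_formExponents _ d).fintype

variable (K σ) in
/-- The space of coefficient vectors of forms of degree `d` in all variables. It is a normed space
whenever `K` is a normed field, unlike the space of polynomials. -/
abbrev CoeffSpace (d : ℕ) : Type _ :=
  formExponents (Finset.univ : Finset σ) d → K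

/-- The Veronese map, without multinomial coefficients: the values at `x` of all monomials of degree
`d`. -/
def veronese (d : ℕ) (x : σ → K) : CoeffSpace K σ d :=
  fun α => ∏ j, x j ^ α.1 j

/-- The coefficients of the form of degree `d` in `f`, divided by the multinomial coefficients, so
that the power of a linear form is mapped to the point of the Veronese variety. -/
noncomputable def dividedCoeff (d : ℕ) : MvPolynomial σ K →ₗ[K] CoeffSpace K σ d :=
  LinearMap.pi fun α => (α.1.multinomial : K)⁻¹ • lcoeff K α.1

theorem dividedCoeff_C_mul_linear_pow [CharZero K] (d : ℕ) (c : K) (l : σ → K) :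
    dividedCoeff d (C c * (∑ j, C (l j) * X j) ^ d) = c • veronese d l := by
  rw [← smul_eq_C_mul, map_smul]
  congr 1
  ext α
  have hα : (α.1.multinomial : K) ≠ 0 := Nat.cast_ne_zero.2 (Nat.multinomial_pos _ _).ne'
  simp [dividedCoeff, veronese, coeff_sum_C_mul_X_pow d l α.2.2, hα]

theorem eq_of_dividedCoeff_eq [CharZero K] {d : ℕ} {f g : MvPolynomial σ K}
    (hf : f.IsHomogeneous d) (hg : g.IsHomogeneous d) (h : dividedCoeff d f = dividedCoeff d g) :
    f = g := by
  ext α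
  by_cases hα : α.degree = d
  · have hne : (α.multinomial : K) ≠ 0 := Nat.cast_ne_zero.2 (Nat.multinomial_pos _ _).ne'
    have hα' := congrFun h ⟨α, fun i _ => Finset.mem_univ i, hα⟩
    exact mul_left_cancel₀ (inv_ne_zero hne) hα'
  · rw [hf.coeff_eq_zero hα, hg.coeff_eq_zero hα]

theorem isHomogeneous_linear_pow (d : ℕ) (l : σ → K) :
    ((∑ j, C (l j) * X j : MvPolynomial σ K) ^ d).IsHomogeneous d := by
  have hlin : (∑ j, C (l j) * X j : MvPolynomial σ K).IsHomogeneous 1 :=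
    IsHomogeneous.sum _ _ _ fun j _ => isHomogeneous_C_mul_X (l j) j
  simpa using hlin.pow d

/-- The form apolar to a functional `φ` on coefficient vectors: its value at `x` is that of `φ` at
`veronese d x`. -/
noncomputable def dualForm {d : ℕ} (φ : CoeffSpace K σ d →ₗ[K] K) : MvPolynomial σ K :=
  ∑ α, monomial α.1 (φ (Pi.basisFun K _ α))

theorem coeff_dualForm {d : ℕ} (φ : CoeffSpace K σ d →ₗ[K] K)
    (α : formExponents (Finset.univ : Finset σ) d) :
    coeff α.1 (dualForm φ) = φ (Pi.basisFun K _ α) := by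
  classical
  simp [dualForm, coeff_sum, coeff_monomial, Subtype.coe_inj]

theorem dualForm_mem_restrictSupport {d : ℕ} (φ : CoeffSpace K σ d →ₗ[K] K) :
    dualForm φ ∈ restrictSupport K (formExponents Finset.univ d) :=
  Submodule.sum_mem _ fun α _ => (monomial_mem_restrictSupport K).2 (.inl α.2)

theorem eval_dualForm {d : ℕ} (φ : CoeffSpace K σ d →ₗ[K] K) (x : σ → K) :
    eval x (dualForm φ) = φ (veronese d x) := by
  conv_rhs => rw [← (Pi.basisFun K _).sum_repr (veronese d x), map_sum]
  simp [dualForm, veronese, eval_monomial, Finsupp.prod_fintype, mul_comm]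

theorem eq_zero_of_dualForm_eq_zero {d : ℕ} {φ : CoeffSpace K σ d →ₗ[K] K} (h : dualForm φ = 0) :
    φ = 0 :=
  (Pi.basisFun K _).ext fun α => by rw [← coeff_dualForm, h, coeff_zero, LinearMap.zero_apply]

/-- The difference map: a sum of `k` powers minus a sum of `k` powers, plus a combination of the
powers at the fixed points `q`. -/
def powerMap (d : ℕ) {k m : ℕ} (q : Fin m → σ → K)
    (x : (Fin k → σ → K) × (Fin k → σ → K) × (Fin m → K)) : CoeffSpace K σ d :=
  ∑ i, veronese d (x.1 i) - ∑ i, veronese d (x.2.1 i) + ∑ j, x.2.2 j • veronese d (q j)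

theorem apply_powerMap {d k m : ℕ} (φ : CoeffSpace K σ d →ₗ[K] K) (q : Fin m → σ → K)
    (x : (Fin k → σ → K) × (Fin k → σ → K) × (Fin m → K)) :
    φ (powerMap d q x) = ∑ i, eval (x.1 i) (dualForm φ) - ∑ i, eval (x.2.1 i) (dualForm φ) +
      ∑ j, x.2.2 j * eval (q j) (dualForm φ) := by
  simp [powerMap, eval_dualForm]

end Apolarity

section InverseFunction

variable {𝕜 σ : Type*} [NontriviallyNormedField 𝕜] [Fintype σ]

theorem hasDerivAt_eval_add_smul (G : MvPolynomial σ 𝕜) (x v : σ → 𝕜) :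
    HasDerivAt (fun t : 𝕜 => eval (x + t • v) G) (∑ i, v i * eval x (pderiv i G)) 0 := by
  have h := (restrictLine x v G).hasDerivAt 0
  rw [← Polynomial.coeff_zero_eq_eval_zero, Polynomial.coeff_derivative,
    coeff_one_restrictLine, Nat.cast_zero, zero_add, mul_one] at h
  simpa only [eval_restrictLine] using h

open scoped ContDiff in
theorem hasStrictFDerivAt_powerMap (d : ℕ) {k m : ℕ} (q : Fin m → σ → 𝕜)
    (x : (Fin k → σ → 𝕜) × (Fin k → σ → 𝕜) × (Fin m → 𝕜)) :
    HasStrictFDerivAt (powerMap d q) (fderiv 𝕜 (powerMap d q) x) x := by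
  have hsmooth : ContDiff 𝕜 ω (powerMap d (k := k) q) := by
    rw [contDiff_pi]
    intro α
    simp only [powerMap, veronese, Pi.add_apply, Pi.sub_apply, Finset.sum_apply, Pi.smul_apply]
    fun_prop
  exact hsmooth.contDiffAt.analyticAt.hasStrictFDerivAt

variable [CompleteSpace 𝕜]

theorem apply_fderiv_powerMap {d k m : ℕ} (φ : CoeffSpace 𝕜 σ d →ₗ[𝕜] 𝕜) (q : Fin m → σ → 𝕜)
    (p p' : Fin k → σ → 𝕜) (a : Fin k → σ → 𝕜) (b c : Fin m → 𝕜) :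
    φ (fderiv 𝕜 (powerMap d q) (p, p', b) (a, 0, c)) =
      ∑ i, ∑ j, a i j * eval (p i) (pderiv j (dualForm φ)) +
        ∑ j, c j * eval (q j) (dualForm φ) := by
  have hline : HasDerivAt (fun t : 𝕜 => (p, p', b) + t • (a, (0 : Fin k → σ → 𝕜), c))
      (a, 0, c) 0 := by
    simpa using
      ((hasDerivAt_id (0 : 𝕜)).smul_const (a, (0 : Fin k → σ → 𝕜), c)).const_add (p, p', b)
  have hchain := φ.toContinuousLinearMap.hasFDerivAt.comp_hasDerivAt (0 : 𝕜)
    (HasFDerivAt.comp_hasDerivAt (0 : 𝕜)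
      (by simpa using (hasStrictFDerivAt_powerMap d q (p, p', b)).hasFDerivAt) hline)
  refine hchain.unique ?_
  have hcoeff (j : Fin m) : HasDerivAt (fun t => (b j + t * c j) * eval (q j) (dualForm φ))
      (c j * eval (q j) (dualForm φ)) 0 := by
    simpa using (((hasDerivAt_id (0 : 𝕜)).mul_const (c j)).const_add (b j)).mul_const
      (eval (q j) (dualForm φ))
  have hpoints := HasDerivAt.fun_sum (u := Finset.univ) fun i _ =>
    hasDerivAt_eval_add_smul (dualForm φ) (p i) (a i)
  refine ((hpoints.sub_const (∑ i, eval (p' i) (dualForm φ))).add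
    (HasDerivAt.fun_sum fun j _ => hcoeff j)).congr_of_eventuallyEq (.of_forall fun t => ?_)
  simp [apply_powerMap]

theorem range_fderiv_powerMap_eq_top {d k m : ℕ} {p : Fin k → σ → 𝕜} {q : Fin m → σ → 𝕜}
    (hq : ∀ G ∈ singularForms (formExponents Finset.univ d) p,
      (∀ j, eval (q j) G = 0) → G = 0) (p' : Fin k → σ → 𝕜) (b : Fin m → 𝕜) :
    (fderiv 𝕜 (powerMap d q) (p, p', b)).range = ⊤ := by
  classical
  by_contra hne
  obtain ⟨φ, hφ, hker⟩ := Submodule.exists_le_ker_of_lt_top _ (lt_top_iff_ne_top.2 hne)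
  have hconditions (a : Fin k → σ → 𝕜) (c : Fin m → 𝕜) :
      ∑ i, ∑ j, a i j * eval (p i) (pderiv j (dualForm φ)) +
        ∑ j, c j * eval (q j) (dualForm φ) = 0 := by
    rw [← apply_fderiv_powerMap φ q p p' a b c]
    exact hker ⟨_, rfl⟩
  refine hφ (eq_zero_of_dualForm_eq_zero (hq _ (mem_singularForms.2
    ⟨dualForm_mem_restrictSupport φ, fun i j => ?_⟩) fun j => ?_))
  · simpa [Pi.single_apply, ite_apply] using hconditions (Pi.single i (Pi.single j 1)) 0
  · simpa [Pi.single_apply] using hconditions 0 (Pi.single j 1)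

/-- By the inverse function theorem the image of `powerMap` is a neighbourhood of zero. -/
theorem exists_powerMap_eq_smul {d k m : ℕ} {p : Fin k → σ → 𝕜} {q : Fin m → σ → 𝕜}
    (hq : ∀ G ∈ singularForms (formExponents Finset.univ d) p,
      (∀ j, eval (q j) G = 0) → G = 0) (v : CoeffSpace 𝕜 σ d) :
    ∃ t : 𝕜, t ≠ 0 ∧ ∃ x, powerMap d (k := k) q x = t • v := by
  have hmap := (hasStrictFDerivAt_powerMap d q (p, p, 0)).map_nhds_eq_of_surj
    (range_fderiv_powerMap_eq_top hq p 0)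
  rw [show powerMap d q (p, p, 0) = 0 by simp [powerMap]] at hmap
  have hrange : Set.range (powerMap d (k := k) q) ∈ nhds 0 := hmap ▸ Filter.range_mem_map
  have htendsto : Filter.Tendsto (fun t : 𝕜 => t • v) (nhds 0) (nhds 0) := by
    simpa using (show Continuous fun t : 𝕜 => t • v by fun_prop).tendsto 0
  have hsmall : ∀ᶠ t : 𝕜 in nhdsWithin 0 {0}ᶜ, t • v ∈ Set.range (powerMap d (k := k) q) :=
    (htendsto.eventually hrange).filter_mono nhdsWithin_le_nhds
  obtain ⟨t, ⟨x, hx⟩, ht⟩ := (hsmall.and self_mem_nhdsWithin).exists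
  exact ⟨t, ht, x, hx⟩

end InverseFunction

section WaringRank

theorem waringRank_le_card {F ι : Type*} [CommSemiring F] [Fintype ι] {n d : ℕ}
    {f : MvPolynomial (Fin n) F} (c : ι → F) (l : ι → Fin n → F)
    (h : f = ∑ i, C (c i) * (∑ j, C (l i j) * X j) ^ d) : waringRank F d f ≤ Fintype.card ι := by
  let e := (Fintype.equivFin ι).symm
  refine sInf_le ⟨Fintype.card ι, rfl, c ∘ e, l ∘ e, h.trans ?_⟩
  exact (e.sum_comp fun i => C (c i) * (∑ j, C (l i j) * X j) ^ d).symm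

variable {𝕜 : Type*} [NontriviallyNormedField 𝕜] [CompleteSpace 𝕜] [CharZero 𝕜]

theorem DoublePointBound.waringRank_le {n d k m : ℕ}
    (h : DoublePointBound 𝕜 (Finset.univ : Finset (Fin n)) d k m) {f : MvPolynomial (Fin n) 𝕜}
    (hf : f.IsHomogeneous d) : waringRank 𝕜 d f ≤ (2 * k + m : ℕ) := by
  obtain ⟨p, hp⟩ := h
  obtain ⟨q, hq⟩ := hp.exists_points_separating
  obtain ⟨t, ht, x, hx⟩ := exists_powerMap_eq_smul hq (dividedCoeff d f)
  refine (waringRank_le_card (ι := (Fin k ⊕ Fin k) ⊕ Fin m)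
    (Sum.elim (Sum.elim (fun _ => t⁻¹) fun _ => -t⁻¹) fun j => t⁻¹ * x.2.2 j)
    (Sum.elim (Sum.elim x.1 x.2.1) q) ?_).trans_eq (by simp [two_mul])
  refine eq_of_dividedCoeff_eq hf (IsHomogeneous.sum _ _ _ fun i _ => ?_) ?_
  · exact (isHomogeneous_linear_pow d _).C_mul _
  · rw [← inv_smul_smul₀ ht (dividedCoeff d f), ← hx]
    simp only [map_sum, dividedCoeff_C_mul_linear_pow]
    simp [powerMap, Finset.smul_sum, smul_smul, sub_eq_add_neg]

theorem multichoose_le_mul_ceil_choose_div {n : ℕ} (hn : 1 ≤ n) (d : ℕ) :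
    n.multichoose d ≤ n * (((n + d - 1).choose (n - 1) + n - 1) / n) := by
  have hN : n.multichoose d = (n + d - 1).choose (n - 1) := by
    rw [Nat.multichoose_eq]
    exact Nat.choose_symm_of_eq_add (by omega)
  have hdiv := Nat.div_add_mod ((n + d - 1).choose (n - 1) + n - 1) n
  have hmod := Nat.mod_lt ((n + d - 1).choose (n - 1) + n - 1) hn
  omega

theorem stmt_9_general {n d : ℕ} (hn : 1 ≤ n) (hd : 3 ≤ d) {f : MvPolynomial (Fin n) 𝕜}
    (hf : f.IsHomogeneous d) : waringRank 𝕜 d f ≤ (waringBound n d : ℕ∞) := by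
  have hS : (Finset.univ : Finset (Fin n)).card = n := Finset.card_fin n
  unfold waringBound
  split_ifs with h₁ h₂ h₃ h₄
  · obtain ⟨rfl, rfl⟩ := Prod.mk.inj h₁
    exact (doublePointBound_3_4_5 hS).waringRank_le hf
  · obtain ⟨rfl, rfl⟩ := Prod.mk.inj h₂
    exact (doublePointBound_4_4_9 hS).waringRank_le hf
  · obtain ⟨rfl, rfl⟩ := Prod.mk.inj h₃
    exact (doublePointBound_5_4_14 hS).waringRank_le hf
  · obtain ⟨rfl, rfl⟩ := Prod.mk.inj h₄
    exact (doublePointBound_5_3_7 hS).waringRank_le hf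
  · simp only [Prod.mk.injEq] at h₁ h₂ h₃ h₄
    have hvanish := hasExpectedDimension 𝕜 (Fin n) d hd n hn
      (((n + d - 1).choose (n - 1) + n - 1) / n) (by unfold IsExceptional; omega) _ hS
    rw [Nat.sub_eq_zero_of_le (multichoose_le_mul_ceil_choose_div hn d)] at hvanish
    exact hvanish.waringRank_le hf

end WaringRank

/-- Corollary of the paper. The maximum real (and complex) Waring rank
of forms of degree `d ≥ 3` in `n ≥ 2` variables is at most `2⌈C(n+d-1, n-1)/n⌉`, except
for the bounds `11, 19, 29, 15` in the cases `(n,d) = (3,4), (4,4), (5,4), (5,3)`. -/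
theorem stmt_9 (n d : ℕ) (hn : 2 ≤ n) (hd : 3 ≤ d) :
    (∀ f : MvPolynomial (Fin n) ℝ, f ≠ 0 → f.IsHomogeneous d →
      waringRank ℝ d f ≤ (waringBound n d : ℕ∞)) ∧
    (∀ f : MvPolynomial (Fin n) ℂ, f ≠ 0 → f.IsHomogeneous d →
      waringRank ℂ d f ≤ (waringBound n d : ℕ∞)) := by
  exact ⟨fun _ _ hf => stmt_9_general (by omega) hd hf,
    fun _ _ hf => stmt_9_general (by omega) hd hf⟩
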